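/- arXiv:math/9811155 — 13 statements merged into one kernel-verified Lean document; each statement's English description precedes it below -/
import Mathlib

section
/- Let (W,S) be a finite Coxeter system with length function ℓ, let 𝒞 be a category, and for each w ∈ W let T(w) : 𝒞 ⥤ 𝒞 be a functor with T(1) = 𝟭_𝒞. Suppose given: (a) for each pair w, w' ∈ W with ℓ(ww') = ℓ(w) + ℓ(w'), a natural isomorphism c_{w,w'} : T(w) ∘ T(w') ≅ T(ww'), with c_{1,w} and c_{w,1} the identities, such that for every triple w, w', w'' ∈ W with ℓ(ww'w'') = ℓ(w) + ℓ(w') + ℓ(w'') one has c_{w,w'w''} ∘ (T(w) whiskered with c_{w',w''}) = c_{ww',w''} ∘ (c_{w,w'} whiskered with T(w'')); (b) for each s ∈ S a natural transformation c_s : T(s) ∘ T(s) ⟶ 𝟭_𝒞 satisfying: (1) for every object X of 𝒞, T(s)(c_{s,X}) = c_{s,T(s)X} as morphisms T(s)³X → T(s)X; and (2) for every w ∈ W and s, s' ∈ S with sw = ws' and ℓ(sw) = ℓ(w) + 1, the composite T(s)T(w)T(s') → T(w)T(s')T(s') → T(w) (first arrow the isomorphism (c_{w,s'})⁻¹ ∘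 c_{s,w} whiskered on the right with T(s'), second arrow T(w) whiskered with c_{s'}) equals the composite T(s)T(w)T(s') → T(s)T(s)T(w) → T(w) (first arrow T(s) whiskered with (c_{s,w})⁻¹ ∘ c_{w,s'}, second arrow c_s whiskered on the right with T(w)). Then there exists a family of natural transformations C_{w,w'} : T(w) ∘ T(w') ⟶ T(ww'), defined for all w, w' ∈ W, such that C_{w,w'} = c_{w,w'} whenever ℓ(ww') = ℓ(w) + ℓ(w'), C_{s,s} = c_s for all s ∈ S, and the associativity C_{w,w'w''} ∘ (T(w) whiskered with C_{w',w''}) = C_{ww',w''} ∘ (C_{w,w'} whiskered with T(w'')) holds for all w, w', w'' ∈ W; that is, the data (T(w), C_{w,w'}) form a quasi-action of W on 𝒞. -/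
open CategoryTheory

namespace QA
variable {B : Type*} {W : Type*} [Group W] {M : CoxeterMatrix B} (cs : CoxeterSystem M W)

open Classical in
noncomputable def refl (i : B) : Function.End (W × ZMod 2) :=
  fun p => (cs.simple i * p.1 * cs.simple i, p.2 + if p.1 = cs.simple i then 1 else 0)

lemma conj_pow (i j : B) (k : ℕ) :
    ((cs.simple i * cs.simple j) ^ k)⁻¹ * cs.simple j
      = cs.simple j * (cs.simple i * cs.simple j) ^ k := by
  induction k with
  | zero => simp
  | succ k ih =>
    rw [pow_succ, mul_inv_rev, mul_assoc, ih, ← mul_assoc, mul_inv_rev, cs.inv_simple, cs.inv_simple,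
      ← pow_succ, pow_succ']
    simp [mul_assoc]

open Classical in
lemma refl_pow (i j : B) (k : ℕ) (t : W) (e : ZMod 2) :
    ((refl cs i * refl cs j) ^ k) (t, e) =
      ((cs.simple i * cs.simple j) ^ k * t * ((cs.simple i * cs.simple j) ^ k)⁻¹,
        e + ∑ n ∈ Finset.range (2 * k),
          if t = cs.simple j * (cs.simple i * cs.simple j) ^ n then 1 else 0) := by
  induction k with
  | zero => simp; rfl
  | succ k ih =>
    have e1 : ((cs.simple i * cs.simple j) ^ k * t * ((cs.simple i * cs.simple j) ^ k)⁻¹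
        = cs.simple j) ↔ t = cs.simple j * (cs.simple i * cs.simple j) ^ (2 * k) := by
      rw [two_mul, pow_add, ← mul_assoc, ← conj_pow, mul_inv_eq_iff_eq_mul, mul_assoc,
        eq_inv_mul_iff_mul_eq]
    have e2 : (cs.simple j * ((cs.simple i * cs.simple j) ^ k * t *
        ((cs.simple i * cs.simple j) ^ k)⁻¹) * cs.simple j
        = cs.simple i) ↔ t = cs.simple j * (cs.simple i * cs.simple j) ^ (2 * k + 1) := by
      have : cs.simple j * (cs.simple i * cs.simple j) ^ (2 * k + 1) =
          ((cs.simple i * cs.simple j) ^ k)⁻¹ * (cs.simple j * cs.simple i * cs.simple j) *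
            (cs.simple i * cs.simple j) ^ k := by
        rw [mul_assoc (cs.simple j), ← mul_assoc _ (cs.simple j), conj_pow,
          show 2 * k + 1 = k + 1 + k by ring, pow_add, pow_succ]
        simp [mul_assoc]
      rw [this]
      generalize (cs.simple i * cs.simple j) ^ k = y
      constructor
      · intro h; rw [← h]; simp [mul_assoc]
      · intro h; rw [h]; simp [mul_assoc]
    rw [pow_succ']
    change refl cs i (refl cs j (((refl cs i * refl cs j) ^ k) (t, e))) = _
    rw [ih, show 2 * (k + 1) = 2 * k + 1 + 1 by ring, Finset.sum_range_succ, Finset.sum_range_succ]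
    simp only [refl, e1, e2]
    refine Prod.ext ?_ ?_
    · simp [pow_succ', mul_assoc]
    · simp [add_assoc]

lemma refl_liftable : M.IsLiftable (refl cs) := by
  classical
  intro i j
  funext p
  obtain ⟨t, e⟩ := p
  rw [refl_pow, two_mul, Finset.sum_range_add]
  simp [pow_add, CharTwo.add_self_eq_zero]
  rfl

open Classical in
lemma lift_word (ω : List B) (t : W) (e : ZMod 2) :
    cs.lift ⟨refl cs, refl_liftable cs⟩ (cs.wordProd ω) (t, e) =
      (cs.wordProd ω * t * (cs.wordProd ω)⁻¹, e + ((cs.rightInvSeq ω).count t : ℕ)) := by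
  induction ω with
  | nil => simp; rfl
  | cons i ω ih =>
    rw [cs.wordProd_cons, map_mul, cs.lift_apply_simple]
    change refl cs i _ = _
    rw [ih]
    simp only [refl, CoxeterSystem.rightInvSeq, List.count_cons]
    have : (cs.wordProd ω * t * (cs.wordProd ω)⁻¹ = cs.simple i) ↔
      (cs.wordProd ω)⁻¹ * cs.simple i * cs.wordProd ω = t := by
      constructor
      · intro h; rw [← h]; simp [mul_assoc]
      · intro h; rw [← h]; simp [mul_assoc]
    refine Prod.ext ?_ ?_
    · simp [mul_assoc]
    · simp [this, add_assoc]

/-- Exchange property: a right descent occurs in the inversion sequence of any word. -/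
lemma mem_ris (ω : List B) (j : B) (h : cs.length (cs.wordProd ω * cs.simple j) + 1 =
    cs.length (cs.wordProd ω)) : cs.simple j ∈ cs.rightInvSeq ω := by
  classical
  obtain ⟨τ, hτ, hv⟩ := cs.exists_isReduced (cs.wordProd ω * cs.simple j)
  have hw : cs.wordProd (τ.concat j) = cs.wordProd ω := by
    rw [cs.wordProd_concat, ← hv]; simp
  have hr : cs.IsReduced (τ.concat j) := by
    unfold CoxeterSystem.IsReduced at *
    rw [hw, ← h, hv, hτ]; simp
  have hnd := hr.nodup_rightInvSeq
  have h1 : (cs.rightInvSeq (τ.concat j)).count (cs.simple j) = 1 := by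
    apply List.count_eq_one_of_mem hnd
    rw [cs.rightInvSeq_concat]; simp
  have a := lift_word cs ω (cs.simple j) 0
  have b := lift_word cs (τ.concat j) (cs.simple j) 0
  rw [hw, a, h1] at b
  have := congrArg Prod.snd b
  by_contra hn
  rw [← List.count_eq_zero] at hn
  simp [hn] at this

lemma exchange (w : W) (i j : B)
    (h1 : cs.length (cs.simple i * w) = cs.length w + 1)
    (h2 : cs.length (w * cs.simple j) = cs.length w + 1)
    (h3 : cs.length (cs.simple i * w * cs.simple j) = cs.length w) :
    cs.simple i * w = w * cs.simple j := by
  obtain ⟨ω, hr, rfl⟩ := cs.exists_isReduced w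
  have := mem_ris cs (i :: ω) j (by rw [cs.wordProd_cons, h3, h1])
  simp only [CoxeterSystem.rightInvSeq, List.mem_cons] at this
  rcases this with h | h
  · rw [h]; simp [mul_assoc]
  · have := (cs.isRightInversion_of_mem_rightInvSeq hr h).2
    omega

structure QD {C : Type*} [Category C] (T : W → C ⥤ C) where
  u : T 1 ≅ 𝟭 C
  c : ∀ a b ab : W, a * b = ab → cs.length ab = cs.length a + cs.length b → (T b ⋙ T a ≅ T ab)
  c1l : ∀ (w : W) h h' X, (c 1 w w h h').hom.app X = u.hom.app ((T w).obj X)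
  c1r : ∀ (w : W) h h' X, (c w 1 w h h').hom.app X = (T w).map (u.hom.app X)
  assoc : ∀ (x y z xy yz xyz : W) h1 h1' h2 h2' h3 h3' h4 h4' X,
    (T x).map ((c y z yz h1 h1').hom.app X) ≫ (c x yz xyz h2 h2').hom.app X =
      (c x y xy h3 h3').hom.app ((T z).obj X) ≫ (c xy z xyz h4 h4').hom.app X
  d : ∀ i : B, (T (cs.simple i) ⋙ T (cs.simple i) ⟶ 𝟭 C)
  hd1 : ∀ (i : B) (X : C),
      (T (cs.simple i)).map ((d i).app X) = (d i).app ((T (cs.simple i)).obj X)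
  hd2 : ∀ (w v : W) (i j : B) h1 h1' h2 h2' X,
    (c (cs.simple i) w v h1 h1').hom.app ((T (cs.simple j)).obj X) ≫
      (c w (cs.simple j) v h2 h2').inv.app ((T (cs.simple j)).obj X) ≫ (T w).map ((d j).app X) =
    (T (cs.simple i)).map ((c w (cs.simple j) v h2 h2').hom.app X ≫
      (c (cs.simple i) w v h1 h1').inv.app X) ≫ (d i).app ((T w).obj X)

variable {cs}
variable {C : Type*} [Category C] {T : W → C ⥤ C} (D : QD cs T)

namespace QD

lemma left_cases (w u : W) (i : B) (h : cs.simple i * w = u) :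
    cs.length u = cs.length (cs.simple i) + cs.length w ∨
    (cs.simple i * u = w ∧ cs.length w = cs.length (cs.simple i) + cs.length u) := by
  have h0 := cs.length_simple i
  rcases cs.length_simple_mul w i with h1 | h1
  · left; rw [← h]; omega
  · right
    refine ⟨by rw [← h]; simp, ?_⟩
    rw [← h]; omega

lemma right_cases (w u : W) (i : B) (h : w * cs.simple i = u) :
    cs.length u = cs.length w + cs.length (cs.simple i) ∨
    (u * cs.simple i = w ∧ cs.length w = cs.length u + cs.length (cs.simple i)) := by
  have h0 := cs.length_simple i
  rcases cs.length_mul_simple w i with h1 | h1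
  · left; rw [← h]; omega
  · right
    refine ⟨by rw [← h]; simp, ?_⟩
    rw [← h]; omega

open Classical in
noncomputable def lam (i : B) (w u : W) (h : cs.simple i * w = u) :
    T w ⋙ T (cs.simple i) ⟶ T u :=
  if hl : cs.length u = cs.length (cs.simple i) + cs.length w then (D.c _ _ _ h hl).hom
  else
    have h' := (left_cases w u i h).resolve_left hl
    { app := fun X => (T (cs.simple i)).map ((D.c _ _ _ h'.1 h'.2).inv.app X) ≫
        (D.d i).app ((T u).obj X)
      naturality := by
        intro X Y f
        have := (D.d i).naturality ((T u).map f)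
        simp only [Functor.comp_map, Functor.id_map] at this
        simp only [Functor.comp_map, Category.assoc]
        rw [← Functor.map_comp_assoc, NatTrans.naturality, Functor.map_comp_assoc,
          Functor.comp_map, this] }

open Classical in
noncomputable def rho (w : W) (i : B) (u : W) (h : w * cs.simple i = u) :
    T (cs.simple i) ⋙ T w ⟶ T u :=
  if hl : cs.length u = cs.length w + cs.length (cs.simple i) then (D.c _ _ _ h hl).hom
  else
    have h' := (right_cases w u i h).resolve_left hl
    { app := fun X => ((D.c _ _ _ h'.1 h'.2).inv.app ((T (cs.simple i)).obj X)) ≫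
        (T u).map ((D.d i).app X)
      naturality := by
        intro X Y f
        have := (D.d i).naturality f
        simp only [Functor.comp_map, Functor.id_map] at this
        simp only [Functor.comp_map, Category.assoc]
        rw [NatTrans.naturality_assoc, Functor.comp_map, ← Functor.map_comp, this,
          Functor.map_comp] }

lemma lam_up (i : B) (w u : W) (h) (hl) : D.lam i w u h = (D.c _ _ _ h hl).hom := by
  simp [lam, hl]

lemma rho_up (i : B) (w u : W) (h) (hl) : D.rho w i u h = (D.c _ _ _ h hl).hom := by
  simp [rho, hl]

lemma lam_down (i : B) (w u : W) (h) (h' : cs.simple i * u = w)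
    (hl : cs.length w = cs.length (cs.simple i) + cs.length u) (X : C) :
    (D.lam i w u h).app X = (T (cs.simple i)).map ((D.c _ _ _ h' hl).inv.app X) ≫
        (D.d i).app ((T u).obj X) := by
  have h0 := cs.length_simple i
  have : ¬ cs.length u = cs.length (cs.simple i) + cs.length w := by omega
  simp only [lam, dif_neg this]

lemma rho_down (i : B) (w u : W) (h) (h' : u * cs.simple i = w)
    (hl : cs.length w = cs.length u + cs.length (cs.simple i)) (X : C) :
    (D.rho w i u h).app X = ((D.c _ _ _ h' hl).inv.app ((T (cs.simple i)).obj X)) ≫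
        (T u).map ((D.d i).app X) := by
  have h0 := cs.length_simple i
  have : ¬ cs.length u = cs.length w + cs.length (cs.simple i) := by omega
  simp only [rho, dif_neg this]

lemma c_lam_down (i : B) (w u : W) (h) (h' : cs.simple i * u = w)
    (hl : cs.length w = cs.length (cs.simple i) + cs.length u) (X : C) :
    (T (cs.simple i)).map ((D.c _ _ _ h' hl).hom.app X) ≫ (D.lam i w u h).app X =
        (D.d i).app ((T u).obj X) := by
  rw [D.lam_down i w u h h' hl, ← Functor.map_comp_assoc]; simp

lemma c_rho_down (i : B) (w u : W) (h) (h' : u * cs.simple i = w)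
    (hl : cs.length w = cs.length u + cs.length (cs.simple i)) (X : C) :
    (D.c _ _ _ h' hl).hom.app ((T (cs.simple i)).obj X) ≫ (D.rho w i u h).app X =
        (T u).map ((D.d i).app X) := by
  rw [D.rho_down i w u h h' hl]; simp

lemma d_nat (i : B) {X Y : C} (f : X ⟶ Y) :
    (T (cs.simple i)).map ((T (cs.simple i)).map f) ≫ (D.d i).app Y = (D.d i).app X ≫ f :=
  (D.d i).naturality f

lemma q_nat {x y z : W} (q : T y ⋙ T x ⟶ T z) {X Y : C} (f : X ⟶ Y) :
    (T x).map ((T y).map f) ≫ q.app Y = q.app X ≫ (T z).map f :=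
  q.naturality f

lemma comm (i j : B) (b sb bt sbt : W) (h1 : b * cs.simple j = bt)
    (h2 : cs.simple i * bt = sbt) (h3 : cs.simple i * b = sb) (h4 : sb * cs.simple j = sbt)
    (X : C) :
    (T (cs.simple i)).map ((D.rho b j bt h1).app X) ≫ (D.lam i bt sbt h2).app X =
      (D.lam i b sb h3).app ((T (cs.simple j)).obj X) ≫ (D.rho sb j sbt h4).app X := by
  have li := cs.length_simple i
  have lj := cs.length_simple j
  rcases left_cases b sb i h3 with a1 | ⟨a1, a1'⟩ <;>
  rcases right_cases b bt j h1 with a2 | ⟨a2, a2'⟩ <;>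
  rcases left_cases bt sbt i h2 with a3 | ⟨a3, a3'⟩ <;>
  rcases right_cases sb sbt j h4 with a4 | ⟨a4, a4'⟩ <;> try (exfalso; omega)
  · rw [D.lam_up i bt sbt h2 a3, D.lam_up i b sb h3 a1, D.rho_up j b bt h1 a2,
      D.rho_up j sb sbt h4 a4]
    apply D.assoc
  · have e : cs.simple i * b = b * cs.simple j := by
      apply exchange
      · rw [h3]; omega
      · rw [h1]; omega
      · rw [h3, h4]; omega
    have e1 : sb = bt := by rw [← h3, ← h1, e]
    have e2 : sbt = b := by rw [← h4, ← h3, e]; simp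
    subst e1 e2
    rw [D.lam_down i sb sbt h2 h3 a1, D.lam_up i _ _ h3 a1, D.rho_up j _ _ h1 a2,
      D.rho_down j _ _ h4 h1 a2, ← Functor.map_comp_assoc]
    exact (D.hd2 _ _ _ _ _ _ _ _ _).symm
  · rw [D.lam_up i bt sbt h2 a3, D.lam_up i b sb h3 a1]
    rw [← cancel_epi ((T (cs.simple i)).map
      ((D.c _ _ _ a2 a2').hom.app ((T (cs.simple j)).obj X)))]
    rw [← Functor.map_comp_assoc, D.c_rho_down j b bt h1 a2 a2', ← Category.assoc,
      D.assoc _ _ _ _ _ _ _ _ _ _ h2 a3 a4 a4', Category.assoc, D.c_rho_down]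
    exact q_nat (D.c _ _ _ h2 a3).hom ((D.d j).app X)
  · rw [D.rho_up j b bt h1 a2, D.rho_up j sb sbt h4 a4]
    rw [← cancel_epi ((T (cs.simple i)).map
      ((D.c _ _ _ a1 a1').hom.app ((T (cs.simple j)).obj X)))]
    rw [← Functor.map_comp_assoc, ← D.assoc _ _ _ _ _ _ h4 a4 a3 a3', Functor.map_comp_assoc,
      D.c_lam_down, ← Category.assoc, D.c_lam_down, D.d_nat]
    rfl
  · have e1 : sb = bt := by
      have : cs.simple i * bt = bt * cs.simple j := by
        apply exchange
        · rw [h2]; omega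
        · rw [a2]; omega
        · rw [h2, show sbt * cs.simple j = sb by rw [← h4]; simp]; omega
      rw [← h3, ← a2, ← this]; simp
    have e2 : sbt = b := by rw [← a2, ← e1, h4]
    subst e1 e2
    rw [← cancel_epi ((T (cs.simple i)).map
      ((D.c _ _ _ a1 a1').hom.app ((T (cs.simple j)).obj X)))]
    slice_rhs 1 2 => rw [D.c_lam_down]
    rw [D.rho_down j _ _ h1 a2 a2', D.lam_up i _ _ h2 a3, D.rho_up j _ _ h4 a4,
      ← Functor.map_comp_assoc, D.hd2, Functor.map_comp, D.hd1]
    have e := D.d_nat i ((D.c sb (cs.simple j) sbt a2 a2').hom.app X ≫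
      (D.c (cs.simple i) sb sbt a1 a1').inv.app X)
    refine (congrArg (· ≫ (D.c (cs.simple i) sb sbt h2 a3).hom.app X) e).trans ?_
    simp
  · rw [← cancel_epi ((T (cs.simple i)).map
      ((D.c _ _ _ a1 a1').hom.app ((T (cs.simple j)).obj X)))]
    rw [← cancel_epi ((T (cs.simple i)).map ((T (cs.simple i)).map
      ((D.c _ _ _ a4 a4').hom.app ((T (cs.simple j)).obj X))))]
    slice_rhs 2 3 => rw [D.c_lam_down]
    slice_rhs 1 2 => rw [D.d_nat]
    rw [Category.assoc, D.c_rho_down]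
    have e := q_nat (D.c _ _ _ a3 a3').hom ((D.d j).app X)
    simp only [Functor.id_obj, Functor.comp_obj] at e
    rw [← Functor.map_comp_assoc, ← Functor.map_comp_assoc,
      D.assoc _ _ _ _ _ _ _ _ _ _ a3 a3' a2 a2', Category.assoc, D.c_rho_down]
    simp only [Functor.id_obj, Functor.comp_obj]
    rw [← e, Functor.map_comp_assoc, D.c_lam_down]
    exact D.d_nat _ _

lemma exists_left (n : ℕ) : ∀ a : W, cs.length a = n →
    ∃ q : ∀ b u : W, a * b = u → (T b ⋙ T a ⟶ T u),
      (∀ b u h hl, q b u h = (D.c a b u h hl).hom) ∧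
      (∀ (j : B) (b bt ab abt : W) (h1 : b * cs.simple j = bt) (h2 : a * bt = abt)
        (h3 : a * b = ab) (h4 : ab * cs.simple j = abt) (X : C),
        (T a).map ((D.rho b j bt h1).app X) ≫ (q bt abt h2).app X =
          (q b ab h3).app ((T (cs.simple j)).obj X) ≫ (D.rho ab j abt h4).app X) := by
  induction n with
  | zero =>
    intro a ha
    rw [cs.length_eq_zero_iff] at ha
    subst ha
    refine ⟨fun b u h => (D.c 1 b u h (by rw [← h]; simp)).hom, fun _ _ _ _ => rfl, ?_⟩
    intro j b bt ab abt h1 h2 h3 h4 X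
    obtain rfl : ab = b := by rw [← h3, one_mul]
    obtain rfl : abt = bt := by rw [← h2, one_mul]
    simp only [D.c1l]
    exact D.u.hom.naturality _
  | succ n ih =>
    intro a ha
    have hne : a ≠ 1 := by rintro rfl; simp at ha
    obtain ⟨i, hi⟩ := cs.exists_leftDescent_of_ne_one hne
    rw [cs.isLeftDescent_iff] at hi
    have li := cs.length_simple i
    obtain ⟨a', ha'⟩ : ∃ a', cs.simple i * a = a' := ⟨_, rfl⟩
    rw [ha'] at hi
    have hs : cs.simple i * a' = a := by rw [← ha']; simp
    have hsl : cs.length a = cs.length (cs.simple i) + cs.length a' := by omega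
    obtain ⟨q, hq1, hq2⟩ := ih a' (by omega)
    have key : ∀ b u : W, a * b = u → cs.simple i * (a' * b) = u := by
      intro b u h; rw [← mul_assoc, hs, h]
    refine ⟨fun b u h =>
      { app := fun X => (D.c _ _ _ hs hsl).inv.app ((T b).obj X) ≫
          (T (cs.simple i)).map ((q b (a' * b) rfl).app X) ≫
          (D.lam i (a' * b) u (key b u h)).app X
        naturality := ?_ }, ?_, ?_⟩
    · intro X Y f
      have e1 := (D.c _ _ _ hs hsl).inv.naturality ((T b).map f)
      have e2 := q_nat (q b (a' * b) rfl) f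
      have e3 := q_nat (D.lam i (a' * b) u (key b u h)) f
      simp only [Functor.comp_map] at e1 ⊢
      rw [← Category.assoc, e1, Category.assoc, ← Functor.map_comp_assoc, e2,
        Functor.map_comp_assoc, e3]
      simp
    · intro b u h hl
      have k := key b u h
      have g1 := cs.length_mul_le a' b
      have g2 := cs.length_mul_le (cs.simple i) (a' * b)
      rw [k] at g2
      have g3 : cs.length (a' * b) = cs.length a' + cs.length b := by omega
      have g4 : cs.length u = cs.length (cs.simple i) + cs.length (a' * b) := by omega
      ext X
      simp only
      rw [hq1 b _ rfl g3, D.lam_up i _ _ k g4, D.assoc _ _ _ _ _ _ _ _ _ _ hs hsl h hl]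
      simp
    · intro j b bt ab abt h1 h2 h3 h4 X
      have e1 := (D.c _ _ _ hs hsl).inv.naturality ((D.rho b j bt h1).app X)
      simp only [Functor.comp_map] at e1 ⊢
      have h5 : a' * b * cs.simple j = a' * bt := by rw [mul_assoc, h1]
      have e2 := hq2 j b bt (a' * b) (a' * bt) h1 rfl rfl h5 X
      have e3 := D.comm i j (a' * b) ab (a' * bt) abt h5 (key _ _ h2) (key _ _ h3) h4 X
      rw [← Category.assoc, e1, Category.assoc, ← Functor.map_comp_assoc, e2,
        Functor.map_comp_assoc, e3]
      simp

lemma exists_right (q : ∀ a b u : W, a * b = u → (T b ⋙ T a ⟶ T u))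
    (hq : ∀ (a : W) (j : B) (b bt ab abt : W) (h1 : b * cs.simple j = bt) (h2 : a * bt = abt)
        (h3 : a * b = ab) (h4 : ab * cs.simple j = abt) (X : C),
        (T a).map ((D.rho b j bt h1).app X) ≫ (q a bt abt h2).app X =
          (q a b ab h3).app ((T (cs.simple j)).obj X) ≫ (D.rho ab j abt h4).app X)
    (n : ℕ) : ∀ z : W, cs.length z = n →
    ∃ r : ∀ b u : W, b * z = u → (T z ⋙ T b ⟶ T u),
      (∀ b u h hl, r b u h = (D.c b z u h hl).hom) ∧
      (∀ (a b bz ab abz : W) (h1 : b * z = bz) (h2 : a * bz = abz)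
        (h3 : a * b = ab) (h4 : ab * z = abz) (X : C),
        (T a).map ((r b bz h1).app X) ≫ (q a bz abz h2).app X =
          (q a b ab h3).app ((T z).obj X) ≫ (r ab abz h4).app X) := by
  induction n with
  | zero =>
    intro z hz
    rw [cs.length_eq_zero_iff] at hz
    subst hz
    refine ⟨fun b u h => (D.c b 1 u h (by rw [← h]; simp)).hom, fun _ _ _ _ => rfl, ?_⟩
    intro a b bz ab abz h1 h2 h3 h4 X
    obtain rfl : bz = b := by rw [← h1, mul_one]
    obtain rfl : abz = ab := by rw [← h4, mul_one]
    simp only [D.c1r]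
    exact q_nat _ _
  | succ n ih =>
    intro z hz
    have hne : z ≠ 1 := by rintro rfl; simp at hz
    obtain ⟨j, hj⟩ := cs.exists_rightDescent_of_ne_one hne
    rw [cs.isRightDescent_iff] at hj
    have lj := cs.length_simple j
    obtain ⟨z', hz'⟩ : ∃ z', z * cs.simple j = z' := ⟨_, rfl⟩
    rw [hz'] at hj
    have hs : z' * cs.simple j = z := by rw [← hz']; simp
    have hsl : cs.length z = cs.length z' + cs.length (cs.simple j) := by omega
    obtain ⟨r, hr1, hr2⟩ := ih z' (by omega)
    have key : ∀ b u : W, b * z = u → b * z' * cs.simple j = u := by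
      intro b u h; rw [mul_assoc, hs, h]
    refine ⟨fun b u h =>
      { app := fun X => (T b).map ((D.c _ _ _ hs hsl).inv.app X) ≫
          (r b (b * z') rfl).app ((T (cs.simple j)).obj X) ≫
          (D.rho (b * z') j u (key b u h)).app X
        naturality := ?_ }, ?_, ?_⟩
    · intro X Y f
      have e1 := (D.c _ _ _ hs hsl).inv.naturality f
      have e2 := q_nat (r b (b * z') rfl) ((T (cs.simple j)).map f)
      have e3 := q_nat (D.rho (b * z') j u (key b u h)) f
      simp only [Functor.comp_map] at e1 ⊢
      rw [← Functor.map_comp_assoc, e1, Functor.map_comp_assoc,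
        ← Category.assoc ((T b).map ((T z').map _)), e2, Category.assoc, e3]
      simp only [Category.assoc]
    · intro b u h hl
      have k := key b u h
      have g1 := cs.length_mul_le b z'
      have g2 := cs.length_mul_le (b * z') (cs.simple j)
      rw [k] at g2
      have g3 : cs.length (b * z') = cs.length b + cs.length z' := by omega
      have g4 : cs.length u = cs.length (b * z') + cs.length (cs.simple j) := by omega
      ext X
      simp only
      rw [hr1 b _ rfl g3, D.rho_up j _ _ k g4, ← D.assoc _ _ _ _ _ _ hs hsl h hl,
        ← Functor.map_comp_assoc]
      simp
    · intro a b bz ab abz h1 h2 h3 h4 X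
      have h5 : a * (b * z') = ab * z' := by rw [← mul_assoc, h3]
      have e1 := q_nat (q a b ab h3) ((D.c _ _ _ hs hsl).inv.app X)
      simp only [Functor.comp_obj] at e1
      have e2 := hr2 a b (b * z') ab (ab * z') rfl h5 h3 rfl ((T (cs.simple j)).obj X)
      have e3 := hq a j (b * z') bz (ab * z') abz (key _ _ h1) h2 h5 (key _ _ h4) X
      simp only [Functor.map_comp, Category.assoc]
      rw [e3, ← Category.assoc ((T a).map ((r _ _ _).app _)), e2, Category.assoc,
        ← Category.assoc ((T a).map ((T b).map _)), e1, Category.assoc]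

theorem main : ∃ q : ∀ a b u : W, a * b = u → (T b ⋙ T a ⟶ T u),
    (∀ a b u h hl, q a b u h = (D.c a b u h hl).hom) ∧
    (∀ i h X, (q (cs.simple i) (cs.simple i) 1 h).app X = (D.d i).app X ≫ D.u.inv.app X) ∧
    (∀ (x y z xy yz xyz : W) h1 h2 h3 h4 X,
    (T x).map ((q y z yz h1).app X) ≫ (q x yz xyz h2).app X =
      (q x y xy h3).app ((T z).obj X) ≫ (q xy z xyz h4).app X) := by
  choose q hq1 hq2 using fun a => D.exists_left (cs.length a) a rfl
  choose r hr1 hr2 using fun z => D.exists_right q hq2 (cs.length z) z rfl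
  have unit : ∀ a b h1 h2 h3 h4 X, (T a).map ((D.c 1 b b h1 h2).hom.app X) =
      (D.c a 1 a h3 h4).hom.app ((T b).obj X) := by
    intros; rw [D.c1l, D.c1r]
  have qr : ∀ a b u h, q a b u h = r b a u h := by
    intro a b u h
    ext X
    have := hr2 b a 1 b a u (one_mul _) h (mul_one _) h X
    rw [hr1 b 1 b (one_mul _) (by simp), hq1 a 1 a (mul_one _) (by simp),
      unit a b _ _ (mul_one _) (by simp)] at this
    exact (cancel_epi _).1 this
  refine ⟨q, hq1, ?_, ?_⟩
  · intro i h X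
    have := hq2 (cs.simple i) i 1 (cs.simple i) (cs.simple i) 1 (one_mul _) h (mul_one _) h X
    rw [D.rho_up i 1 _ (one_mul _) (by simp), hq1 _ 1 _ (mul_one _) (by simp),
      unit _ _ _ _ (mul_one _) (by simp)] at this
    rw [(cancel_epi _).1 this, D.rho_down i _ _ h (one_mul _) (by simp)]
    have e := D.u.inv.naturality ((D.d i).app X)
    simp only [Functor.id_map] at e
    refine Eq.trans ?_ e.symm
    congr 1
    rw [← cancel_epi ((D.c 1 (cs.simple i) (cs.simple i) (one_mul _) (by simp)).hom.app
      ((T (cs.simple i)).obj X)), Iso.hom_inv_id_app, D.c1l]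
    simp
  · intro x y z xy yz xyz h1 h2 h3 h4 X
    rw [qr y z, qr xy z]
    exact hr2 z x y yz xy xyz h1 h2 h3 h4 X

end QD
end QA



/-- Given a finite Coxeter system `(W,S)`, functors `T w : 𝒞 ⥤ 𝒞` with
`T 1 = 𝟭`, natural isomorphisms `c_{w,w'} : T w ∘ T w' ≅ T (w w')` for length-additive
pairs (with `c_{1,w}`, `c_{w,1}` the identities) satisfying associativity on length-additive
triples, and natural transformations `c_s : T s ∘ T s ⟶ 𝟭` satisfying conditions (1) and
(2), there is a quasi-action of `W`: a family `C_{w,w'} : T w ∘ T w' ⟶ T (w w')` extending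
the `c_{w,w'}` and the `c_s` and satisfying associativity for all triples. -/
theorem stmt_0 {B : Type*} {W : Type*} [Group W] [Finite W]
    {M : CoxeterMatrix B} (cs : CoxeterSystem M W)
    {C : Type*} [Category C]
    (T : W → C ⥤ C) (hT1 : T 1 = 𝟭 C)
    (c : ∀ w w' : W, cs.length (w * w') = cs.length w + cs.length w' →
      (T w' ⋙ T w ≅ T (w * w')))
    (hc_one_left : ∀ (w : W) (h : cs.length (1 * w) = cs.length 1 + cs.length w),
      (c 1 w h).hom = eqToHom (by rw [hT1, Functor.comp_id, one_mul]))
    (hc_one_right : ∀ (w : W) (h : cs.length (w * 1) = cs.length w + cs.length 1),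
      (c w 1 h).hom = eqToHom (by rw [hT1, Functor.id_comp, mul_one]))
    (hassoc : ∀ (w w' w'' : W)
      (h1 : cs.length (w' * w'') = cs.length w' + cs.length w'')
      (h2 : cs.length (w * (w' * w'')) = cs.length w + cs.length (w' * w''))
      (h3 : cs.length (w * w') = cs.length w + cs.length w')
      (h4 : cs.length (w * w' * w'') = cs.length (w * w') + cs.length w'')
      (X : C),
      (T w).map ((c w' w'' h1).hom.app X) ≫ (c w (w' * w'') h2).hom.app X =
        (c w w' h3).hom.app ((T w'').obj X) ≫ (c (w * w') w'' h4).hom.app X ≫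
          eqToHom (by rw [mul_assoc]))
    (d : ∀ i : B, (T (cs.simple i) ⋙ T (cs.simple i) ⟶ 𝟭 C))
    (hd1 : ∀ (i : B) (X : C),
      (T (cs.simple i)).map ((d i).app X) = (d i).app ((T (cs.simple i)).obj X))
    (hd2 : ∀ (w : W) (i i' : B)
      (heq : cs.simple i * w = w * cs.simple i')
      (hli : cs.length (cs.simple i * w) = cs.length w + 1)
      (h1 : cs.length (cs.simple i * w) = cs.length (cs.simple i) + cs.length w)
      (h2 : cs.length (w * cs.simple i') = cs.length w + cs.length (cs.simple i'))
      (X : C),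
      ((c (cs.simple i) w h1).hom ≫ eqToHom (congrArg T heq) ≫
          (c w (cs.simple i') h2).inv).app ((T (cs.simple i')).obj X) ≫
        (T w).map ((d i').app X) =
      (T (cs.simple i)).map
          (((c w (cs.simple i') h2).hom ≫ eqToHom (congrArg T heq.symm) ≫
            (c (cs.simple i) w h1).inv).app X) ≫
        (d i).app ((T w).obj X)) :
    ∃ Q : ∀ w w' : W, (T w' ⋙ T w ⟶ T (w * w')),
      (∀ (w w' : W) (h : cs.length (w * w') = cs.length w + cs.length w'),
        Q w w' = (c w w' h).hom) ∧
      (∀ (i : B) (X : C),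
        (Q (cs.simple i) (cs.simple i)).app X =
          (d i).app X ≫
            eqToHom (show (𝟭 C).obj X = (T (cs.simple i * cs.simple i)).obj X by
              rw [cs.simple_mul_simple_self, hT1])) ∧
      (∀ (w w' w'' : W) (X : C),
        (T w).map ((Q w' w'').app X) ≫ (Q w (w' * w'')).app X =
          (Q w w').app ((T w'').obj X) ≫ (Q (w * w') w'').app X ≫
            eqToHom (by rw [mul_assoc])) := by
  let D : QA.QD cs T :=
    { u := eqToIso hT1
      c := fun a b ab h hl => c a b (by rw [h, hl]) ≪≫ eqToIso (congrArg T h)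
      c1l := by
        intro w h h' X
        simp only [Iso.trans_hom, hc_one_left, eqToIso.hom, eqToHom_trans, eqToHom_app]
      c1r := by
        intro w h h' X
        simp only [Iso.trans_hom, hc_one_right, eqToIso.hom, eqToHom_trans, eqToHom_app,
          eqToHom_map]
      assoc := by
        intro x y z xy yz xyz h1 h1' h2 h2' h3 h3' h4 h4' X
        subst h1 h3 h4
        have := hassoc x y z h1' (by rw [h2, h2']) h3' h4' X
        simp only [Iso.trans_hom, eqToIso.hom, NatTrans.comp_app, eqToHom_app, eqToHom_refl,
          Category.comp_id]
        rw [← Category.assoc, this]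
        simp
      d := d
      hd1 := hd1
      hd2 := by
        intro w v i j h1 h1' h2 h2' X
        subst h1
        have := hd2 w i j h2.symm (by rw [h1', cs.length_simple, add_comm]) h1'
          (by rw [h2, h2']) X
        simpa using this }
  obtain ⟨q, hq1, hq2, hq3⟩ := D.main
  refine ⟨fun a b => q a b (a * b) rfl, ?_, ?_, ?_⟩
  · intro a b h
    change q a b _ rfl = _
    rw [hq1 a b _ rfl h]
    simp [D]
  · intro i X
    have h := cs.simple_mul_simple_self i
    have e : ∀ u (h' : cs.simple i * cs.simple i = u) (hu : u = 1),
        (q (cs.simple i) (cs.simple i) u h').app X =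
          (q (cs.simple i) (cs.simple i) 1 h).app X ≫ eqToHom (by rw [hu]) := by
      intro u h' hu; subst hu; simp
    rw [e _ rfl h, hq2]
    simp [D, eqToHom_app]
  · intro x y z X
    have e : ∀ u (h' : x * y * z = u),
        (q (x * y) z u h').app X =
          (q (x * y) z (x * y * z) rfl).app X ≫ eqToHom (by rw [h']) := by
      intro u h'; subst h'; simp
    rw [hq3 x y z (x * y) (y * z) (x * (y * z)) rfl rfl rfl (mul_assoc _ _ _) X, e]
end

section
/- Let (W,S) be a finite Coxeter system with length function ℓ, 𝒞 a category, T(w) : 𝒞 ⥤ 𝒞 functors with T(1) = 𝟭_𝒞, together with natural isomorphisms c_{w,w'} : T(w) ∘ T(w') ≅ T(ww') for all pairs with ℓ(ww') = ℓ(w) + ℓ(w') satisfying the associativity condition on length-additive triples, and natural transformations c_s : T(s) ∘ T(s) ⟶ 𝟭_𝒞 for s ∈ S satisfying condition (1): T(s)(c_{s,X}) = c_{s,T(s)X} for all objects X. For each ordered pair (s₁, s₂) of distinct elements of S, let m be the order of s₁s₂ in W (finite), let w(s₁,s₂) be the alternating product s₂s₁s₂s₁⋯ with m − 1 factors beginning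 with s₂, and let s'(s₁,s₂) = s₁ if m is even and s'(s₁,s₂) = s₂ if m is odd; then s₁·w(s₁,s₂) = w(s₁,s₂)·s'(s₁,s₂) and ℓ(s₁·w(s₁,s₂)) = ℓ(w(s₁,s₂)) + 1. Suppose that for every such pair (s₁,s₂) the compatibility condition (2) holds for the triple (w, s, s') = (w(s₁,s₂), s₁, s'(s₁,s₂)): the composite T(s)T(w)T(s') → T(w)T(s')T(s') → T(w) (via the isomorphism (c_{w,s'})⁻¹ ∘ c_{s,w} whiskered with T(s'), then T(w) whiskered with c_{s'}) equals the composite T(s)T(w)T(s') → T(s)T(s)T(w) → T(w) (via T(s) whiskered with (c_{s,w})⁻¹ ∘ c_{w,s'}, then c_s whiskered with T(w)). Then condition (2) holds for every triple (w, s, s') with w ∈ W, s, s' ∈ S, sw = ws' and ℓ(sw) = ℓ(w) + 1. -/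
open CategoryTheory

/-- `altProd x y n` is the alternating product `x y x y ⋯` with `n` factors,
beginning with `x`. -/
def altProd {W : Type*} [Monoid W] (x y : W) : ℕ → W
  | 0 => 1
  | n + 1 => x * altProd y x n

/-- Condition (2) for a triple `(w, s, s')` (with `s = simple i`, `s' = simple i'`):
whenever `s w = w s'` and the relevant lengths are additive, the composite
`T(s)T(w)T(s') → T(w)T(s')T(s') → T(w)` equals the composite
`T(s)T(w)T(s') → T(s)T(s)T(w) → T(w)`, expressed componentwise. -/
def Cond2 {B : Type*} {W : Type*} [Group W] {M : CoxeterMatrix B} (cs : CoxeterSystem M W)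
    {C : Type*} [Category C] (T : W → C ⥤ C)
    (c : ∀ w w' : W, cs.length (w * w') = cs.length w + cs.length w' →
      (T w' ⋙ T w ≅ T (w * w')))
    (d : ∀ i : B, (T (cs.simple i) ⋙ T (cs.simple i) ⟶ 𝟭 C))
    (w : W) (i i' : B) : Prop :=
  ∀ (heq : cs.simple i * w = w * cs.simple i')
    (h1 : cs.length (cs.simple i * w) = cs.length (cs.simple i) + cs.length w)
    (h2 : cs.length (w * cs.simple i') = cs.length w + cs.length (cs.simple i'))
    (X : C),
    ((c (cs.simple i) w h1).hom ≫ eqToHom (congrArg T heq) ≫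
        (c w (cs.simple i') h2).inv).app ((T (cs.simple i')).obj X) ≫
      (T w).map ((d i').app X) =
    (T (cs.simple i)).map
        (((c w (cs.simple i') h2).hom ≫ eqToHom (congrArg T heq.symm) ≫
          (c (cs.simple i) w h1).inv).app X) ≫
      (d i).app ((T w).obj X)


/-- Abstract composition of condition (2). -/
theorem cond2_comp_abs {C : Type*} [Category C] {S S2 S1 V U F : C ⥤ C}
    (φv : V ⋙ S ≅ S2 ⋙ V) (φu : U ⋙ S2 ≅ S1 ⋙ U) (φw : F ⋙ S ≅ S1 ⋙ F)
    (γ : U ⋙ V ≅ F)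
    (hcomp : ∀ X, S.map (γ.hom.app X) ≫ φw.hom.app X =
      φv.hom.app (U.obj X) ≫ V.map (φu.hom.app X) ≫ γ.hom.app (S1.obj X))
    (d : S ⋙ S ⟶ 𝟭 C) (d2 : S2 ⋙ S2 ⟶ 𝟭 C) (d1 : S1 ⋙ S1 ⟶ 𝟭 C)
    (hv : ∀ X, φv.hom.app (S2.obj X) ≫ V.map (d2.app X) =
      S.map (φv.inv.app X) ≫ d.app (V.obj X))
    (hu : ∀ X, φu.hom.app (S1.obj X) ≫ U.map (d1.app X) =
      S2.map (φu.inv.app X) ≫ d2.app (U.obj X)) (X : C) :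
    φw.hom.app (S1.obj X) ≫ F.map (d1.app X) =
      S.map (φw.inv.app X) ≫ d.app (F.obj X) := by
  rw [← cancel_epi (S.map (γ.hom.app (S1.obj X)))]
  rw [reassoc_of% (hcomp (S1.obj X))]
  have n1 : γ.hom.app (S1.obj (S1.obj X)) ≫ F.map (d1.app X) =
      V.map (U.map (d1.app X)) ≫ γ.hom.app X := (γ.hom.naturality (d1.app X)).symm
  have e2 : γ.hom.app (S1.obj X) ≫ φw.inv.app X =
      V.map (φu.inv.app X) ≫ φv.inv.app (U.obj X) ≫ S.map (γ.hom.app X) := by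
    rw [← cancel_mono (φw.hom.app X)]
    simp only [Category.assoc, hcomp]
    simp only [Iso.inv_hom_id_app, Iso.inv_hom_id_app_assoc, ← Functor.map_comp_assoc]
    simp
  rw [n1]
  have e3 := congrArg (fun f => V.map f) (hu X)
  simp only [Functor.map_comp] at e3
  rw [reassoc_of% e3]
  have n2 : φv.hom.app (U.obj (S1.obj X)) ≫ V.map (S2.map (φu.inv.app X)) =
      S.map (V.map (φu.inv.app X)) ≫ φv.hom.app (S2.obj (U.obj X)) :=
    (φv.hom.naturality (φu.inv.app X)).symm
  rw [reassoc_of% n2, reassoc_of% (hv (U.obj X))]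
  have n3 : d.app (V.obj (U.obj X)) ≫ γ.hom.app X =
      S.map (S.map (γ.hom.app X)) ≫ d.app (F.obj X) := (d.naturality (γ.hom.app X)).symm
  have e4 := congrArg (fun f => S.map f) e2
  simp only [Functor.map_comp] at e4
  rw [n3, reassoc_of% e4]

theorem cond2_one_abs {C : Type*} [Category C] {P S : C ⥤ C} (e : P ≅ 𝟭 C)
    (μ : P ⋙ P ≅ P) (r : P ⋙ S ≅ S) (l : S ⋙ P ≅ S)
    (hr : ∀ X, S.map (μ.hom.app X) = r.hom.app (P.obj X))
    (hl : ∀ X, P.map (l.hom.app X) = μ.hom.app (S.obj X))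
    (d : S ⋙ S ⟶ 𝟭 C) (X : C) :
    (r ≪≫ l.symm).hom.app (S.obj X) ≫ P.map (d.app X) =
      S.map ((r ≪≫ l.symm).inv.app X) ≫ d.app (P.obj X) := by
  have he : ∀ {Y Z : C} (f : Y ⟶ Z), P.map f ≫ e.hom.app Z = e.hom.app Y ≫ f :=
    fun f => e.hom.naturality f
  have hPe : ∀ Y, P.map (e.hom.app Y) = e.hom.app (P.obj Y) := by
    intro Y
    rw [← cancel_mono (e.hom.app Y)]
    exact he _
  let β : P ≅ 𝟭 C := (Functor.leftUnitor P).symm ≪≫ Functor.isoWhiskerRight e.symm P ≪≫ μ ≪≫ e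
  have hβ : ∀ Y, β.hom.app Y = P.map (e.inv.app Y) ≫ μ.hom.app Y ≫ e.hom.app Y := by
    intro Y
    simp [β]
  have h1 : ∀ Y, r.hom.app Y = S.map (β.hom.app Y) := by
    intro Y
    have n : S.map (P.map (e.hom.app Y)) ≫ r.hom.app Y =
      r.hom.app (P.obj Y) ≫ S.map (e.hom.app Y) := r.hom.naturality (e.hom.app Y)
    rw [← cancel_epi (S.map (P.map (e.hom.app Y))), n, hβ, ← hr]
    simp only [← Functor.map_comp, ← Functor.map_comp_assoc]
    simp
  have h2 : ∀ Y, l.hom.app Y = β.hom.app (S.obj Y) := by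
    intro Y
    have h3 : e.hom.app ((S ⋙ P).obj Y) = P.map (e.hom.app (S.obj Y)) := (hPe (S.obj Y)).symm
    rw [hβ, ← hl, he, h3, ← Functor.map_comp_assoc]
    simp
  have e1 : (r ≪≫ l.symm).hom.app (S.obj X) =
      S.map (β.hom.app (S.obj X)) ≫ β.inv.app (S.obj (S.obj X)) := by
    rw [← cancel_mono (l.hom.app (S.obj X))]
    simp only [Iso.trans_hom, Iso.symm_hom, NatTrans.comp_app, Category.assoc,
      Iso.inv_hom_id_app]
    rw [h1, h2]
    simp
  have e2 : (r ≪≫ l.symm).inv.app X = β.hom.app (S.obj X) ≫ S.map (β.inv.app X) := by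
    rw [← cancel_mono (r.hom.app X)]
    simp only [Iso.trans_inv, Iso.symm_inv, NatTrans.comp_app, Category.assoc,
      Iso.inv_hom_id_app]
    rw [h1, h2, ← Functor.map_comp]
    simp
  have n1 : d.app X ≫ β.inv.app X = β.inv.app (S.obj (S.obj X)) ≫ P.map (d.app X) :=
    β.inv.naturality (d.app X)
  have n2 : S.map (S.map (β.inv.app X)) ≫ d.app (P.obj X) = d.app X ≫ β.inv.app X :=
    d.naturality (β.inv.app X)
  rw [e1, e2]
  simp only [Functor.map_comp, Category.assoc]
  rw [← n1, n2]

section cat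
variable {B : Type*} {W : Type*} [Group W] {M : CoxeterMatrix B} (cs : CoxeterSystem M W)
    {C : Type*} [Category C] (T : W → C ⥤ C)
    (c : ∀ w w' : W, cs.length (w * w') = cs.length w + cs.length w' →
      (T w' ⋙ T w ≅ T (w * w')))

/-- transported structure isomorphism -/
def cT (w w' x : W) (h : w * w' = x) (hl : cs.length x = cs.length w + cs.length w') :
    T w' ⋙ T w ≅ T x :=
  c w w' (by rw [h, hl]) ≪≫ eqToIso (congrArg T h)

theorem cT_assoc
    (hassoc : ∀ (w w' w'' : W)
      (h1 : cs.length (w' * w'') = cs.length w' + cs.length w'')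
      (h2 : cs.length (w * (w' * w'')) = cs.length w + cs.length (w' * w''))
      (h3 : cs.length (w * w') = cs.length w + cs.length w')
      (h4 : cs.length (w * w' * w'') = cs.length (w * w') + cs.length w'')
      (X : C),
      (T w).map ((c w' w'' h1).hom.app X) ≫ (c w (w' * w'') h2).hom.app X =
        (c w w' h3).hom.app ((T w'').obj X) ≫ (c (w * w') w'' h4).hom.app X ≫
          eqToHom (by rw [mul_assoc]))
    (a b e ab be abe : W) (h1 : b * e = be) (l1 : cs.length be = cs.length b + cs.length e)
    (h2 : a * be = abe) (l2 : cs.length abe = cs.length a + cs.length be)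
    (h3 : a * b = ab) (l3 : cs.length ab = cs.length a + cs.length b)
    (h4 : ab * e = abe) (l4 : cs.length abe = cs.length ab + cs.length e) (X : C) :
    (T a).map ((cT cs T c b e be h1 l1).hom.app X) ≫ (cT cs T c a be abe h2 l2).hom.app X =
    (cT cs T c a b ab h3 l3).hom.app ((T e).obj X) ≫ (cT cs T c ab e abe h4 l4).hom.app X := by
  subst h1 h3
  subst h2
  simp [cT, eqToHom_app, hassoc a b e l1 l2 l3 (by rw [h4, l4])]

/-- the commutation isomorphism -/
def phi (s w s' x : W) (h : s * w = x) (h' : w * s' = x)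
    (hl : cs.length x = cs.length s + cs.length w) (hl' : cs.length x = cs.length w + cs.length s') :
    T w ⋙ T s ≅ T s' ⋙ T w :=
  cT cs T c s w x h hl ≪≫ (cT cs T c w s' x h' hl').symm

variable (d : ∀ i : B, (T (cs.simple i) ⋙ T (cs.simple i) ⟶ 𝟭 C))

theorem cond2_iff (w : W) (i i' : B) (h : cs.simple i * w = w * cs.simple i')
    (hl : cs.length (w * cs.simple i') = cs.length (cs.simple i) + cs.length w)
    (hl' : cs.length (w * cs.simple i') = cs.length w + cs.length (cs.simple i')) :
    Cond2 cs T c d w i i' ↔ ∀ X,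
      (phi cs T c _ w _ _ h rfl hl hl').hom.app ((T (cs.simple i')).obj X) ≫
        (T w).map ((d i').app X) =
      (T (cs.simple i)).map ((phi cs T c _ w _ _ h rfl hl hl').inv.app X) ≫
        (d i).app ((T w).obj X) := by
  have e1 : (c (cs.simple i) w (h ▸ hl)).hom ≫ eqToHom (congrArg T h) ≫
        (c w (cs.simple i') hl').inv = (phi cs T c _ w _ _ h rfl hl hl').hom := by
    simp [phi, cT]
  have e2 : (c w (cs.simple i') hl').hom ≫ eqToHom (congrArg T h.symm) ≫
          (c (cs.simple i) w (h ▸ hl)).inv = (phi cs T c _ w _ _ h rfl hl hl').inv := by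
    simp [phi, cT]
  constructor
  · intro H X
    rw [← e1, ← e2]
    exact H h (h ▸ hl) hl' X
  · intro H _ _ _ X
    have := H X
    rw [← e1, ← e2] at this
    exact this

theorem cond2_comp
    (hassoc : ∀ (w w' w'' : W)
      (h1 : cs.length (w' * w'') = cs.length w' + cs.length w'')
      (h2 : cs.length (w * (w' * w'')) = cs.length w + cs.length (w' * w''))
      (h3 : cs.length (w * w') = cs.length w + cs.length w')
      (h4 : cs.length (w * w' * w'') = cs.length (w * w') + cs.length w'')
      (X : C),
      (T w).map ((c w' w'' h1).hom.app X) ≫ (c w (w' * w'') h2).hom.app X =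
        (c w w' h3).hom.app ((T w'').obj X) ≫ (c (w * w') w'' h4).hom.app X ≫
          eqToHom (by rw [mul_assoc]))
    (v u : W) (i k i' : B) (hv : cs.simple i * v = v * cs.simple k)
    (hu : cs.simple k * u = u * cs.simple i')
    (hl : cs.length (v * u * cs.simple i') = cs.length v + cs.length u + 1)
    (Hv : Cond2 cs T c d v i k) (Hu : Cond2 cs T c d u k i') :
    Cond2 cs T c d (v * u) i i' := by
  have hw : cs.simple i * (v * u) = v * u * cs.simple i' := by
    rw [← mul_assoc, hv, mul_assoc, hu, mul_assoc]
  have a1 := cs.length_mul_le v u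
  have a2 := cs.length_mul_le (v * u) (cs.simple i')
  have a3 := cs.length_mul_le v (u * cs.simple i')
  have a4 := cs.length_mul_le u (cs.simple i')
  have a5 := cs.length_mul_le (v * cs.simple k) u
  have a6 := cs.length_mul_le v (cs.simple k)
  have a7 : v * cs.simple k * u = v * u * cs.simple i' := by rw [mul_assoc, hu, mul_assoc]
  rw [← mul_assoc] at a3
  rw [a7] at a5
  have s1 := cs.length_simple i
  have s2 := cs.length_simple k
  have s3 := cs.length_simple i'
  have lvu : cs.length (v * u) = cs.length v + cs.length u := by omega
  have lus : cs.length (u * cs.simple i') = cs.length u + 1 := by omega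
  have lvs : cs.length (v * cs.simple k) = cs.length v + 1 := by omega
  rw [cond2_iff cs T c d v i k hv (by omega) (by omega)] at Hv
  rw [cond2_iff cs T c d u k i' hu (by omega) (by omega)] at Hu
  rw [cond2_iff cs T c d (v * u) i i' hw (by omega) (by omega)]
  refine cond2_comp_abs _ _ _ (cT cs T c v u _ rfl lvu) ?_ (d i) (d k) (d i') Hv Hu
  intro X
  have A1 := cT_assoc cs T c hassoc (cs.simple i) v u (v * cs.simple k) (v * u)
    (v * u * cs.simple i') rfl lvu hw (by omega) hv (by omega) a7 (by omega) X
  have A2 := cT_assoc cs T c hassoc v (cs.simple k) u (v * cs.simple k) (u * cs.simple i')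
    (v * u * cs.simple i') hu (by omega) (mul_assoc _ _ _).symm (by omega) rfl (by omega)
    a7 (by omega) X
  have A3 := cT_assoc cs T c hassoc v u (cs.simple i') (v * u) (u * cs.simple i')
    (v * u * cs.simple i') rfl (by omega) (mul_assoc _ _ _).symm (by omega) rfl lvu
    rfl (by omega) X
  simp only [phi, Iso.trans_hom, Iso.symm_hom, NatTrans.comp_app, Functor.map_comp, Category.assoc]
  rw [reassoc_of% A1]
  congr 1
  rw [← cancel_epi ((cT cs T c v (cs.simple k) _ rfl (by omega)).hom.app ((T u).obj X)),
    ← reassoc_of% A2]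
  simp only [Iso.hom_inv_id_app_assoc]
  congr 1
  rw [← cancel_epi ((T v).map ((cT cs T c u (cs.simple i') _ rfl (by omega)).hom.app X)),
    reassoc_of% A3]
  simp only [Iso.hom_inv_id_app]
  rw [← Functor.map_comp_assoc]
  simp

theorem cond2_one (hT1 : T 1 = 𝟭 C)
    (hassoc : ∀ (w w' w'' : W)
      (h1 : cs.length (w' * w'') = cs.length w' + cs.length w'')
      (h2 : cs.length (w * (w' * w'')) = cs.length w + cs.length (w' * w''))
      (h3 : cs.length (w * w') = cs.length w + cs.length w')
      (h4 : cs.length (w * w' * w'') = cs.length (w * w') + cs.length w'')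
      (X : C),
      (T w).map ((c w' w'' h1).hom.app X) ≫ (c w (w' * w'') h2).hom.app X =
        (c w w' h3).hom.app ((T w'').obj X) ≫ (c (w * w') w'' h4).hom.app X ≫
          eqToHom (by rw [mul_assoc]))
    (i : B) : Cond2 cs T c d 1 i i := by
  have h : cs.simple i * 1 = 1 * cs.simple i := by simp
  have l0 : cs.length (1 : W) = 0 := cs.length_one
  have s1 := cs.length_simple i
  have hl : cs.length (1 * cs.simple i) = cs.length (cs.simple i) + cs.length (1 : W) := by simp
  have hl' : cs.length (1 * cs.simple i) = cs.length (1 : W) + cs.length (cs.simple i) := by simp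
  rw [cond2_iff cs T c d 1 i i h hl hl']
  have key := cond2_one_abs (eqToIso hT1) (cT cs T c 1 1 1 (by simp) (by simp))
    (cT cs T c (cs.simple i) 1 (cs.simple i) (by simp) (by simp))
    (cT cs T c 1 (cs.simple i) (cs.simple i) (by simp) (by simp)) ?_ ?_ (d i)
  · have e : phi cs T c _ 1 _ _ h rfl hl hl' =
        cT cs T c (cs.simple i) 1 (cs.simple i) (by simp) (by simp) ≪≫
        (cT cs T c 1 (cs.simple i) (cs.simple i) (by simp) (by simp)).symm := by
      ext X
      simp [phi, cT]
    rw [e]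
    exact key
  · intro X
    have := cT_assoc cs T c hassoc (cs.simple i) 1 1 (cs.simple i) 1 (cs.simple i)
      (by simp) (by simp) (by simp) (by simp) (by simp) (by simp) (by simp) (by simp) X
    rwa [cancel_mono] at this
  · intro X
    have := cT_assoc cs T c hassoc 1 1 (cs.simple i) 1 (cs.simple i) (cs.simple i)
      (by simp) (by simp) (by simp) (by simp) (by simp) (by simp) (by simp) (by simp) X
    rwa [cancel_mono] at this
end cat

section cox
open CoxeterSystem Polynomial
variable {B : Type*} {W : Type*} [Group W] {M : CoxeterMatrix B} (cs : CoxeterSystem M W)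

/-- toggle action generator -/
noncomputable def tog (g : W) : Function.End (W × ZMod 2) :=
  open Classical in fun p => (g * p.1 * g⁻¹, p.2 + if p.1 = g then 1 else 0)

theorem tog_pow (a b : W) (ha : a * a = 1) (hb : b * b = 1) (n : ℕ) (t : W) (ε : ZMod 2) :
    open Classical in
    ((tog a * tog b) ^ n) (t, ε) = ((a * b) ^ n * t * ((a * b) ^ n)⁻¹,
      ε + ∑ q ∈ Finset.range (2 * n), if t = (b * a) ^ q * b then 1 else 0) := by
  classical
  have ia : a⁻¹ = a := inv_eq_of_mul_eq_one_left ha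
  have ib : b⁻¹ = b := inv_eq_of_mul_eq_one_left hb
  have iab : (a * b)⁻¹ = b * a := by simp [ia, ib]
  have conj : ∀ n, b * (a * b) ^ n = (b * a) ^ n * b := by
    intro n
    induction n with
    | zero => simp
    | succ n ih => rw [pow_succ, ← mul_assoc, ih, pow_succ]; simp [mul_assoc]
  have inv' : ∀ n, ((a * b) ^ n)⁻¹ = (b * a) ^ n := by
    intro n; rw [← inv_pow, iab]
  induction n with
  | zero => simp; rfl
  | succ n ih =>
    have h0 : ((tog a * tog b) ^ (n + 1)) (t, ε) =
        tog a (tog b (((tog a * tog b) ^ n) (t, ε))) := by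
      rw [pow_succ']; rfl
    rw [h0, ih]
    have k1 : ((a * b) ^ n * t * ((a * b) ^ n)⁻¹ = b) ↔ t = (b * a) ^ (2 * n) * b := by
      rw [mul_inv_eq_iff_eq_mul, conj, ← eq_inv_mul_iff_mul_eq, inv', ← mul_assoc, ← pow_add, two_mul]
    have k2 : (b * ((a * b) ^ n * t * ((a * b) ^ n)⁻¹) * b⁻¹ = a) ↔
        t = (b * a) ^ (2 * n + 1) * b := by
      rw [mul_inv_eq_iff_eq_mul, ← eq_inv_mul_iff_mul_eq, ib, mul_inv_eq_iff_eq_mul,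
        ← eq_inv_mul_iff_mul_eq, inv']
      have : (b * a) ^ n * (b * (a * b) * (a * b) ^ n) = (b * a) ^ (2 * n + 1) * b := by
        rw [mul_assoc b (a * b), ← pow_succ', conj, ← mul_assoc, ← pow_add]
        congr 2; omega
      rw [← this]
    simp only [tog, k1, k2]
    rw [show 2 * (n + 1) = 2 * n + 1 + 1 by ring, Finset.sum_range_succ, Finset.sum_range_succ]
    refine Prod.ext ?_ ?_
    · simp only [pow_succ', mul_inv_rev, mul_assoc]
    · simp only [add_assoc]

theorem tog_liftable : M.IsLiftable (fun i => tog (cs.simple i)) := by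
  classical
  intro i j
  funext ⟨t, ε⟩
  rw [tog_pow _ _ (by simp) (by simp)]
  have h1 : (cs.simple i * cs.simple j) ^ M i j = 1 := by simp
  have h2 : (cs.simple j * cs.simple i) ^ M i j = 1 := by
    rw [M.symmetric i j]; simp
  rw [h1, two_mul, Finset.sum_range_add]
  simp only [pow_add, h2, one_mul]
  rw [CharTwo.add_self_eq_zero]
  simp
  rfl

theorem lift_tog_wordProd (ω : List B) (t : W) (ε : ZMod 2) :
    open Classical in
    cs.lift ⟨_, tog_liftable cs⟩ (cs.wordProd ω) (t, ε) =
      (cs.wordProd ω * t * (cs.wordProd ω)⁻¹, ε + (List.count t (cs.rightInvSeq ω) : ℕ)) := by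
  classical
  induction ω with
  | nil => simp; rfl
  | cons i ω ih =>
    rw [wordProd_cons, map_mul]
    change (cs.lift ⟨_, tog_liftable cs⟩ (cs.simple i)) (cs.lift ⟨_, tog_liftable cs⟩ (cs.wordProd ω) (t, ε)) = _
    rw [ih, lift_apply_simple, rightInvSeq, List.count_cons]
    have k : (cs.wordProd ω * t * (cs.wordProd ω)⁻¹ = cs.simple i) ↔
      (cs.wordProd ω)⁻¹ * cs.simple i * cs.wordProd ω = t := by
      rw [mul_inv_eq_iff_eq_mul, mul_assoc, inv_mul_eq_iff_eq_mul, eq_comm]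
    simp only [tog, k]
    refine Prod.ext ?_ ?_
    · simp [mul_assoc]
    · simp [add_assoc]

theorem count_parity (ω ω' : List B) (h : cs.wordProd ω = cs.wordProd ω') (t : W) :
    open Classical in
    ((List.count t (cs.rightInvSeq ω) : ℕ) : ZMod 2) = (List.count t (cs.rightInvSeq ω') : ℕ) := by
  classical
  have h1 := lift_tog_wordProd cs ω t 0
  rw [h, lift_tog_wordProd cs ω' t 0] at h1
  simpa using (congrArg Prod.snd h1).symm

theorem mem_ris_of_rightDescent (ω : List B) (i : B) (h : cs.IsRightDescent (cs.wordProd ω) i) :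
    cs.simple i ∈ cs.rightInvSeq ω := by
  classical
  obtain ⟨ω', hr, hω'⟩ := cs.exists_isReduced (cs.wordProd ω * cs.simple i)
  have hnot : cs.simple i ∉ cs.rightInvSeq ω' := by
    intro hm
    have := (cs.isRightInversion_of_mem_rightInvSeq hr hm).2
    rw [← hω'] at this
    simp only [simple_mul_simple_cancel_right] at this
    exact absurd h (not_lt.mpr this.le)
  have hp : cs.wordProd ω = cs.wordProd (ω'.concat i) := by
    rw [wordProd_concat, ← hω']; simp
  have hc := count_parity cs ω _ hp (cs.simple i)
  rw [rightInvSeq_concat] at hc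
  have hz : List.count (cs.simple i) (List.map (MulAut.conj (cs.simple i)) (cs.rightInvSeq ω')) = 0 := by
    rw [List.count_eq_zero]
    intro hm
    obtain ⟨t, ht, e⟩ := List.mem_map.mp hm
    apply hnot
    have : t = cs.simple i := by
      rw [MulAut.conj_apply, mul_inv_eq_iff_eq_mul] at e
      exact mul_left_cancel e
    rwa [← this]
  by_contra hm
  rw [List.count_eq_zero.mpr hm] at hc
  simp [hz] at hc

theorem mem_lis_of_leftDescent (ω : List B) (i : B) (h : cs.IsLeftDescent (cs.wordProd ω) i) :
    cs.simple i ∈ cs.leftInvSeq ω := by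
  have := mem_ris_of_rightDescent cs ω.reverse i (by
    rw [wordProd_reverse, isRightDescent_inv_iff]; exact h)
  rw [rightInvSeq_reverse] at this
  simpa using this

theorem lis_append (A U : List B) : cs.leftInvSeq (A ++ U) =
    cs.leftInvSeq A ++ (cs.leftInvSeq U).map (MulAut.conj (cs.wordProd A)) := by
  induction A with
  | nil => simp
  | cons i A ih =>
    simp only [List.cons_append, leftInvSeq, ih, wordProd_cons, map_mul, List.map_append, List.map_map]
    rfl

/-- alternating list -/
def altList (i j : B) : ℕ → List B
  | 0 => []
  | n + 1 => i :: altList j i n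

theorem wordProd_altList (i j : B) (n : ℕ) :
    cs.wordProd (altList i j n) = altProd (cs.simple i) (cs.simple j) n := by
  induction n generalizing i j with
  | zero => simp [altList, altProd]
  | succ n ih => simp [altList, altProd, wordProd_cons, ih]

theorem length_altList (i j : B) (n : ℕ) : (altList i j n).length = n := by
  induction n generalizing i j with
  | zero => rfl
  | succ n ih => simp [altList, ih]

theorem length_altProd_le (i j : B) (n : ℕ) :
    cs.length (altProd (cs.simple i) (cs.simple j) n) ≤ n := by
  rw [← wordProd_altList]
  exact (cs.length_wordProd_le _).trans (length_altList i j n).le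

theorem mem_lis_altList (i j : B) (n : ℕ) (t : W) (h : t ∈ cs.leftInvSeq (altList i j n)) :
    ∃ p < n, t = (cs.simple i * cs.simple j) ^ p * cs.simple i := by
  induction n generalizing i j t with
  | zero => simp [altList] at h
  | succ n ih =>
    simp only [altList, leftInvSeq, List.mem_cons, List.mem_map] at h
    rcases h with h | ⟨t', ht', e⟩
    · exact ⟨0, by omega, by simpa using h⟩
    · obtain ⟨p, hp, rfl⟩ := ih _ _ _ ht'
      refine ⟨p + 1, by omega, ?_⟩
      rw [← e, MulAut.conj_apply, inv_simple]
      have : ∀ p : ℕ, cs.simple i * (cs.simple j * cs.simple i) ^ p =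
          (cs.simple i * cs.simple j) ^ p * cs.simple i := by
        intro p
        induction p with
        | zero => simp
        | succ p ih => rw [pow_succ, ← mul_assoc, ih, pow_succ]; simp only [mul_assoc]
      rw [← mul_assoc, this, pow_succ]
      simp only [mul_assoc]

theorem orderOf_mul_swap (a b : W) : orderOf (a * b) = orderOf (b * a) := by
  have : b * a = MulAut.conj b (a * b) := by simp [mul_assoc]
  rw [this]
  exact ((MulAut.conj b).orderOf_eq _).symm

theorem dihedral_factor (x : W) (k : ℕ) (i j : B) (hi : cs.IsLeftDescent x i)
    (hj : cs.IsLeftDescent x j) (hk : k ≤ orderOf (cs.simple i * cs.simple j)) :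
    ∃ u, x = altProd (cs.simple i) (cs.simple j) k * u ∧ cs.length x = k + cs.length u := by
  induction k generalizing i j with
  | zero => exact ⟨x, by simp [altProd], by simp⟩
  | succ k ih =>
    obtain ⟨u, hx, hl⟩ := ih j i hj hi (by rw [orderOf_mul_swap]; omega)
    obtain ⟨U, hU, hu⟩ := cs.exists_isReduced u
    have hxw : x = cs.wordProd (altList j i k ++ U) := by
      rw [wordProd_append, wordProd_altList, ← hu, hx]
    have hm := mem_lis_of_leftDescent cs (altList j i k ++ U) i (hxw ▸ hi)
    rw [lis_append, List.mem_append] at hm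
    rcases hm with hm | hm
    · exfalso
      obtain ⟨p, hp, e⟩ := mem_lis_altList cs _ _ _ _ hm
      have : (cs.simple j * cs.simple i) ^ (p + 1) = 1 := by
        rw [pow_succ, ← mul_assoc, ← e]; simp
      have := orderOf_le_of_pow_eq_one (by omega) this
      rw [orderOf_mul_swap] at this
      omega
    · obtain ⟨t, ht, e⟩ := List.mem_map.mp hm
      have hlt := (cs.isLeftInversion_of_mem_leftInvSeq hU ht).2
      rw [← hu] at hlt
      rw [MulAut.conj_apply, wordProd_altList] at e
      have hx' : x = cs.simple i * (altProd (cs.simple j) (cs.simple i) k * (t * u)) := by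
        have : cs.simple i * x = altProd (cs.simple j) (cs.simple i) k * (t * u) := by
          nth_rewrite 1 [← e]
          rw [hx]; simp only [mul_assoc, inv_mul_cancel_left]
        rw [← this]; simp
      refine ⟨t * u, by rw [altProd, mul_assoc]; exact hx', ?_⟩
      have b1 := cs.length_mul_le (cs.simple i) (altProd (cs.simple j) (cs.simple i) k * (t * u))
      have b2 := cs.length_mul_le (altProd (cs.simple j) (cs.simple i) k) (t * u)
      have b3 := length_altProd_le cs j i k
      have b4 := cs.length_simple i
      rw [← hx'] at b1
      omega

theorem altProd_succ' (x y : W) (n : ℕ) :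
    altProd x y (n + 1) = altProd x y n * (if Even n then x else y) := by
  induction n generalizing x y with
  | zero => simp [altProd]
  | succ n ih =>
    rw [altProd, ih, altProd, mul_assoc]
    congr 2
    by_cases h : Even n <;> simp [h, Nat.even_add_one]

theorem altProd_mul_inv (x y : W) (hx : x * x = 1) (hy : y * y = 1) (n : ℕ) :
    altProd x y n * (altProd y x n)⁻¹ = (x * y) ^ n := by
  have ix : x⁻¹ = x := inv_eq_of_mul_eq_one_left hx
  have iy : y⁻¹ = y := inv_eq_of_mul_eq_one_left hy
  have : ∀ p : ℕ, x * (y * x) ^ p = (x * y) ^ p * x := by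
    intro p
    induction p with
    | zero => simp
    | succ p ih => rw [pow_succ, ← mul_assoc, ih, pow_succ]; simp only [mul_assoc]
  induction n generalizing x y with
  | zero => simp [altProd]
  | succ n ih =>
    have h' : ∀ p : ℕ, y * (x * y) ^ p = (y * x) ^ p * y := by
      intro p
      induction p with
      | zero => simp
      | succ p ih => rw [pow_succ, ← mul_assoc, ih, pow_succ]; simp only [mul_assoc]
    have := ih y x hy hx iy ix h'
    rw [altProd, altProd, mul_inv_rev, iy, mul_assoc, ← mul_assoc (altProd y x n), this,
      ← mul_assoc, ‹∀ p : ℕ, x * (y * x) ^ p = (x * y) ^ p * x›, pow_succ, mul_assoc]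

theorem S_eval_cos (n : ℤ) (θ : ℝ) :
    (Chebyshev.S ℝ n).eval (2 * Real.cos θ) * Real.sin θ = Real.sin ((n + 1) * θ) := by
  rw [← Chebyshev.U_real_cos, ← Chebyshev.S_comp_two_mul_X]
  simp

theorem refl_pow_eq_one {V : Type*} [AddCommGroup V] [Module ℝ V] {x y : V}
    {f g : Module.Dual ℝ V} (hf : f x = 2) (hg : g y = 2) (m : ℕ) (hm : 2 ≤ m)
    (h1 : f y = -2 * Real.cos (Real.pi / m)) (h2 : g x = -2 * Real.cos (Real.pi / m)) :
    (Module.reflection hf * Module.reflection hg) ^ m = 1 := by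
  rcases hm.eq_or_lt with rfl | hm
  · have a : f y = 0 := by rw [h1]; simp
    have b : g x = 0 := by rw [h2]; simp
    ext z
    simp only [pow_two, LinearEquiv.mul_apply, Module.reflection_apply, map_sub, map_smul, hf, hg, a, b,
      LinearEquiv.coe_one, id]
    module
  ext z
  have hθ : (0 : ℝ) < 2 * Real.pi / m := by positivity
  have hs : Real.sin (2 * Real.pi / m) ≠ 0 := by
    apply ne_of_gt
    apply Real.sin_pos_of_pos_of_lt_pi hθ
    rw [div_lt_iff₀ (by positivity)]
    have : (3 : ℝ) ≤ m := by exact_mod_cast hm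
    nlinarith [Real.pi_pos]
  have ht : 2 * Real.cos (2 * Real.pi / m) = f y * g x - 2 := by
    rw [h1, h2, mul_div_assoc, Real.cos_two_mul]; ring
  rw [Module.reflection_mul_reflection_pow_apply hf hg m z _ ht]
  have hm0 : (m : ℝ) ≠ 0 := by positivity
  rcases Nat.even_or_odd' m with ⟨k, hk | hk⟩
  · have S0 : (Chebyshev.S ℝ ((k : ℤ) - 1)).eval (2 * Real.cos (2 * Real.pi / m)) = 0 := by
      have := S_eval_cos ((k : ℤ) - 1) (2 * Real.pi / m)
      have e : (((k : ℤ) - 1 : ℤ) + 1 : ℝ) * (2 * Real.pi / m) = Real.pi := by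
        field_simp; rw [hk]; push_cast; ring
      rw [e, Real.sin_pi] at this
      exact (mul_eq_zero.mp this).resolve_right hs
    have i1 : ((m : ℤ) - 2) / 2 = k - 1 := by omega
    have i2 : ((m : ℤ) - 1) / 2 = k - 1 := by omega
    rw [i1, i2, S0]
    simp
  · have S0 : (Chebyshev.S ℝ (k : ℤ)).eval (2 * Real.cos (2 * Real.pi / m)) +
        (Chebyshev.S ℝ ((k : ℤ) - 1)).eval (2 * Real.cos (2 * Real.pi / m)) = 0 := by
      have a := S_eval_cos ((k : ℤ) - 1) (2 * Real.pi / m)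
      have b := S_eval_cos (k : ℤ) (2 * Real.pi / m)
      have e : (((k : ℤ) - 1 : ℤ) + 1 : ℝ) * (2 * Real.pi / m) =
          2 * Real.pi - ((k : ℤ) + 1 : ℝ) * (2 * Real.pi / m) := by
        field_simp; rw [hk]; push_cast; ring
      rw [e, Real.sin_two_pi_sub] at a
      refine (mul_eq_zero.mp ?_).resolve_right hs
      rw [add_mul, a, b]; ring
    have i1 : ((m : ℤ) - 2) / 2 = k - 1 := by omega
    have i2 : ((m : ℤ) - 1) / 2 = k := by omega
    have i3 : ((m : ℤ) - 3) / 2 = k - 1 := by omega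
    have i4 : (m : ℤ) / 2 = k := by omega
    rw [i1, i2, i3, i4, S0]
    simp

/-- coroots of the geometric representation -/
noncomputable def gcoroot (M : CoxeterMatrix B) (i : B) : Module.Dual ℝ (B →₀ ℝ) :=
  Finsupp.lsum ℝ (fun j => (-2 * Real.cos (Real.pi / M i j)) • LinearMap.id)

theorem gcoroot_single (M : CoxeterMatrix B) (i j : B) :
    gcoroot M i (Finsupp.single j 1) = -2 * Real.cos (Real.pi / M i j) := by
  simp [gcoroot]

theorem gcoroot_self (M : CoxeterMatrix B) (i : B) :
    gcoroot M i (Finsupp.single i 1) = 2 := by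
  simp [gcoroot_single]

theorem refl_liftable (M : CoxeterMatrix B) :
    M.IsLiftable (fun i => Module.reflection (gcoroot_self M i)) := by
  intro i j
  by_cases hij : i = j
  · subst hij
    rw [M.diagonal, pow_one]
    exact LinearEquiv.ext fun z => Module.involutive_reflection (gcoroot_self M i) z
  · rcases Nat.eq_zero_or_pos (M i j) with h0 | h0
    · rw [h0, pow_zero]
    · have := M.off_diagonal i j hij
      exact refl_pow_eq_one (gcoroot_self M i) (gcoroot_self M j) (M i j) (by omega)
        (gcoroot_single M i j) (by rw [gcoroot_single, M.symmetric i j])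

theorem simple_inj' : Function.Injective cs.simple := by
  intro i j h
  by_contra hij
  have h1 := congrArg (cs.lift ⟨_, refl_liftable M⟩) h
  rw [lift_apply_simple, lift_apply_simple] at h1
  have h2 := congrArg (fun φ : (B →₀ ℝ) ≃ₗ[ℝ] (B →₀ ℝ) => φ (Finsupp.single i 1) i) h1
  simp only [Module.reflection_apply_self] at h2
  simp [Module.reflection_apply, hij] at h2
  norm_num at h2
end cox

/-- With the hypotheses of an action of the positive braid monoid
(functors `T w` with `T 1 = 𝟭`, isomorphisms `c_{w,w'}` for length-additive pairs with
associativity on length-additive triples) and transformations `c_s` satisfying condition (1),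
if condition (2) holds for all the rank-2 triples `(w(s₁,s₂), s₁, s'(s₁,s₂))` associated with
ordered pairs of distinct simple reflections — where `m` is the order of `s₁s₂`,
`w(s₁,s₂) = s₂s₁s₂s₁⋯` (`m − 1` factors beginning with `s₂`) and `s'(s₁,s₂) = s₁` if `m` is
even, `s₂` if `m` is odd — then condition (2) holds for every triple `(w, s, s')` with
`s w = w s'` and `ℓ(s w) = ℓ(w) + 1`. -/
theorem stmt_1 {B : Type*} {W : Type*} [Group W] [Finite W]
    {M : CoxeterMatrix B} (cs : CoxeterSystem M W)
    {C : Type*} [Category C]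
    (T : W → C ⥤ C) (hT1 : T 1 = 𝟭 C)
    (c : ∀ w w' : W, cs.length (w * w') = cs.length w + cs.length w' →
      (T w' ⋙ T w ≅ T (w * w')))
    (hassoc : ∀ (w w' w'' : W)
      (h1 : cs.length (w' * w'') = cs.length w' + cs.length w'')
      (h2 : cs.length (w * (w' * w'')) = cs.length w + cs.length (w' * w''))
      (h3 : cs.length (w * w') = cs.length w + cs.length w')
      (h4 : cs.length (w * w' * w'') = cs.length (w * w') + cs.length w'')
      (X : C),
      (T w).map ((c w' w'' h1).hom.app X) ≫ (c w (w' * w'') h2).hom.app X =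
        (c w w' h3).hom.app ((T w'').obj X) ≫ (c (w * w') w'' h4).hom.app X ≫
          eqToHom (by rw [mul_assoc]))
    (d : ∀ i : B, (T (cs.simple i) ⋙ T (cs.simple i) ⟶ 𝟭 C))
    (hd1 : ∀ (i : B) (X : C),
      (T (cs.simple i)).map ((d i).app X) = (d i).app ((T (cs.simple i)).obj X))
    (hrank2 : ∀ i j : B, cs.simple i ≠ cs.simple j →
      Cond2 cs T c d
        (altProd (cs.simple j) (cs.simple i) (orderOf (cs.simple i * cs.simple j) - 1))
        i
        (if Even (orderOf (cs.simple i * cs.simple j)) then i else j)) :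
    ∀ (w : W) (i i' : B), cs.simple i * w = w * cs.simple i' →
      cs.length (cs.simple i * w) = cs.length w + 1 →
      Cond2 cs T c d w i i' := by
  intro w
  induction hn : cs.length w using Nat.strong_induction_on generalizing w with
  | _ n ih =>
  subst hn
  intro i i' heq hlen
  by_cases hw1 : w = 1
  · subst hw1
    have : i = i' := simple_inj' cs (by simpa using heq)
    subst this
    exact cond2_one cs T c d hT1 hassoc i
  obtain ⟨j, hj⟩ := cs.exists_leftDescent_of_ne_one hw1
  have hij : cs.simple i ≠ cs.simple j := by
    intro h
    have hj' : cs.length (cs.simple j * w) < cs.length w := hj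
    rw [← h] at hj'
    omega
  set x := cs.simple i * w with hx
  have hxi : cs.IsLeftDescent x i := by
    show cs.length (cs.simple i * x) < cs.length x
    rw [hx, cs.simple_mul_simple_cancel_left, ← hx]
    omega
  have hxj : cs.IsLeftDescent x j := by
    show cs.length (cs.simple j * x) < cs.length x
    have hj' : cs.length (cs.simple j * w) < cs.length w := hj
    have := cs.length_mul_le (cs.simple j * w) (cs.simple i')
    rw [mul_assoc, ← heq, cs.length_simple] at this
    omega
  set m := orderOf (cs.simple i * cs.simple j) with hm
  have hmpos : 0 < m := orderOf_pos _
  have hm1 : m ≠ 1 := by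
    intro h
    rw [hm, orderOf_eq_one_iff] at h
    apply hij
    have := eq_inv_of_mul_eq_one_left h
    rwa [cs.inv_simple] at this
  obtain ⟨u, hxu, hlu⟩ := dihedral_factor cs x m i j hxi hxj le_rfl
  obtain ⟨p, hp⟩ : ∃ p, m = p + 1 := ⟨m - 1, by omega⟩
  have hp' : m - 1 = p := by omega
  have H := hrank2 i j hij
  rw [← hm, hp'] at H
  set v := altProd (cs.simple j) (cs.simple i) p with hv
  set k := (if Even m then i else j) with hk
  have hwv : w = v * u := by
    rw [hp, altProd, mul_assoc, hx] at hxu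
    exact mul_left_cancel hxu
  have hvk : cs.simple i * v = v * cs.simple k := by
    have h1 := altProd_mul_inv (cs.simple i) (cs.simple j) (by simp) (by simp) m
    rw [hm, pow_orderOf_eq_one, ← hm, mul_inv_eq_one, hp, altProd, altProd_succ'] at h1
    rw [hv, h1, hk, hp]
    congr 1
    by_cases he : Even p <;> simp [he, Nat.even_add_one]
  have huk : cs.simple k * u = u * cs.simple i' := by
    apply mul_left_cancel (a := v)
    rw [← mul_assoc, ← hvk, ← mul_assoc, ← hwv, ← heq, hx, hwv, mul_assoc]
  have b1 := length_altProd_le cs j i p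
  rw [← hv] at b1
  have b2 := cs.length_mul_le v u
  rw [← hwv] at b2
  have b3 : x = v * (cs.simple k * u) := by
    rw [← mul_assoc, ← hvk, mul_assoc, ← hwv]
  have b4 := cs.length_mul_le v (cs.simple k * u)
  rw [← b3] at b4
  have b5 := cs.length_mul_le (cs.simple k) u
  rw [cs.length_simple] at b5
  have Hu : Cond2 cs T c d u k i' :=
    ih (cs.length u) (by omega) u rfl k i' huk (by omega)
  rw [hwv]
  refine cond2_comp cs T c d hassoc v u i k i' hvk huk ?_ H Hu
  rw [← hwv, ← heq]
  omega
end

section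
/- Let (W,S) be a finite Coxeter system with length function ℓ. Assume sw = ws' where w ∈ W, s, s' ∈ S, ℓ(sw) = ℓ(w) + 1 and w ≠ 1. Then there exists s₂ ∈ S with s₂ ≠ s such that, letting m be the order of s·s₂ in W and v ∈ W the alternating product s₂ s s₂ s ⋯ with m − 1 factors beginning with s₂, one has ℓ(w) = ℓ(v) + ℓ(v⁻¹ w). -/
namespace CoxAux

open CoxeterSystem List

variable {B : Type*} {W : Type*} [Group W] {M : CoxeterMatrix B} (cs : CoxeterSystem M W)

open Classical in
/-- The action of a simple reflection on signed elements. -/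
noncomputable def act (s : W) : Function.End (W × ZMod 2) :=
  fun p => (s * p.1 * s, p.2 + if p.1 = s then 1 else 0)

open Classical in
theorem act_pow (a b : W) (ha : a * a = 1) (hb : b * b = 1) (n : ℕ) (p : W × ZMod 2) :
    ((act a * act b) ^ n) p = ((a * b) ^ n * p.1 * ((a * b) ^ n)⁻¹,
      p.2 + ∑ q ∈ Finset.range (2 * n), if p.1 = b * (a * b) ^ q then 1 else 0) := by
  have ha' : a⁻¹ = a := inv_eq_of_mul_eq_one_left ha
  have hb' : b⁻¹ = b := inv_eq_of_mul_eq_one_left hb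
  have hr : ∀ n : ℕ, ((a * b) ^ n)⁻¹ * b = b * (a * b) ^ n := by
    intro n
    induction n with
    | zero => simp
    | succ n ih =>
      rw [pow_succ' (a * b), mul_inv_rev, mul_assoc]
      have : (a * b)⁻¹ * b = b * (a * b) := by
        rw [mul_inv_rev, ha', hb', mul_assoc]
      rw [this, ← mul_assoc, ih, mul_assoc, ← pow_succ, ← pow_succ']
  induction n with
  | zero =>
    simp only [pow_zero, one_mul, inv_one, mul_one, mul_zero, Finset.range_zero,
      Finset.sum_empty, add_zero]
    rfl
  | succ n ih =>
    rw [pow_succ' (act a * act b)]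
    have hstep : (act a * act b * (act a * act b) ^ n) p
        = act a (act b (((act a * act b) ^ n) p)) := rfl
    rw [hstep, ih]
    clear hstep ih
    have e1 : ((a * b) ^ n * p.1 * ((a * b) ^ n)⁻¹ = b) ↔ p.1 = b * (a * b) ^ (2 * n) := by
      rw [two_mul, pow_add, ← mul_assoc, ← hr n]
      generalize (a * b) ^ n = c
      constructor
      · intro h; rw [← h]; simp only [mul_assoc, inv_mul_cancel_left, inv_mul_cancel, mul_one]
      · intro h; rw [h]; group
    have e2 : (b * ((a * b) ^ n * p.1 * ((a * b) ^ n)⁻¹) * b = a) ↔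
        p.1 = b * (a * b) ^ (2 * n + 1) := by
      have : b * (a * b) ^ (2 * n + 1) = ((a * b) ^ n)⁻¹ * (b * a * b) * (a * b) ^ n := by
        rw [← mul_assoc, ← mul_assoc, hr n, two_mul, add_assoc, pow_add, pow_succ']
        simp only [mul_assoc]
      rw [this]
      generalize (a * b) ^ n = c
      constructor
      · intro h; rw [← h]
        have h2 : b * (b * (c * p.1 * (c)⁻¹) * b) * b
          = (b * b) * (c * p.1 * (c)⁻¹) * (b * b) := by group
        rw [h2, hb]; group
      · intro h; rw [h]
        have h2 : b * (c * ((c)⁻¹ * (b * a * b) * c) *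
          (c)⁻¹) * b = (b * b) * a * (b * b) := by group
        rw [h2, hb]; group
    refine Prod.ext ?_ ?_
    · change a * (b * ((a * b) ^ n * p.1 * ((a * b) ^ n)⁻¹) * b) * a = _
      simp only [pow_succ' (a * b) n, mul_inv_rev, ha', hb', mul_assoc]
    · change (p.2 + ∑ q ∈ Finset.range (2 * n), if p.1 = b * (a * b) ^ q then 1 else 0)
        + (if (a * b) ^ n * p.1 * ((a * b) ^ n)⁻¹ = b then 1 else 0)
        + (if b * ((a * b) ^ n * p.1 * ((a * b) ^ n)⁻¹) * b = a then 1 else 0) = _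
      rw [if_congr e1 rfl rfl, if_congr e2 rfl rfl]
      rw [show 2 * (n + 1) = 2 * n + 1 + 1 by ring, Finset.sum_range_succ, Finset.sum_range_succ]; simp only [add_assoc]

theorem act_liftable : M.IsLiftable (fun i => act (cs.simple i)) := by
  classical
  intro i j
  funext p
  rw [act_pow _ _ (cs.simple_mul_simple_self i) (cs.simple_mul_simple_self j)]
  have h := cs.simple_mul_simple_pow i j
  rw [two_mul, Finset.sum_range_add]
  simp only [pow_add, h, one_mul]
  have : ∀ x : ZMod 2, x + x = 0 := by decide
  rw [this]
  simp only [inv_one, mul_one, add_zero]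
  rfl

/-- The lifted action. -/
noncomputable def phi : W →* Function.End (W × ZMod 2) := cs.lift ⟨_, act_liftable cs⟩

open Classical in
theorem phi_word (ω : List B) (t : W) (e : ZMod 2) :
    (phi cs (cs.wordProd ω)⁻¹ (t, e)).2 = e + (count t (cs.leftInvSeq ω) : ℕ) := by
  induction ω generalizing t e with
  | nil =>
    simp only [wordProd_nil, inv_one, map_one, leftInvSeq_nil, count_nil, Nat.cast_zero, add_zero]
    rfl
  | cons i ω ih =>
    rw [wordProd_cons, mul_inv_rev, map_mul, inv_simple]
    change (phi cs (cs.wordProd ω)⁻¹ (phi cs (cs.simple i) (t, e))).2 = _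
    have : phi cs (cs.simple i) = act (cs.simple i) := cs.lift_apply_simple (act_liftable cs) i
    rw [this]
    simp only [act]
    rw [ih]
    have hc : count t (map (MulAut.conj (cs.simple i)) (cs.leftInvSeq ω))
        = count (cs.simple i * t * cs.simple i) (cs.leftInvSeq ω) := by
      have h := count_map_of_injective (cs.leftInvSeq ω) (MulAut.conj (cs.simple i))
        (MulAut.conj (cs.simple i)).injective (cs.simple i * t * cs.simple i)
      rw [← h]
      congr 1
      simp [mul_assoc]
    rw [leftInvSeq, count_cons, hc]
    push_cast
    by_cases h : t = cs.simple i
    · simp [h]; ring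
    · have h' : ¬ cs.simple i = t := fun q => h q.symm
      simp [h, h']

/-- Exchange property. -/
theorem mem_lis (ω : List B) (j : B) (h : cs.IsLeftDescent (cs.wordProd ω) j) :
    cs.simple j ∈ cs.leftInvSeq ω := by
  classical
  obtain ⟨ω', hr, hω'⟩ := cs.exists_isReduced (cs.simple j * cs.wordProd ω)
  have hp : cs.wordProd (j :: ω') = cs.wordProd ω := by
    rw [wordProd_cons, ← hω']; simp
  have hred : cs.IsReduced (j :: ω') := by
    unfold CoxeterSystem.IsReduced
    rw [hp, length_cons, ← hr.eq, ← hω']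
    exact ((cs.isLeftDescent_iff).1 h).symm
  have hc : count (cs.simple j) (cs.leftInvSeq (j :: ω')) = 1 :=
    count_eq_one_of_mem (hred.nodup_leftInvSeq) (by simp [leftInvSeq])
  have h1 := phi_word cs (j :: ω') (cs.simple j) 0
  have h2 := phi_word cs ω (cs.simple j) 0
  rw [hp, h2, hc] at h1
  by_contra hn
  rw [count_eq_zero_of_not_mem hn] at h1
  simp at h1

theorem lis_append (ω ω' : List B) (t : W) (h : t ∈ cs.leftInvSeq (ω ++ ω')) :
    t ∈ cs.leftInvSeq ω ∨ ∃ ω'' : List B, ω''.length + 1 = ω'.length ∧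
      t * cs.wordProd (ω ++ ω') = cs.wordProd ω * cs.wordProd ω'' := by
  obtain ⟨p, hp, rfl⟩ := List.mem_iff_getElem.1 h
  have hg := cs.getD_leftInvSeq_mul_wordProd (ω ++ ω') p
  rw [List.getD_eq_getElem _ _ hp] at hg
  have hp' : p < ω.length + ω'.length := by simpa using hp
  by_cases hk : p < ω.length
  · left
    have := cs.leftInvSeq_take (ω ++ ω') ω.length
    rw [take_left] at this
    rw [this, List.mem_iff_getElem]
    exact ⟨p, by simp; omega, by simp⟩
  · right
    refine ⟨ω'.eraseIdx (p - ω.length), ?_, ?_⟩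
    · rw [length_eraseIdx_of_lt (by omega)]; omega
    · rw [hg, eraseIdx_append_of_length_le (by omega), wordProd_append]

/-- alternating word beginning with `i`. -/
def altL (i j : B) : ℕ → List B
  | 0 => []
  | n + 1 => i :: altL j i n

theorem length_altL (i j : B) (n : ℕ) : (altL i j n).length = n := by
  induction n generalizing i j with
  | zero => rfl
  | succ n ih => simp [altL, ih]

theorem prod_altL (i j : B) (n : ℕ) :
    cs.wordProd (altL i j n) = altProd (cs.simple i) (cs.simple j) n := by
  induction n generalizing i j with
  | zero => simp [altL, altProd]
  | succ n ih => simp [altL, altProd, ih, wordProd_cons]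

theorem lis_altL (i j : B) (n : ℕ) (t : W) (h : t ∈ cs.leftInvSeq (altL i j n)) :
    ∃ p < n, t = (cs.simple i * cs.simple j) ^ p * cs.simple i := by
  induction n generalizing i j t with
  | zero => simp [altL] at h
  | succ n ih =>
    rw [altL, leftInvSeq, mem_cons, mem_map] at h
    rcases h with rfl | ⟨x, hx, rfl⟩
    · exact ⟨0, by omega, by simp⟩
    · obtain ⟨p, hp, rfl⟩ := ih j i x hx
      refine ⟨p + 1, by omega, ?_⟩
      have : ∀ (a b : W) (p : ℕ), a * (b * a) ^ p = (a * b) ^ p * a := by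
        intro a b p
        induction p with
        | zero => simp
        | succ p ih => rw [pow_succ', pow_succ', mul_assoc (a * b), ← ih]; simp only [mul_assoc]
      rw [MulAut.conj_apply, inv_simple, ← mul_assoc, this, pow_succ]
      simp only [mul_assoc]

theorem dihedral (u : W) (k : ℕ) (i j : B) (hi : cs.IsLeftDescent u i)
    (hj : cs.IsLeftDescent u j) (hk : k ≤ orderOf (cs.simple i * cs.simple j)) :
    ∃ ω : List B, u = altProd (cs.simple i) (cs.simple j) k * cs.wordProd ω ∧
      k + ω.length ≤ cs.length u := by
  induction k generalizing i j with
  | zero =>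
    obtain ⟨ω, hr, h⟩ := cs.exists_isReduced u
    refine ⟨ω, by simp [altProd, h], ?_⟩
    rw [h, hr.eq]; omega
  | succ k ih =>
    have ho : orderOf (cs.simple j * cs.simple i) = orderOf (cs.simple i * cs.simple j) := by
      rw [← orderOf_inv, mul_inv_rev, inv_simple, inv_simple]
    obtain ⟨ω, h, hl⟩ := ih j i hj hi (by omega)
    rw [← prod_altL, ← wordProd_append] at h
    have hm := mem_lis cs _ i (h ▸ hi)
    rcases lis_append cs _ _ _ hm with hm | ⟨ω'', h1, h2⟩
    · obtain ⟨p, hp, hq⟩ := lis_altL cs _ _ _ _ hm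
      have : (cs.simple j * cs.simple i) ^ (p + 1) = 1 := by
        rw [pow_succ, ← mul_assoc, ← hq]; simp
      have := Nat.le_of_dvd (by omega) (orderOf_dvd_of_pow_eq_one this)
      omega
    · refine ⟨ω'', ?_, by omega⟩
      rw [altProd, mul_assoc, ← prod_altL, ← h2, ← h]; simp

end CoxAux

/-- Let `(W,S)` be a finite Coxeter system. If `s w = w s'` with `s, s' ∈ S`,
`ℓ(s w) = ℓ(w) + 1` and `w ≠ 1`, then there is `s₂ ∈ S`, `s₂ ≠ s`, such that, with `m` the
order of `s s₂` and `v = s₂ s s₂ s ⋯` the alternating product with `m − 1` factors beginning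
with `s₂`, one has `ℓ(w) = ℓ(v) + ℓ(v⁻¹ w)`. -/
theorem stmt_2 {B : Type*} {W : Type*} [Group W] [Finite W]
    {M : CoxeterMatrix B} (cs : CoxeterSystem M W)
    (w : W) (i i' : B)
    (heq : cs.simple i * w = w * cs.simple i')
    (hlen : cs.length (cs.simple i * w) = cs.length w + 1)
    (hw : w ≠ 1) :
    ∃ j : B, cs.simple j ≠ cs.simple i ∧
      cs.length w =
        cs.length
          (altProd (cs.simple j) (cs.simple i) (orderOf (cs.simple i * cs.simple j) - 1)) +
        cs.length
          ((altProd (cs.simple j) (cs.simple i)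
            (orderOf (cs.simple i * cs.simple j) - 1))⁻¹ * w) := by
  obtain ⟨j, hj⟩ := cs.exists_leftDescent_of_ne_one hw
  have hj' : cs.length (cs.simple j * w) < cs.length w := hj
  refine ⟨j, fun h => ?_, ?_⟩
  · rw [h] at hj'; omega
  have hui : cs.IsLeftDescent (cs.simple i * w) i := by
    unfold CoxeterSystem.IsLeftDescent
    rw [hlen]; simp
  have huj : cs.IsLeftDescent (cs.simple i * w) j := by
    unfold CoxeterSystem.IsLeftDescent
    rw [hlen, heq, ← mul_assoc]
    have := cs.length_mul_le (cs.simple j * w) (cs.simple i')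
    rw [cs.length_simple] at this
    omega
  obtain ⟨ω, h1, h2⟩ := CoxAux.dihedral cs _ _ i j hui huj le_rfl
  have hpos := orderOf_pos (cs.simple i * cs.simple j)
  obtain ⟨n, hn⟩ := Nat.exists_eq_succ_of_ne_zero hpos.ne'
  rw [hn] at h1 h2 ⊢
  simp only [Nat.succ_eq_add_one, Nat.add_sub_cancel] at h1 h2 ⊢
  rw [altProd, mul_assoc] at h1
  have h3 := mul_left_cancel h1
  set v := altProd (cs.simple j) (cs.simple i) n with hv
  have h4 : v⁻¹ * w = cs.wordProd ω := by rw [h3]; simp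
  have h5 : cs.length v ≤ n := by
    rw [hv, ← CoxAux.prod_altL]
    exact (cs.length_wordProd_le _).trans (CoxAux.length_altL _ _ _).le
  have h6 := cs.length_mul_le v (v⁻¹ * w)
  rw [mul_inv_cancel_left] at h6
  have h7 := cs.length_wordProd_le ω
  rw [← h4] at h7
  omega
end

section
/- Let 𝒞 and 𝒟 be abelian categories and let j^* : 𝒞 ⥤ 𝒟 be an exact functor admitting a left adjoint j_! : 𝒟 ⥤ 𝒞 and a right adjoint j_* : 𝒟 ⥤ 𝒞. Assume that the unit id_𝒟 ⟶ j^* ∘ j_! of the adjunction j_! ⊣ j^* is an isomorphism and that the counit j^* ∘ j_* ⟶ id_𝒟 of the adjunction j^* ⊣ j_* is an isomorphism. Then for every simple object A of 𝒞, the object j^*A of 𝒟 is either zero or simple. -/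
open CategoryTheory CategoryTheory.Limits

/-- Let `𝒞` and `𝒟` be abelian categories and `j^* : 𝒞 ⥤ 𝒟` an exact functor
admitting a left adjoint `j_!` and a right adjoint `j_*`. If the unit of `j_! ⊣ j^*` and the
counit of `j^* ⊣ j_*` are isomorphisms, then for every simple object `A` of `𝒞`, the object
`j^* A` is either zero or simple. -/
theorem stmt_3 {C : Type*} [Category C] [Abelian C] {D : Type*} [Category D] [Abelian D]
    (jstar : C ⥤ D) [PreservesFiniteLimits jstar] [PreservesFiniteColimits jstar]
    (jshriek jlower : D ⥤ C) (adj₁ : jshriek ⊣ jstar) (adj₂ : jstar ⊣ jlower)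
    [IsIso adj₁.unit] [IsIso adj₂.counit]
    (A : C) [Simple A] :
    IsZero (jstar.obj A) ∨ Simple (jstar.obj A) := by
  by_cases hz : IsZero (jstar.obj A)
  · exact Or.inl hz
  right
  refine ⟨fun {Y} f _ => ⟨?_, ?_⟩⟩
  · intro hf h0
    apply hz
    rw [IsZero.iff_id_eq_zero, ← IsIso.inv_hom_id f]
    simp [h0]
  · intro hf
    have hu : adj₁.unit.app Y ≫ jstar.map ((adj₁.homEquiv Y A).symm f) = f := by
      exact (adj₁.homEquiv_unit (f := (adj₁.homEquiv Y A).symm f)).symm.trans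
        ((adj₁.homEquiv Y A).apply_symm_apply f)
    have hg : (adj₁.homEquiv Y A).symm f ≠ 0 := by
      intro h
      apply hf
      rw [← hu, h, Functor.map_zero, comp_zero]
    have : Epi ((adj₁.homEquiv Y A).symm f) := epi_of_nonzero_to_simple hg
    have : Epi f := by
      rw [← hu]
      exact epi_comp _ _
    exact isIso_of_mono_of_epi f
end

section
/- Let 𝒞 and 𝒟 be abelian categories and let j^* : 𝒞 ⥤ 𝒟 be an exact functor admitting a left adjoint j_! : 𝒟 ⥤ 𝒞 and a right adjoint j_* : 𝒟 ⥤ 𝒞. Assume that the unit id_𝒟 ⟶ j^* ∘ j_! of the adjunction j_! ⊣ j^* is an isomorphism and that the counit j^* ∘ j_* ⟶ id_𝒟 of the adjunction j^* ⊣ j_* is an isomorphism. Let A be a simple object of 𝒞 such that j^*A is not a zero object. Then the counit morphism ε_A : j_!(j^*A) → A (of the adjunction j_! ⊣ j^*) is an epimorphism, the unit morphism η_A : A → j_*(j^*A) (of the adjunction j^* ⊣ j_*) is a monomorphism, and A is isomorphic to the image of the composite η_A ∘ ε_A : j_!(j^*A) → j_*(j^*A). Consequently, if A and A' are simple objects of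 𝒞 with j^*A ≅ j^*A' and j^*A nonzero, then A ≅ A'; i.e., a simple object of 𝒞 is determined up to isomorphism by its nonzero restriction to 𝒟. -/
open CategoryTheory CategoryTheory.Limits

/-- In the gluing situation (exact `j^*` with left adjoint `j_!`, right adjoint
`j_*`, unit of `j_! ⊣ j^*` and counit of `j^* ⊣ j_*` isomorphisms), if `A` is simple with
`j^* A ≠ 0`, then the counit `j_!(j^*A) → A` is epi, the unit `A → j_*(j^*A)` is mono,
`A` is isomorphic to the image of their composite, and any simple `A'` with
`j^*A ≅ j^*A'` satisfies `A ≅ A'`. -/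
theorem stmt_4 {C : Type*} [Category C] [Abelian C] {D : Type*} [Category D] [Abelian D]
    (jstar : C ⥤ D) [PreservesFiniteLimits jstar] [PreservesFiniteColimits jstar]
    (jshriek jlower : D ⥤ C) (adj₁ : jshriek ⊣ jstar) (adj₂ : jstar ⊣ jlower)
    [IsIso adj₁.unit] [IsIso adj₂.counit]
    (A : C) [Simple A] (hA : ¬ IsZero (jstar.obj A)) :
    Epi (adj₁.counit.app A) ∧ Mono (adj₂.unit.app A) ∧
    Nonempty (A ≅ image (adj₁.counit.app A ≫ adj₂.unit.app A)) ∧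
    ∀ (A' : C), Simple A' → (jstar.obj A ≅ jstar.obj A') → Nonempty (A ≅ A') := by
  have key1 : ∀ (B : C), Simple B → ¬ IsZero (jstar.obj B) → Epi (adj₁.counit.app B) := by
    intro B hS hB
    have : Simple ((𝟭 C).obj B) := hS
    apply epi_of_nonzero_to_simple
    intro h
    apply hB
    rw [IsZero.iff_id_eq_zero, ← adj₁.right_triangle_components B, h, Functor.map_zero, comp_zero]
  have key2 : ∀ (B : C), Simple B → ¬ IsZero (jstar.obj B) → Mono (adj₂.unit.app B) := by
    intro B hS hB
    have : Simple ((𝟭 C).obj B) := hS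
    apply mono_of_nonzero_from_simple
    intro h
    apply hB
    rw [IsZero.iff_id_eq_zero, ← adj₂.left_triangle_components B, h, Functor.map_zero, zero_comp]
  have e1 := key1 A inferInstance hA
  have m1 := key2 A inferInstance hA
  refine ⟨e1, m1, ⟨?_⟩, ?_⟩
  · haveI : StrongEpi (adj₁.counit.app A) := strongEpi_of_epi _
    exact image.isoStrongEpiMono (adj₁.counit.app A) (adj₂.unit.app A) rfl
  · intro A' hA' φ
    have hA'0 : ¬ IsZero (jstar.obj A') := fun h => hA (h.of_iso φ)
    have e2 := key1 A' hA' hA'0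
    have m2 := key2 A' hA' hA'0
    have : StrongEpi (adj₁.counit.app A) := strongEpi_of_epi _
    have sq : CommSq (jshriek.map φ.hom ≫ adj₁.counit.app A') (adj₁.counit.app A)
        (adj₂.unit.app A') (adj₂.unit.app A ≫ jlower.map φ.hom) := by
      constructor
      apply (adj₂.homEquiv _ _).symm.injective
      rw [← cancel_epi (adj₁.unit.app (jstar.obj A))]
      simp [Adjunction.homEquiv_counit]
    have h1 : Epi sq.lift := by
      have : Epi (adj₁.counit.app A ≫ sq.lift) := by
        rw [sq.fac_left]; infer_instance
      exact epi_of_epi (adj₁.counit.app A) sq.lift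
    have h2 : Mono sq.lift := by
      have : Mono (sq.lift ≫ adj₂.unit.app A') := by
        rw [sq.fac_right]; infer_instance
      exact mono_of_mono sq.lift (adj₂.unit.app A')
    have := isIso_of_mono_of_epi sq.lift
    exact ⟨asIso sq.lift⟩
end

section
/- Let (W,S) be a finite Coxeter system with length function ℓ, let s_i ∈ S, and let P_i = {w ∈ W : ℓ(w s_i) = ℓ(w) + 1}. Let J ⊆ S, let W_J be the standard parabolic subgroup of W generated by J, and let y ∈ P_i. Then W_J · y ⊆ P_i if and only if y s_i y⁻¹ ∉ W_J. -/
open Classical in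
/-- One step of the signed permutation action. -/
noncomputable def sgnStep {W : Type*} [Group W] (a : W) (ha : a * a = 1) :
    Equiv.Perm (W × ZMod 2) where
  toFun p := (a * p.1 * a, p.2 + if p.1 = a then 1 else 0)
  invFun p := (a * p.1 * a, p.2 + if p.1 = a then 1 else 0)
  left_inv := by
    rintro ⟨t, e⟩
    have h1 : a * (a * t * a) * a = t := by
      calc a * (a * t * a) * a = (a * a) * t * (a * a) := by group
        _ = t := by rw [ha]; simp
    have h2 : (a * t * a = a) ↔ t = a := by
      constructor
      · intro h; rw [h] at h1; rw [← h1, ha, one_mul]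
      · rintro rfl; rw [ha, one_mul]
    simp only [h1, h2]
    rw [add_assoc, CharTwo.add_self_eq_zero, add_zero]
  right_inv := by
    rintro ⟨t, e⟩
    have h1 : a * (a * t * a) * a = t := by
      calc a * (a * t * a) * a = (a * a) * t * (a * a) := by group
        _ = t := by rw [ha]; simp
    have h2 : (a * t * a = a) ↔ t = a := by
      constructor
      · intro h; rw [h] at h1; rw [← h1, ha, one_mul]
      · rintro rfl; rw [ha, one_mul]
    simp only [h1, h2]
    rw [add_assoc, CharTwo.add_self_eq_zero, add_zero]

open Classical in
theorem sgnStep_apply {W : Type*} [Group W] (a : W) (ha : a * a = 1) (t : W) (e : ZMod 2) :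
    sgnStep a ha (t, e) = (a * t * a, e + if t = a then 1 else 0) := rfl

theorem conj_pow_aux {W : Type*} [Group W] (a b : W) (ha : a * a = 1) (hb : b * b = 1) (k : ℕ) :
    b * (a * b) ^ k = ((a * b) ^ k)⁻¹ * b := by
  have ha' : a⁻¹ = a := inv_eq_of_mul_eq_one_left ha
  have hb' : b⁻¹ = b := inv_eq_of_mul_eq_one_left hb
  have h : SemiconjBy b (a * b) (a * b)⁻¹ := by
    unfold SemiconjBy
    rw [mul_inv_rev, ha', hb', mul_assoc]
  have := h.pow_right k
  rw [inv_pow] at this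
  exact this

open Classical in
theorem sgnStep_pow {W : Type*} [Group W] (a b : W) (ha : a * a = 1) (hb : b * b = 1)
    (k : ℕ) (t : W) (e : ZMod 2) :
    ((sgnStep a ha * sgnStep b hb) ^ k) (t, e) =
      ((a * b) ^ k * t * ((a * b) ^ k)⁻¹,
        e + ∑ c ∈ Finset.range (2 * k), if t = b * (a * b) ^ c then 1 else 0) := by
  have ha' : a⁻¹ = a := inv_eq_of_mul_eq_one_left ha
  have hb' : b⁻¹ = b := inv_eq_of_mul_eq_one_left hb
  induction k with
  | zero => simp
  | succ k ih =>
    rw [pow_succ', Equiv.Perm.mul_apply, ih, Equiv.Perm.mul_apply, sgnStep_apply, sgnStep_apply]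
    have e1 : ((a * b) ^ k * t * ((a * b) ^ k)⁻¹ = b) ↔ t = b * (a * b) ^ (2 * k) := by
      rw [mul_inv_eq_iff_eq_mul, ← eq_inv_mul_iff_mul_eq, ← mul_assoc, ← conj_pow_aux a b ha hb,
        mul_assoc, ← pow_add, two_mul]
    have e2 : (b * ((a * b) ^ k * t * ((a * b) ^ k)⁻¹) * b = a) ↔
        t = b * (a * b) ^ (2 * k + 1) := by
      have : b * (a * b) ^ (2 * k + 1) = ((a * b) ^ k)⁻¹ * (b * a * b) * (a * b) ^ k := by
        have h3 : 2 * k + 1 = k + (1 + k) := by ring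
        rw [h3, pow_add, ← mul_assoc, conj_pow_aux a b ha hb, pow_add, pow_one]
        simp only [mul_assoc]
      rw [this]
      constructor
      · intro h
        have : t = ((a * b) ^ k)⁻¹ * (b⁻¹ * (b * ((a * b) ^ k * t * ((a * b) ^ k)⁻¹) * b) * b⁻¹) * (a * b) ^ k := by
          group
        rw [h, hb'] at this
        exact this
      · intro h
        rw [h]
        have : b * ((a * b) ^ k * (((a * b) ^ k)⁻¹ * (b * a * b) * (a * b) ^ k) * ((a * b) ^ k)⁻¹) * b
          = (b * b) * a * (b * b) := by group
        rw [this, hb]; simp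
    simp only [e1, e2]
    have h4 : 2 * (k + 1) = 2 * k + 1 + 1 := by ring
    rw [h4, Finset.sum_range_succ, Finset.sum_range_succ]
    refine Prod.ext ?_ ?_
    · simp only [pow_succ' (a * b) k, mul_inv_rev, ha', hb', mul_assoc]
    · simp only [add_assoc]

theorem sgnStep_liftable {B : Type*} {W : Type*} [Group W] {M : CoxeterMatrix B}
    (cs : CoxeterSystem M W) :
    M.IsLiftable (fun i => sgnStep (cs.simple i) (cs.simple_mul_simple_self i)) := by
  classical
  intro i j
  ext1 ⟨t, e⟩
  rw [sgnStep_pow, cs.simple_mul_simple_pow, two_mul, Finset.sum_range_add]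
  simp only [pow_add, cs.simple_mul_simple_pow, one_mul]
  rw [CharTwo.add_self_eq_zero]
  simp

/-- The signed permutation representation. -/
noncomputable def sgnRep {B : Type*} {W : Type*} [Group W] {M : CoxeterMatrix B}
    (cs : CoxeterSystem M W) : W →* Equiv.Perm (W × ZMod 2) :=
  cs.lift ⟨_, sgnStep_liftable cs⟩

theorem sgnRep_simple {B : Type*} {W : Type*} [Group W] {M : CoxeterMatrix B}
    (cs : CoxeterSystem M W) (i : B) :
    sgnRep cs (cs.simple i) = sgnStep (cs.simple i) (cs.simple_mul_simple_self i) :=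
  cs.lift_apply_simple (sgnStep_liftable cs) i

/-- Parity of the multiplicity of `t` in a left inversion sequence of `w`. -/
noncomputable def invPar {B : Type*} {W : Type*} [Group W] {M : CoxeterMatrix B}
    (cs : CoxeterSystem M W) (w t : W) : ZMod 2 := (sgnRep cs w⁻¹ (t, 0)).2

open Classical in
theorem sgnRep_word {B : Type*} {W : Type*} [Group W] {M : CoxeterMatrix B}
    (cs : CoxeterSystem M W) (ω : List B) (t : W) (e : ZMod 2) :
    (sgnRep cs (cs.wordProd ω)⁻¹ (t, e)).2 = e + ((cs.leftInvSeq ω).count t : ZMod 2) := by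
  induction ω generalizing t e with
  | nil => simp
  | cons i ω ih =>
    rw [cs.wordProd_cons, mul_inv_rev, map_mul, cs.inv_simple, Equiv.Perm.mul_apply,
      sgnRep_simple, sgnStep_apply, ih]
    have h : t = MulAut.conj (cs.simple i) (cs.simple i * t * cs.simple i) := by
      simp [mul_assoc]
    rw [CoxeterSystem.leftInvSeq, List.count_cons]
    nth_rewrite 4 [h]
    rw [List.count_map_of_injective _ _ (MulAut.conj (cs.simple i)).injective]
    simp only [beq_iff_eq, eq_comm (a := t)]
    push_cast
    ring

open Classical in
theorem invPar_word {B : Type*} {W : Type*} [Group W] {M : CoxeterMatrix B}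
    (cs : CoxeterSystem M W) (ω : List B) (t : W) :
    invPar cs (cs.wordProd ω) t = ((cs.leftInvSeq ω).count t : ZMod 2) := by
  rw [invPar, sgnRep_word, zero_add]

theorem invPar_up {B : Type*} {W : Type*} [Group W] {M : CoxeterMatrix B}
    (cs : CoxeterSystem M W) (w : W) (i : B)
    (h : cs.length (w * cs.simple i) = cs.length w + 1) :
    invPar cs w (w * cs.simple i * w⁻¹) = 0 := by
  classical
  obtain ⟨ω, hω, rfl⟩ := cs.exists_isReduced w
  have hr : cs.IsReduced (ω.concat i) := by
    rw [CoxeterSystem.IsReduced, cs.wordProd_concat, h, hω.eq]; simp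
  have hn := hr.nodup_leftInvSeq
  rw [cs.leftInvSeq_concat, List.concat_eq_append, List.nodup_append] at hn
  rw [invPar_word, List.count_eq_zero_of_not_mem]
  · simp
  · intro hm
    exact hn.2.2 _ hm _ (by simp) rfl

open Classical in
theorem invPar_mul_simple {B : Type*} {W : Type*} [Group W] {M : CoxeterMatrix B}
    (cs : CoxeterSystem M W) (w t : W) (i : B) :
    invPar cs (w * cs.simple i) t = invPar cs w t + if w * cs.simple i * w⁻¹ = t then 1 else 0 := by
  obtain ⟨ω, hω, rfl⟩ := cs.exists_isReduced w
  rw [← cs.wordProd_concat, invPar_word, invPar_word, cs.wordProd_concat, cs.leftInvSeq_concat,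
    List.concat_eq_append, List.count_append, List.count_singleton]
  simp only [beq_iff_eq]
  push_cast
  rfl

open Classical in
theorem invPar_simple_mul {B : Type*} {W : Type*} [Group W] {M : CoxeterMatrix B}
    (cs : CoxeterSystem M W) (w t : W) (j : B) :
    invPar cs (cs.simple j * w) t =
      (if t = cs.simple j then 1 else 0) + invPar cs w (cs.simple j * t * cs.simple j) := by
  obtain ⟨ω, hω, rfl⟩ := cs.exists_isReduced w
  rw [invPar, mul_inv_rev, map_mul, cs.inv_simple, Equiv.Perm.mul_apply,
      sgnRep_simple, sgnStep_apply, sgnRep_word, invPar_word, zero_add]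

theorem fold_lemma {B : Type*} {W : Type*} [Group W] {M : CoxeterMatrix B}
    (cs : CoxeterSystem M W) (w : W) (i j : B)
    (h : cs.length (w * cs.simple i) = cs.length w + 1)
    (h' : ¬ cs.length (cs.simple j * w * cs.simple i) = cs.length (cs.simple j * w) + 1) :
    w * cs.simple i * w⁻¹ = cs.simple j := by
  classical
  have h1 := invPar_up cs w i h
  have h2 := (cs.length_mul_simple (cs.simple j * w) i).resolve_left h'
  have h3 := invPar_up cs (cs.simple j * w * cs.simple i) i (by
    rw [cs.simple_mul_simple_cancel_right, h2])
  have e : cs.simple j * w * cs.simple i * cs.simple i * (cs.simple j * w * cs.simple i)⁻¹ =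
    cs.simple j * (w * cs.simple i * w⁻¹) * cs.simple j := by
    rw [cs.simple_mul_simple_cancel_right]
    simp [mul_assoc]
  have e' : cs.simple j * w * cs.simple i * (cs.simple j * w)⁻¹ =
    cs.simple j * (w * cs.simple i * w⁻¹) * cs.simple j := by
    simp [mul_assoc]
  have e'' : cs.simple j * (cs.simple j * (w * cs.simple i * w⁻¹) * cs.simple j) * cs.simple j =
    w * cs.simple i * w⁻¹ := by simp [mul_assoc]
  rw [e, invPar_mul_simple, e', if_pos rfl, invPar_simple_mul, e'', h1] at h3
  by_contra hne
  rw [if_neg] at h3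
  · simp at h3
  · intro hh
    rw [hh] at e''
    apply hne
    rw [← e'']
    simp

/-- Let `(W,S)` be a finite Coxeter system, `s_i ∈ S`, and
`P_i = {w : ℓ(w sᵢ) = ℓ(w) + 1}`. For `J ⊆ S`, let `W_J` be the standard parabolic subgroup
generated by `J`, and let `y ∈ P_i`. Then `W_J · y ⊆ P_i` iff `y sᵢ y⁻¹ ∉ W_J`. -/
theorem stmt_5 {B : Type*} {W : Type*} [Group W] [Finite W]
    {M : CoxeterMatrix B} (cs : CoxeterSystem M W)
    (i : B) (J : Set B) (y : W)
    (hy : cs.length (y * cs.simple i) = cs.length y + 1) :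
    (∀ u ∈ Subgroup.closure (cs.simple '' J),
        cs.length (u * y * cs.simple i) = cs.length (u * y) + 1) ↔
      y * cs.simple i * y⁻¹ ∉ Subgroup.closure (cs.simple '' J) := by
  constructor
  · intro h hm
    have := h _ hm
    simp only [inv_mul_cancel_right, cs.simple_mul_simple_cancel_right] at this
    omega
  · intro ht u hu
    have step : ∀ x ∈ cs.simple '' J, ∀ v ∈ Subgroup.closure (cs.simple '' J),
        cs.length (v * y * cs.simple i) = cs.length (v * y) + 1 →
        cs.length (x * v * y * cs.simple i) = cs.length (x * v * y) + 1 := by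
      intro x hx v hv ih
      have hxm := Subgroup.subset_closure hx
      obtain ⟨j, hj, rfl⟩ := hx
      by_contra hc
      rw [mul_assoc (cs.simple j) v y] at hc
      have := fold_lemma cs (v * y) i j ih hc
      apply ht
      have e : y * cs.simple i * y⁻¹ = v⁻¹ * cs.simple j * v := by
        rw [← this]; group
      rw [e]
      exact mul_mem (mul_mem (inv_mem hv) hxm) hv
    induction hu using Subgroup.closure_induction_left with
    | one => simpa using hy
    | mul_left x hx v hv ih => exact step x hx v hv ih
    | inv_mul_cancel x hx v hv ih =>
      have : x⁻¹ = x := by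
        obtain ⟨j, hj, rfl⟩ := hx
        exact cs.inv_simple j
      rw [this]
      exact step x hx v hv ih
end

section
/- Let (W,S) be a finite Coxeter system with length function ℓ, let s_i ∈ S, and let P_i = {w ∈ W : ℓ(w s_i) = ℓ(w) + 1}. For s_j ∈ S, let W^{(j)} denote the standard parabolic subgroup of W generated by S ∖ {s_j}. Then for every y ∈ P_i and every s_j ∈ S: W^{(j)} · y ⊆ P_i if and only if s_j occurs as a letter in some reduced expression of the element y s_i y⁻¹. -/
namespace Stmt6Aux

open Polynomial.Chebyshev in
lemma cheb_aux (m : ℕ) (hm : 2 < m) (t : ℝ) (ht : t = 2 * Real.cos (2 * Real.pi / m)) :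
    ((S ℝ (((m : ℤ) - 2) / 2)).eval t * ((S ℝ (((m : ℤ) - 1) / 2)).eval t
      + (S ℝ (((m : ℤ) - 3) / 2)).eval t)) = 0 ∧
    ((S ℝ (((m : ℤ) - 1) / 2)).eval t * ((S ℝ ((m : ℤ) / 2)).eval t
      + (S ℝ (((m : ℤ) - 2) / 2)).eval t)) = 0 := by
  have hm0 : (0 : ℝ) < m := by positivity
  have hm2 : (2 : ℝ) < m := by exact_mod_cast hm
  set φ := 2 * Real.pi / m with hφ
  have hs : Real.sin φ ≠ 0 := by
    apply ne_of_gt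
    apply Real.sin_pos_of_pos_of_lt_pi
    · positivity
    · rw [hφ, div_lt_iff₀ hm0]; nlinarith [Real.pi_pos]
  have key (n : ℤ) : (S ℝ n).eval t = Real.sin ((n + 1) * φ) / Real.sin φ := by
    rw [eq_div_iff hs, ht]; exact S_two_mul_real_cos φ n
  rcases Nat.even_or_odd' m with ⟨p, hp | hp⟩
  · have e1 : ((m : ℤ) - 2) / 2 = p - 1 := by omega
    have e2 : ((m : ℤ) - 1) / 2 = p - 1 := by omega
    have h0 : (S ℝ ((p : ℤ) - 1)).eval t = 0 := by
      rw [key]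
      have : (((p : ℤ) - 1 : ℤ) + 1 : ℝ) * φ = Real.pi := by
        rw [hφ]; push_cast
        have : (m : ℝ) = 2 * p := by exact_mod_cast hp
        field_simp
        rw [this]; ring
      rw [this]; simp
    rw [e1, e2, h0]; simp
  · have e1 : ((m : ℤ) - 2) / 2 = p - 1 := by omega
    have e2 : ((m : ℤ) - 1) / 2 = p := by omega
    have e3 : ((m : ℤ) - 3) / 2 = p - 1 := by omega
    have e4 : (m : ℤ) / 2 = p := by omega
    have h0 : (S ℝ (p : ℤ)).eval t + (S ℝ ((p : ℤ) - 1)).eval t = 0 := by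
      rw [key, key, ← add_div]
      have h1 : (((p : ℤ) : ℝ) + 1) * φ = 2 * Real.pi - p * φ := by
        rw [hφ]; push_cast
        have : (m : ℝ) = 2 * p + 1 := by exact_mod_cast hp
        field_simp
        rw [this]; ring
      have h2 : ((((p : ℤ) - 1 : ℤ) : ℝ) + 1) * φ = p * φ := by push_cast; ring
      rw [h1, h2, Real.sin_two_pi_sub]; simp
    rw [e1, e2, e3, e4, h0]; simp

variable {B : Type*} {W : Type*} [Group W] {M : CoxeterMatrix B} (cs : CoxeterSystem M W)

/-- the coroot functional -/
noncomputable def coroot (M : CoxeterMatrix B) (i : B) : Module.Dual ℝ (B →₀ ℝ) :=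
  Finsupp.linearCombination ℝ (fun k => -2 * Real.cos (Real.pi / (M i k : ℝ)))

/-- simple root -/
noncomputable def root (i : B) : B →₀ ℝ := Finsupp.single i 1

lemma coroot_root (M : CoxeterMatrix B) (i k : B) :
    coroot M i (root k) = -2 * Real.cos (Real.pi / (M i k : ℝ)) := by
  simp [coroot, root]

lemma coroot_self (M : CoxeterMatrix B) (i : B) : coroot M i (root i) = 2 := by
  simp [coroot_root]

/-- simple reflection of the geometric representation -/
noncomputable def refl (M : CoxeterMatrix B) (i : B) : (B →₀ ℝ) ≃ₗ[ℝ] (B →₀ ℝ) :=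
  Module.reflection (coroot_self M i)

lemma refl_apply (M : CoxeterMatrix B) (i : B) (v : B →₀ ℝ) :
    refl M i v = v - coroot M i v • root i := Module.reflection_apply _ _

lemma refl_liftable (M : CoxeterMatrix B) : M.IsLiftable (refl M) := by
  intro i k
  by_cases hik : i = k
  · subst hik
    rw [M.diagonal, pow_one]
    ext1 z
    exact Module.involutive_reflection (coroot_self M i) z
  have hne := M.off_diagonal i k hik
  ext1 z
  have hform := Module.reflection_mul_reflection_pow_apply (coroot_self M i) (coroot_self M k)
    (M i k) z
  have ht : coroot M i (root k) * coroot M k (root i) - 2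
      = 2 * Real.cos (2 * Real.pi / (M i k : ℝ)) := by
    rw [coroot_root, coroot_root, M.symmetric k i, mul_div_assoc, Real.cos_two_mul]; ring
  rcases lt_trichotomy (M i k) 2 with h | h | h
  · have : M i k = 0 := by
      have : M i k ≠ 1 := hne
      omega
    rw [this]; simp
  · have h1 : coroot M i (root k) = 0 := by rw [coroot_root, h]; simp
    have h2 : coroot M k (root i) = 0 := by rw [coroot_root, M.symmetric k i, h]; simp
    rw [h, pow_two]
    simp only [LinearEquiv.mul_apply, refl_apply, map_sub, map_smul, coroot_self, h1, h2,
      LinearEquiv.coe_one, id_eq]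
    module
  · obtain ⟨a, b⟩ := cheb_aux (M i k) h _ ht
    rw [a, b] at hform
    simpa [refl] using hform

lemma coord_eq (j : B) (u : W) (hu : u ∈ Subgroup.closure (cs.simple '' {k | k ≠ j})) :
    ∀ v, (cs.lift ⟨refl M, refl_liftable M⟩ u v) j = v j := by
  induction hu using Subgroup.closure_induction with
  | mem x hx =>
    obtain ⟨k, hk, rfl⟩ := hx
    intro v
    rw [cs.lift_apply_simple, refl_apply]
    have : k ≠ j := hk
    simp [root, this]
  | one => intro v; simp
  | mul x y _ _ hx hy => intro v; rw [map_mul, LinearEquiv.mul_apply, hx, hy]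
  | inv x _ hx =>
    intro v
    rw [← hx, ← LinearEquiv.mul_apply, ← map_mul]; simp

lemma simple_not_mem (j : B) :
    cs.simple j ∉ Subgroup.closure (cs.simple '' {k | k ≠ j}) := by
  intro h
  have := coord_eq cs j _ h (root j)
  rw [cs.lift_apply_simple, refl_apply, coroot_self] at this
  norm_num [root] at this

open Classical in
/-- the signed permutation attached to a simple reflection -/
noncomputable def sgn (i : B) : Equiv.Perm (W × ZMod 2) :=
  Function.Involutive.toPerm
    (fun p => (cs.simple i * p.1 * cs.simple i, p.2 + if p.1 = cs.simple i then 1 else 0)) (by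
      rintro ⟨t, e⟩
      have h : cs.simple i * t * cs.simple i = cs.simple i ↔ t = cs.simple i := by
        constructor
        · intro h
          have := congrArg (fun z => cs.simple i * z * cs.simple i) h
          simpa [mul_assoc] using this
        · rintro rfl; simp
      simp only [h, Prod.mk.injEq]
      constructor
      · simp [mul_assoc]
      · split_ifs
        · rw [add_assoc, CharTwo.add_self_eq_zero, add_zero]
        · simp)

open Classical in
lemma sgn_apply (i : B) (t : W) (e : ZMod 2) :
    sgn cs i (t, e) = (cs.simple i * t * cs.simple i, e + if t = cs.simple i then 1 else 0) := rfl

open Classical in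
lemma sgn_pow (i k : B) (n : ℕ) (t : W) (e : ZMod 2) :
    ((sgn cs i * sgn cs k) ^ n) (t, e) =
      ((cs.simple i * cs.simple k) ^ n * t * ((cs.simple i * cs.simple k) ^ n)⁻¹,
        e + ∑ l ∈ Finset.range (2 * n),
          if t = cs.simple k * (cs.simple i * cs.simple k) ^ l then 1 else 0) := by
  induction n with
  | zero => simp
  | succ n ih =>
    set x := cs.simple i * cs.simple k with hx
    have hconj : ∀ l : ℕ, (x ^ l)⁻¹ * cs.simple k = cs.simple k * x ^ l := by
      intro l
      have h : SemiconjBy (cs.simple k) x x⁻¹ := by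
        simp [SemiconjBy, hx, mul_assoc]
      have := (h.pow_right l).eq
      rw [this, inv_pow]
    have hc1 : x ^ n * t * (x ^ n)⁻¹ = cs.simple k ↔ t = cs.simple k * x ^ (2 * n) := by
      rw [two_mul, pow_add, ← mul_assoc, ← hconj n]
      constructor
      · intro h; rw [← h]; group
      · intro h; rw [h]; group
    have hc2 : cs.simple k * (x ^ n * t * (x ^ n)⁻¹) * cs.simple k = cs.simple i ↔
        t = cs.simple k * x ^ (2 * n + 1) := by
      have e1 : cs.simple k * x ^ (2 * n + 1) = (x ^ n)⁻¹ * (cs.simple k * x) * x ^ n := by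
        rw [← mul_assoc, hconj n, mul_assoc, mul_assoc, ← pow_succ', ← pow_add]
        congr 2; omega
      rw [e1]
      constructor
      · intro h
        have h2 : x = cs.simple k * (x ^ n * t * (x ^ n)⁻¹) := by
          have h4 := congrArg (fun z => z * cs.simple k) h
          simp only [cs.simple_mul_simple_cancel_right] at h4
          rw [h4]
        have h3 : cs.simple k * x = x ^ n * t * (x ^ n)⁻¹ := by
          calc cs.simple k * x = cs.simple k * (cs.simple k * (x ^ n * t * (x ^ n)⁻¹)) := by
                rw [← h2]
            _ = _ := by simp
        rw [h3]; group
      · intro h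
        have h3 : x ^ n * t * (x ^ n)⁻¹ = cs.simple k * x := by rw [h]; group
        rw [h3, hx]; simp [mul_assoc]
    rw [pow_succ', Equiv.Perm.mul_apply, ih, Equiv.Perm.mul_apply, sgn_apply, sgn_apply]
    simp only [hc1, hc2]
    rw [show 2 * (n + 1) = 2 * n + 1 + 1 by ring, Finset.sum_range_succ, Finset.sum_range_succ]
    refine Prod.ext ?_ ?_
    · simp only [pow_succ' x, mul_inv_rev]
      simp [hx, mul_assoc]
    · simp only [add_assoc]

lemma sgn_liftable : M.IsLiftable (sgn cs) := by
  classical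
  intro i k
  ext1 ⟨t, e⟩
  rw [sgn_pow, two_mul, Finset.sum_range_add, cs.simple_mul_simple_pow]
  simp only [pow_add, cs.simple_mul_simple_pow, one_mul, CharTwo.add_self_eq_zero]
  simp

/-- The reflection cocycle. -/
noncomputable def eta (w t : W) : ZMod 2 := (cs.lift ⟨sgn cs, sgn_liftable cs⟩ w (t, 0)).2

lemma lift_eq (w t : W) (e : ZMod 2) :
    cs.lift ⟨sgn cs, sgn_liftable cs⟩ w (t, e) = (w * t * w⁻¹, e + eta cs w t) := by
  unfold eta
  induction w using cs.simple_induction_left generalizing t e with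
  | one => simp
  | mul_simple_left w i ih =>
    rw [map_mul, Equiv.Perm.mul_apply, Equiv.Perm.mul_apply, ih t e, ih t 0,
      cs.lift_apply_simple, sgn_apply, sgn_apply]
    simp [mul_assoc, add_assoc]

lemma eta_mul (u v t : W) : eta cs (u * v) t = eta cs v t + eta cs u (v * t * v⁻¹) := by
  have := congrArg Prod.snd (lift_eq cs (u * v) t 0)
  rw [map_mul, Equiv.Perm.mul_apply, lift_eq, lift_eq] at this
  simpa using this.symm

open Classical in
lemma eta_simple (i : B) (t : W) : eta cs (cs.simple i) t = if t = cs.simple i then 1 else 0 := by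
  unfold eta
  rw [cs.lift_apply_simple, sgn_apply]; simp

lemma eta_one (t : W) : eta cs 1 t = 0 := by simp [eta]

lemma exchange (ω : List B) (t : W) (h : eta cs (cs.wordProd ω) t ≠ 0) :
    ∃ ω' : List B, ω'.Sublist ω ∧ ω'.length + 1 = ω.length ∧
      cs.wordProd ω * t = cs.wordProd ω' := by
  classical
  induction ω with
  | nil => simp [eta_one] at h
  | cons i ω ih =>
    by_cases h0 : eta cs (cs.wordProd ω) t = 0
    · rw [cs.wordProd_cons, eta_mul, h0, zero_add, eta_simple] at h
      have h1 : cs.wordProd ω * t * (cs.wordProd ω)⁻¹ = cs.simple i := by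
        by_contra hc; simp [hc] at h
      refine ⟨ω, List.sublist_cons_self _ _, by simp, ?_⟩
      rw [mul_inv_eq_iff_eq_mul] at h1
      rw [cs.wordProd_cons, mul_assoc, h1]; simp
    · obtain ⟨ω', h1, h2, h3⟩ := ih h0
      refine ⟨i :: ω', h1.cons_cons i, by simp [h2], ?_⟩
      rw [cs.wordProd_cons, cs.wordProd_cons, mul_assoc, h3]

lemma length_lt (w t : W) (h : eta cs w t ≠ 0) : cs.length (w * t) < cs.length w := by
  obtain ⟨ω, hω, rfl⟩ := cs.exists_isReduced w
  obtain ⟨ω', _, h2, h3⟩ := exchange cs ω t h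
  rw [h3, hω.eq]
  have := cs.length_wordProd_le ω'
  omega

lemma eta_conj_self (v : W) (i : B) :
    eta cs (v * cs.simple i * v⁻¹) (v * cs.simple i * v⁻¹) = 1 := by
  have h := eta_mul cs v v⁻¹ (v * cs.simple i * v⁻¹)
  rw [eta_mul, eta_mul]
  have e1 : v⁻¹ * (v * cs.simple i * v⁻¹) * v⁻¹⁻¹ = cs.simple i := by group
  rw [e1] at h ⊢
  rw [mul_inv_cancel, eta_one] at h
  rw [eta_simple, if_pos rfl]
  simp only [cs.inv_simple, cs.simple_mul_simple_self, one_mul]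
  rw [add_left_comm, ← h]; simp

lemma eta_simple_zero_iff (w : W) (i : B) :
    cs.length (w * cs.simple i) = cs.length w + 1 ↔ eta cs w (cs.simple i) = 0 := by
  constructor
  · intro h
    by_contra hc
    have := length_lt cs _ _ hc
    omega
  · intro h
    have h1 : eta cs (w * cs.simple i) (cs.simple i) ≠ 0 := by
      rw [eta_mul, eta_simple, if_pos rfl]
      simp [h]
    have := length_lt cs _ _ h1
    rw [cs.simple_mul_simple_cancel_right] at this
    rcases cs.length_mul_simple w i with h | h <;> omega

lemma wordProd_mem (j : B) (ω : List B) (h : j ∉ ω) :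
    cs.wordProd ω ∈ Subgroup.closure (cs.simple '' {k | k ≠ j}) := by
  induction ω with
  | nil => simp [one_mem]
  | cons i ω ih =>
    simp only [List.mem_cons, not_or] at h
    rw [cs.wordProd_cons]
    exact mul_mem (Subgroup.subset_closure ⟨i, fun e => h.1 e.symm, rfl⟩) (ih h.2)

lemma exists_word (j : B) (u : W) (hu : u ∈ Subgroup.closure (cs.simple '' {k | k ≠ j})) :
    ∃ ω : List B, j ∉ ω ∧ cs.wordProd ω = u := by
  induction hu using Subgroup.closure_induction with
  | mem x hx =>
    obtain ⟨k, hk, rfl⟩ := hx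
    exact ⟨[k], by simpa using fun e : j = k => hk e.symm, by simp⟩
  | one => exact ⟨[], by simp, by simp⟩
  | mul x y _ _ hx hy =>
    obtain ⟨a, ha, rfl⟩ := hx
    obtain ⟨b, hb, rfl⟩ := hy
    exact ⟨a ++ b, by simp [ha, hb], cs.wordProd_append _ _⟩
  | inv x _ hx =>
    obtain ⟨a, ha, rfl⟩ := hx
    exact ⟨a.reverse, by simpa using ha, cs.wordProd_reverse _⟩

lemma mem_of_eta (j : B) (u t : W) (hu : u ∈ Subgroup.closure (cs.simple '' {k | k ≠ j}))
    (h : eta cs u t ≠ 0) : t ∈ Subgroup.closure (cs.simple '' {k | k ≠ j}) := by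
  obtain ⟨ω, hω, rfl⟩ := exists_word cs j u hu
  obtain ⟨ω', h1, _, h3⟩ := exchange cs ω t h
  have := wordProd_mem cs j ω' (fun hj => hω (h1.subset hj))
  rw [← h3] at this
  exact (Subgroup.mul_mem_cancel_left _ hu).1 this

lemma reduced_not_mem (j : B) (ω : List B) (hω : cs.IsReduced ω)
    (h : cs.wordProd ω ∈ Subgroup.closure (cs.simple '' {k | k ≠ j})) : j ∉ ω := by
  induction ω using List.reverseRecOn with
  | nil => simp
  | append_singleton ω k ih =>
    have hr : cs.IsReduced ω := by simpa using hω.take ω.length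
    have hp : cs.wordProd (ω ++ [k]) = cs.wordProd ω * cs.simple k := by
      rw [cs.wordProd_append]; simp
    have he : eta cs (cs.wordProd (ω ++ [k])) (cs.simple k) ≠ 0 := by
      intro h0
      rw [← eta_simple_zero_iff, hω.eq, hp, cs.simple_mul_simple_cancel_right, hr.eq] at h0
      simp at h0
      omega
    have hk := mem_of_eta cs j _ _ h he
    rw [hp] at h
    have h2 := ih hr ((Subgroup.mul_mem_cancel_right _ hk).1 h)
    simp only [List.mem_append, List.mem_singleton, not_or]
    refine ⟨h2, ?_⟩
    rintro rfl
    exact simple_not_mem cs _ hk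

end Stmt6Aux


/-- Let `(W,S)` be a finite Coxeter system, `s_i ∈ S`, and
`P_i = {w : ℓ(w sᵢ) = ℓ(w) + 1}`. For `s_j ∈ S`, let `W^{(j)}` be the standard parabolic
subgroup generated by `S ∖ {s_j}`. Then for every `y ∈ P_i` and every `s_j ∈ S`:
`W^{(j)} · y ⊆ P_i` iff `s_j` occurs as a letter in some reduced expression of `y sᵢ y⁻¹`. -/
theorem stmt_6 {B : Type*} {W : Type*} [Group W] [Finite W]
    {M : CoxeterMatrix B} (cs : CoxeterSystem M W)
    (i j : B) (y : W)
    (hy : cs.length (y * cs.simple i) = cs.length y + 1) :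
    (∀ u ∈ Subgroup.closure (cs.simple '' {k | k ≠ j}),
        cs.length (u * y * cs.simple i) = cs.length (u * y) + 1) ↔
      ∃ ω : List B, cs.IsReduced ω ∧ cs.wordProd ω = y * cs.simple i * y⁻¹ ∧ j ∈ ω := by
  have hy0 := (Stmt6Aux.eta_simple_zero_iff cs y i).1 hy
  have key : ∀ u : W, cs.length (u * y * cs.simple i) = cs.length (u * y) + 1 ↔
      Stmt6Aux.eta cs u (y * cs.simple i * y⁻¹) = 0 := by
    intro u
    rw [Stmt6Aux.eta_simple_zero_iff, Stmt6Aux.eta_mul, hy0, zero_add]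
  simp only [key]
  constructor
  · intro h
    obtain ⟨ω, hω, hp⟩ := cs.exists_isReduced (y * cs.simple i * y⁻¹)
    refine ⟨ω, hω, hp.symm, ?_⟩
    by_contra hj
    have hm := Stmt6Aux.wordProd_mem cs j ω hj
    rw [← hp] at hm
    have := h _ hm
    rw [Stmt6Aux.eta_conj_self] at this
    exact one_ne_zero this
  · rintro ⟨ω, hω, hp, hj⟩ u hu
    by_contra hc
    have hm := Stmt6Aux.mem_of_eta cs j u _ hu hc
    rw [← hp] at hm
    exact Stmt6Aux.reduced_not_mem cs j ω hω hm hj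
end

section
/- Let (W,S) be a finite Coxeter system with length function ℓ, let s_i ∈ S, and let P_i = {w ∈ W : ℓ(w s_i) = ℓ(w) + 1}. Then P_i is convex: for all y, w ∈ P_i, for every reduced expression w y⁻¹ = s_{j_k} s_{j_{k−1}} ⋯ s_{j_1} (with all s_{j_t} ∈ S and k = ℓ(w y⁻¹)), and for every 0 ≤ t ≤ k, the partial product s_{j_t} s_{j_{t−1}} ⋯ s_{j_1} · y belongs to P_i. -/
namespace Stmt7

open Classical in
/-- The action of a simple reflection on `W × ZMod 2` (signed reflection representation). -/
noncomputable def act {B W : Type*} [Group W] {M : CoxeterMatrix B} (cs : CoxeterSystem M W)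
    (i : B) : Function.End (W × ZMod 2) :=
  fun p => (cs.simple i * p.1 * cs.simple i, p.2 + if p.1 = cs.simple i then 1 else 0)

open Classical in
lemma act_pow {B W : Type*} [Group W] {M : CoxeterMatrix B} (cs : CoxeterSystem M W)
    (i j : B) (n : ℕ) (g : W) (e : ZMod 2) :
    ((act cs i * act cs j) ^ n) (g, e) =
      ((cs.simple i * cs.simple j) ^ n * g * ((cs.simple i * cs.simple j) ^ n)⁻¹,
        e + ∑ l ∈ Finset.range (2 * n),
          if g = cs.simple j * (cs.simple i * cs.simple j) ^ l then 1 else 0) := by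
  induction n with
  | zero => simp; rfl
  | succ n ih =>
    have hmul : ((act cs i * act cs j) ^ (n + 1)) (g, e) =
        act cs i (act cs j (((act cs i * act cs j) ^ n) (g, e))) := by
      rw [pow_succ']; rfl
    rw [hmul, ih]
    set a := cs.simple i with ha
    set b := cs.simple j with hb
    have haa : a * a = 1 := cs.simple_mul_simple_self i
    have hbb : b * b = 1 := cs.simple_mul_simple_self j
    have hainv : a⁻¹ = a := cs.inv_simple i
    have hbinv : b⁻¹ = b := cs.inv_simple j
    have hconj : ∀ k : ℕ, b * (a * b) ^ k = ((a * b) ^ k)⁻¹ * b := by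
      intro k
      have h1 : b * (a * b) * b⁻¹ = (a * b)⁻¹ := by
        rw [mul_inv_rev, hainv, hbinv]
        simp [mul_assoc, hbb]
      have h2 : b * (a * b) ^ k * b⁻¹ = ((a * b) ^ k)⁻¹ := by
        rw [← conj_pow, h1, inv_pow]
      rw [← h2]; simp
    have e1 : ((a * b) ^ n * g * ((a * b) ^ n)⁻¹ = b) ↔ g = b * (a * b) ^ (2 * n) := by
      rw [two_mul, pow_add, ← mul_assoc, hconj n, mul_inv_eq_iff_eq_mul,
        mul_assoc, eq_inv_mul_iff_mul_eq]
    have e2 : (b * ((a * b) ^ n * g * ((a * b) ^ n)⁻¹) * b = a) ↔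
        g = b * (a * b) ^ (2 * n + 1) := by
      have hR : b * (a * b) ^ (2 * n + 1) =
          ((a * b) ^ n)⁻¹ * (b * (a * b)) * (a * b) ^ n := by
        have : 2 * n + 1 = n + (1 + n) := by ring
        rw [this, pow_add, pow_add, ← mul_assoc b ((a * b) ^ n), hconj n, pow_one]
        simp only [mul_assoc]
      rw [hR]
      generalize (a * b) ^ n = C
      constructor
      · intro h
        have hX : C * g * C⁻¹ = b * (a * b) := by
          rw [← h]
          calc C * g * C⁻¹ = (b * b) * (C * g * C⁻¹) * (b * b) := by rw [hbb]; simp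
            _ = _ := by simp only [mul_assoc]
        rw [← hX]; group
      · intro h
        have hX : C * g * C⁻¹ = b * (a * b) := by rw [h]; group
        rw [hX]
        calc b * (b * (a * b)) * b = (b * b) * a * (b * b) := by simp only [mul_assoc]
          _ = a := by rw [hbb]; simp
    have hs : 2 * (n + 1) = 2 * n + 1 + 1 := by ring
    simp only [act, ← ha, ← hb]
    rw [hs, Finset.sum_range_succ, Finset.sum_range_succ]
    simp only [e1, e2]
    refine Prod.ext ?_ ?_
    · simp only [pow_succ', mul_inv_rev, hainv, hbinv, mul_assoc]
    · simp only [add_assoc]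

lemma act_liftable {B W : Type*} [Group W] {M : CoxeterMatrix B} (cs : CoxeterSystem M W) :
    M.IsLiftable (act cs) := by
  classical
  intro i j
  funext ⟨g, e⟩
  rw [act_pow, two_mul, Finset.sum_range_add]
  simp only [pow_add, cs.simple_mul_simple_pow, one_mul, inv_one, mul_one]
  rw [CharTwo.add_self_eq_zero, add_zero]
  rfl

/-- The signed reflection representation. -/
noncomputable def rep {B W : Type*} [Group W] {M : CoxeterMatrix B} (cs : CoxeterSystem M W) :
    W →* Function.End (W × ZMod 2) := cs.lift ⟨act cs, act_liftable cs⟩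

open Classical in
lemma rep_word {B W : Type*} [Group W] {M : CoxeterMatrix B} (cs : CoxeterSystem M W)
    (ω : List B) (g : W) (e : ZMod 2) :
    rep cs (cs.wordProd ω) (g, e) =
      (cs.wordProd ω * g * (cs.wordProd ω)⁻¹, e + ((cs.rightInvSeq ω).count g : ℕ)) := by
  induction ω with
  | nil => simp; rfl
  | cons i ω ih =>
    have hmul : rep cs (cs.wordProd (i :: ω)) (g, e) =
        act cs i (rep cs (cs.wordProd ω) (g, e)) := by
      rw [cs.wordProd_cons, map_mul]
      have : rep cs (cs.simple i) = act cs i := cs.lift_apply_simple (act_liftable cs) i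
      rw [this]; rfl
    rw [hmul, ih]
    have e1 : (cs.wordProd ω * g * (cs.wordProd ω)⁻¹ = cs.simple i) ↔
        ((cs.wordProd ω)⁻¹ * cs.simple i * cs.wordProd ω = g) := by
      constructor
      · intro h; rw [← h]; group
      · intro h; rw [← h]; group
    simp only [act, CoxeterSystem.rightInvSeq, List.count_cons, e1, cs.wordProd_cons]
    refine Prod.ext ?_ ?_
    · simp [mul_assoc]
    · simp [add_assoc]

/-- The cocycle of the signed reflection representation. -/
noncomputable def N {B W : Type*} [Group W] {M : CoxeterMatrix B} (cs : CoxeterSystem M W)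
    (w g : W) : ZMod 2 := (rep cs w (g, 0)).2

open Classical in
lemma N_word {B W : Type*} [Group W] {M : CoxeterMatrix B} (cs : CoxeterSystem M W)
    (ω : List B) (g : W) : N cs (cs.wordProd ω) g = ((cs.rightInvSeq ω).count g : ℕ) := by
  simp [N, rep_word]

lemma rep_apply {B W : Type*} [Group W] {M : CoxeterMatrix B} (cs : CoxeterSystem M W)
    (w g : W) (e : ZMod 2) : rep cs w (g, e) = (w * g * w⁻¹, e + N cs w g) := by
  obtain ⟨ω, rfl⟩ := cs.wordProd_surjective w
  rw [rep_word, N_word]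

lemma N_mul {B W : Type*} [Group W] {M : CoxeterMatrix B} (cs : CoxeterSystem M W)
    (u v g : W) : N cs (u * v) g = N cs v g + N cs u (v * g * v⁻¹) := by
  have : rep cs (u * v) (g, 0) = rep cs u (rep cs v (g, 0)) := by rw [map_mul]; rfl
  rw [rep_apply, rep_apply, rep_apply] at this
  simpa using congrArg Prod.snd this

lemma descent_of_N {B W : Type*} [Group W] {M : CoxeterMatrix B} (cs : CoxeterSystem M W)
    (x : W) (i : B) (h : N cs x (cs.simple i) ≠ 0) : cs.IsRightDescent x i := by
  classical
  obtain ⟨ω, hω, rfl⟩ := cs.exists_isReduced x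
  rw [N_word] at h
  have hm : cs.simple i ∈ cs.rightInvSeq ω := by
    by_contra hc
    exact h (by rw [List.count_eq_zero_of_not_mem hc]; simp)
  exact (cs.isRightInversion_simple_iff_isRightDescent _ _).1
    (cs.isRightInversion_of_mem_rightInvSeq hω hm)

lemma N_eq_zero_iff {B W : Type*} [Group W] {M : CoxeterMatrix B} (cs : CoxeterSystem M W)
    (x : W) (i : B) :
    N cs x (cs.simple i) = 0 ↔ cs.length (x * cs.simple i) = cs.length x + 1 := by
  rw [← cs.not_isRightDescent_iff]
  constructor
  · intro h
    have h1 : N cs (x * cs.simple i) (cs.simple i) ≠ 0 := by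
      have h2 : N cs (cs.simple i) (cs.simple i) = 1 := by
        classical
        have := N_word cs [i] (cs.simple i)
        simpa using this
      rw [N_mul, h2]
      simp [h]
    have h3 := descent_of_N cs _ i h1
    intro h4
    exact (cs.isRightDescent_iff_not_isRightDescent_mul.1 h4) h3
  · intro h
    by_contra hc
    exact h (descent_of_N cs x i hc)

end Stmt7

/-- Let `(W,S)` be a finite Coxeter system, `s_i ∈ S`, and
`P_i = {w : ℓ(w sᵢ) = ℓ(w) + 1}`. Then `P_i` is convex: for all `y, w ∈ P_i` and every
reduced word `ω` for `w y⁻¹` (with the leftmost letter first), every partial product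
consisting of the last `t` letters of `ω` applied to `y` again lies in `P_i`. -/
theorem stmt_7 {B : Type*} {W : Type*} [Group W] [Finite W]
    {M : CoxeterMatrix B} (cs : CoxeterSystem M W)
    (i : B) (y w : W)
    (hy : cs.length (y * cs.simple i) = cs.length y + 1)
    (hw : cs.length (w * cs.simple i) = cs.length w + 1)
    (ω : List B) (hred : cs.IsReduced ω) (hprod : cs.wordProd ω = w * y⁻¹) :
    ∀ t : ℕ, t ≤ ω.length →
      cs.length (cs.wordProd (ω.drop (ω.length - t)) * y * cs.simple i) =
        cs.length (cs.wordProd (ω.drop (ω.length - t)) * y) + 1 := by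
  classical
  intro t _
  rw [← Stmt7.N_eq_zero_iff] at hy hw ⊢
  have hw' : w = cs.wordProd ω * y := by rw [hprod]; simp
  rw [hw', Stmt7.N_mul, hy, zero_add, Stmt7.N_word] at hw
  rw [Stmt7.N_mul, hy, zero_add, Stmt7.N_word, cs.rightInvSeq_drop]
  have hnot : y * cs.simple i * y⁻¹ ∉ cs.rightInvSeq ω := by
    intro hm
    rw [List.count_eq_one_of_mem (CoxeterSystem.IsReduced.nodup_rightInvSeq cs hred) hm] at hw
    simp at hw
  rw [List.count_eq_zero_of_not_mem (fun h => hnot (List.mem_of_mem_drop h))]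
  simp
end

section
/- Let (W,S) be a finite Coxeter system with length function ℓ, and let s_i ∈ S. Let y, w ∈ W be such that ℓ(y s_i y⁻¹) > ℓ(w s_i w⁻¹). Then ℓ(w y⁻¹) ≠ ℓ(w s_i y⁻¹) + ℓ(y s_i y⁻¹); that is, no geodesic from y to w in the Cayley graph of (W,S) passes through y s_i. -/
namespace CoxAux

open Classical in
/-- The elementary signed conjugation step. -/
noncomputable def stepFun {W : Type*} [Group W] (a : W) (p : W × ZMod 2) : W × ZMod 2 :=
  (a * p.1 * a⁻¹, p.2 + if p.1 = a then 1 else 0)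

lemma step_invol {W : Type*} [Group W] (a : W) (ha : a * a = 1) (p : W × ZMod 2) :
    stepFun a (stepFun a p) = p := by
  have hinv : a⁻¹ = a := inv_eq_of_mul_eq_one_left ha
  obtain ⟨q, e⟩ := p
  have h1 : a * q * a⁻¹ = a ↔ q = a := by
    rw [mul_inv_eq_iff_eq_mul, mul_right_inj]
  have h2 : (1 : ZMod 2) + 1 = 0 := by decide
  simp only [stepFun, h1]
  refine Prod.ext ?_ ?_
  · simp only [hinv]
    rw [show a * (a * q * a) * a = (a * a) * q * (a * a) by group, ha]; simp
  · by_cases h : q = a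
    · simp [h, add_assoc, h2]
    · have h3 : ¬ (a * q * a⁻¹ = a) := fun h' => h (h1.1 h')
      simp [h, h3]

noncomputable def stepPerm {W : Type*} [Group W] (a : W) (ha : a * a = 1) :
    Equiv.Perm (W × ZMod 2) :=
  ⟨stepFun a, stepFun a, step_invol a ha, step_invol a ha⟩

open Classical in
lemma step_pow {W : Type*} [Group W] (a b : W) (ha : a * a = 1) (hb : b * b = 1)
    (m : ℕ) (q : W) (e : ZMod 2) :
    ((stepPerm a ha * stepPerm b hb) ^ m) (q, e) =
      ((a * b) ^ m * q * ((a * b) ^ m)⁻¹,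
        e + ∑ p ∈ Finset.range (2 * m), if q = ((a * b) ^ p)⁻¹ * b then 1 else 0) := by
  have hai : a⁻¹ = a := inv_eq_of_mul_eq_one_left ha
  have hbi : b⁻¹ = b := inv_eq_of_mul_eq_one_left hb
  have hconj : ∀ p : ℕ, b * (a * b) ^ p = ((a * b) ^ p)⁻¹ * b := by
    intro p
    have h1 : b * (a * b) * b⁻¹ = (a * b)⁻¹ := by
      rw [mul_inv_rev, hbi, hai, mul_assoc, mul_assoc, hb, mul_one]
    have h2 := conj_pow (i := p) (a := b) (b := a * b)
    rw [h1] at h2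
    rw [← inv_pow, h2]; group
  induction m with
  | zero => simp
  | succ m ih =>
    rw [pow_succ', Equiv.Perm.mul_apply, ih]
    have e1 : (a * b) ^ m * q * ((a * b) ^ m)⁻¹ = b ↔ q = ((a * b) ^ (2 * m))⁻¹ * b := by
      rw [mul_inv_eq_iff_eq_mul, hconj, ← eq_inv_mul_iff_mul_eq, two_mul, pow_add, mul_inv_rev,
        mul_assoc]
    have e2 : b * ((a * b) ^ m * q * ((a * b) ^ m)⁻¹) * b⁻¹ = a ↔
        q = ((a * b) ^ (2 * m + 1))⁻¹ * b := by
      rw [mul_inv_eq_iff_eq_mul, ← eq_inv_mul_iff_mul_eq, mul_inv_eq_iff_eq_mul,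
        ← eq_inv_mul_iff_mul_eq]
      have : b⁻¹ * (a * b) * (a * b) ^ m = (a * b)⁻¹ * (((a * b) ^ m)⁻¹ * b) := by
        rw [← hconj, mul_inv_rev, hbi, hai]; group
      rw [this, show 2 * m + 1 = m + 1 + m by ring, pow_add, pow_succ, mul_inv_rev]
      simp only [mul_assoc, mul_inv_rev]
    change stepFun a (stepFun b _) = _
    simp only [stepFun, e1, e2]
    refine Prod.ext ?_ ?_
    · simp only [pow_succ', mul_inv_rev, mul_assoc]
    · rw [show 2 * (m + 1) = 2 * m + 1 + 1 by ring, Finset.sum_range_succ, Finset.sum_range_succ]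
      simp only [add_assoc]

lemma step_rel {W : Type*} [Group W] (a b : W) (ha : a * a = 1) (hb : b * b = 1)
    (m : ℕ) (hm : (a * b) ^ m = 1) : (stepPerm a ha * stepPerm b hb) ^ m = 1 := by
  classical
  ext1 ⟨q, e⟩
  rw [step_pow, hm, two_mul, Finset.sum_range_add]
  simp only [pow_add, hm, one_mul]
  rw [CharTwo.add_self_eq_zero]
  simp

variable {B : Type*} {W : Type*} [Group W] {M : CoxeterMatrix B} (cs : CoxeterSystem M W)

noncomputable def rep : W →* Equiv.Perm (W × ZMod 2) :=
  cs.lift ⟨fun i => stepPerm (cs.simple i) (cs.simple_mul_simple_self i), by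
    intro i j
    exact step_rel _ _ _ _ _ (cs.simple_mul_simple_pow i j)⟩

noncomputable def nn (w q : W) : ZMod 2 := (rep cs w (q, 0)).2

lemma rep_simple (i : B) :
    rep cs (cs.simple i) = stepPerm (cs.simple i) (cs.simple_mul_simple_self i) := by
  exact cs.lift_apply_simple _ i

lemma rep_apply (w q : W) (e : ZMod 2) : rep cs w (q, e) = (w * q * w⁻¹, e + nn cs w q) := by
  unfold nn
  induction w using cs.simple_induction_left generalizing q e with
  | one => simp
  | mul_simple_left w i ih =>
    rw [map_mul, Equiv.Perm.mul_apply, Equiv.Perm.mul_apply, ih, ih q 0, rep_simple]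
    change stepFun _ _ = (_, e + (stepFun _ _).2)
    simp [stepFun, mul_assoc, add_assoc]

lemma nn_one (q : W) : nn cs 1 q = 0 := by simp [nn]

lemma nn_mul (v w q : W) : nn cs (v * w) q = nn cs w q + nn cs v (w * q * w⁻¹) := by
  conv_lhs => rw [nn, map_mul, Equiv.Perm.mul_apply, rep_apply, rep_apply]
  simp

lemma nn_inv (v q : W) : nn cs v⁻¹ (v * q * v⁻¹) = nn cs v q := by
  have h := nn_mul cs v⁻¹ v q
  rw [inv_mul_cancel, nn_one] at h
  exact (CharTwo.add_eq_zero.mp h.symm).symm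

open Classical in
lemma nn_simple (i : B) (q : W) : nn cs (cs.simple i) q = if q = cs.simple i then 1 else 0 := by
  rw [nn, rep_simple]
  change (stepFun _ _).2 = _
  simp [stepFun]

open Classical in
lemma nn_word (ω : List B) (q : W) :
    nn cs (cs.wordProd ω) q = ((cs.rightInvSeq ω).count q : ℕ) := by
  induction ω with
  | nil => simp [nn_one]
  | cons i ω ih =>
    rw [cs.wordProd_cons, nn_mul, ih, nn_simple, CoxeterSystem.rightInvSeq, List.count_cons]
    have : cs.wordProd ω * q * (cs.wordProd ω)⁻¹ = cs.simple i ↔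
      (cs.wordProd ω)⁻¹ * cs.simple i * cs.wordProd ω = q := by
      rw [mul_inv_eq_iff_eq_mul, mul_assoc, inv_mul_eq_iff_eq_mul, eq_comm]
    simp [this]

lemma exists_inv (w : W) : ∃ N : Finset W, (∀ q, q ∈ N ↔ nn cs w q = 1) ∧
    N.card = cs.length w := by
  classical
  obtain ⟨ω, hω, rfl⟩ := cs.exists_isReduced w
  refine ⟨(cs.rightInvSeq ω).toFinset, ?_, ?_⟩
  · intro q
    rw [nn_word, List.mem_toFinset, List.Nodup.count hω.nodup_rightInvSeq]
    split_ifs with h <;> simp [h]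
  · rw [List.toFinset_card_of_nodup hω.nodup_rightInvSeq, cs.length_rightInvSeq, hω.eq]

lemma zmod2 (x : ZMod 2) : x = 0 ∨ x = 1 := by revert x; decide

lemma disj (v t q : W) (h : cs.length (v * t) = cs.length v + cs.length t)
    (hq : nn cs t q = 1) : nn cs v (t * q * t⁻¹) = 0 := by
  classical
  by_contra hne
  have h1 := (zmod2 _).resolve_left hne
  obtain ⟨N, hN, cN⟩ := exists_inv cs (v * t)
  obtain ⟨Nv, hNv, cNv⟩ := exists_inv cs v
  obtain ⟨Nt, hNt, cNt⟩ := exists_inv cs t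
  have hsub : N ⊆ (Nt.erase q) ∪ Nv.image (fun x => t⁻¹ * x * t) := by
    intro x hx
    rw [hN, nn_mul] at hx
    rw [Finset.mem_union, Finset.mem_erase, hNt, Finset.mem_image]
    by_cases hxt : nn cs t x = 1
    · left
      refine ⟨?_, hxt⟩
      rintro rfl
      rw [hxt, h1] at hx
      exact absurd hx (by decide)
    · right
      rw [(zmod2 _).resolve_right hxt, zero_add] at hx
      exact ⟨t * x * t⁻¹, (hNv _).2 hx, by group⟩
  have c1 := Finset.card_le_card hsub
  have c2 := Finset.card_union_le (Nt.erase q) (Nv.image (fun x => t⁻¹ * x * t))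
  have c3 := Finset.card_image_le (s := Nv) (f := fun x => t⁻¹ * x * t)
  have c4 := Finset.card_erase_lt_of_mem ((hNt q).2 hq)
  omega

lemma main (v t : W) (ht : t * t = 1) (h : cs.length (v * t) = cs.length v + cs.length t) :
    cs.length t ≤ cs.length (v * t * v⁻¹) := by
  classical
  have hti : t⁻¹ = t := inv_eq_of_mul_eq_one_left ht
  obtain ⟨Nt, hNt, cNt⟩ := exists_inv cs t
  obtain ⟨N, hN, cN⟩ := exists_inv cs (v * t * v⁻¹)
  rw [← cNt, ← cN]
  refine Finset.card_le_card_of_injOn (fun q => v * q * v⁻¹) ?_ ?_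
  · intro q hq
    have hq1 := (hNt q).1 hq
    have d1 := disj cs v t q h hq1
    have hq2 := nn_inv cs t q
    rw [hq1] at hq2
    have d2 := disj cs v t (t * q * t⁻¹) h (by rw [← hq2, hti])
    have e : t * (t * q * t⁻¹) * t⁻¹ = q := by
      rw [hti, show t * (t * q * t) * t = (t * t) * q * (t * t) by group, ht]; simp
    rw [e] at d2
    refine (hN _).2 ?_
    have e2 : v⁻¹ * (v * q * v⁻¹) * v⁻¹⁻¹ = q := by group
    rw [nn_mul, nn_inv, d2, e2, nn_mul, hq1, d1]
    decide
  · intro x _ y _ hxy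
    simpa using hxy

end CoxAux


/-- Let `(W,S)` be a finite Coxeter system and `s_i ∈ S`. If
`ℓ(y sᵢ y⁻¹) > ℓ(w sᵢ w⁻¹)`, then `ℓ(w y⁻¹) ≠ ℓ(w sᵢ y⁻¹) + ℓ(y sᵢ y⁻¹)`; that is,
no geodesic from `y` to `w` in the Cayley graph of `(W,S)` passes through `y sᵢ`. -/
theorem stmt_8 {B : Type*} {W : Type*} [Group W] [Finite W]
    {M : CoxeterMatrix B} (cs : CoxeterSystem M W)
    (i : B) (y w : W)
    (h : cs.length (w * cs.simple i * w⁻¹) < cs.length (y * cs.simple i * y⁻¹)) :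
    cs.length (w * y⁻¹) ≠
      cs.length (w * cs.simple i * y⁻¹) + cs.length (y * cs.simple i * y⁻¹) := by

  intro heq
  have ht : (y * cs.simple i * y⁻¹) * (y * cs.simple i * y⁻¹) = 1 := by
    rw [show (y * cs.simple i * y⁻¹) * (y * cs.simple i * y⁻¹)
      = y * (cs.simple i * cs.simple i) * y⁻¹ by group, cs.simple_mul_simple_self]
    group
  have e1 : (w * cs.simple i * y⁻¹) * (y * cs.simple i * y⁻¹) = w * y⁻¹ := by
    rw [show (w * cs.simple i * y⁻¹) * (y * cs.simple i * y⁻¹)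
      = w * (cs.simple i * cs.simple i) * y⁻¹ by group, cs.simple_mul_simple_self, mul_one]
  have key := CoxAux.main cs (w * cs.simple i * y⁻¹) (y * cs.simple i * y⁻¹) ht (by rw [e1, heq])
  have e2 : w * y⁻¹ * (w * cs.simple i * y⁻¹)⁻¹ = w * cs.simple i * w⁻¹ := by
    rw [mul_inv_rev, mul_inv_rev, cs.inv_simple]; group
  rw [e1, e2] at key
  omega
end

section
/- Let n ≥ 1 and let w be a permutation of {1, 2, …, n}. Let 1 ≤ i < j ≤ n. Assume: (a) for every k with 1 ≤ k ≤ n − 1, one has w(k) > w(k+1) if and only if i ≤ k ≤ j − 1; and (b) w(i) − w(j) = j − i. Then w(i) = j, w(j) = i, w(k) = i + j − k for every k with i ≤ k ≤ j, and w(k) = k for every k ∉ [i, j]; that is, w is the order-reversing involution of the interval [i, j] fixing all other elements (the longest element of the parabolic subgroup of S_n generated by the adjacent transpositions s_i, s_{i+1}, …, s_{j−1}). -/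
/-- Let `w` be a permutation of `{1,…,n}` (modelled as `Fin n`), and `i < j`.
If (a) `w(k) > w(k+1)` iff `i ≤ k ≤ j−1`, and (b) `w(i) − w(j) = j − i`, then `w(i) = j`,
`w(j) = i`, `w(k) = i + j − k` on `[i,j]`, and `w(k) = k` outside `[i,j]`; that is, `w` is the
order-reversing involution of the interval `[i,j]` fixing everything else. -/
theorem stmt_9 {n : ℕ} (hn : 1 ≤ n) (w : Equiv.Perm (Fin n)) (i j : Fin n) (hij : i < j)
    (ha : ∀ (k : ℕ) (hk : k + 1 < n),
      (w ⟨k + 1, hk⟩ < w ⟨k, Nat.lt_of_succ_lt hk⟩ ↔ (i : ℕ) ≤ k ∧ k < (j : ℕ)))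
    (hb : (w i : ℕ) = (w j : ℕ) + ((j : ℕ) - (i : ℕ))) :
    w i = j ∧ w j = i ∧
    (∀ k : Fin n, i ≤ k → k ≤ j → (w k : ℕ) = (i : ℕ) + (j : ℕ) - (k : ℕ)) ∧
    (∀ k : Fin n, k < i ∨ j < k → w k = k) := by
  obtain ⟨i, hi⟩ := i
  obtain ⟨j, hj⟩ := j
  simp only [Fin.mk_lt_mk] at hij ha hb
  obtain ⟨f, hf⟩ : ∃ f : ℕ → ℕ, ∀ k (hk : k < n), (w ⟨k, hk⟩ : ℕ) = f k :=
    ⟨fun k => if h : k < n then (w ⟨k, h⟩ : ℕ) else 0, fun k hk => by simp [hk]⟩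
  have hlt : ∀ k, k < n → f k < n := fun k hk => by rw [← hf k hk]; exact (w _).isLt
  have hinj : ∀ k l, k < n → l < n → f k = f l → k = l := by
    intro k l hk hl h
    rw [← hf k hk, ← hf l hl] at h
    simpa using w.injective (Fin.ext h)
  have hdes : ∀ k, k + 1 < n → i ≤ k → k < j → f (k + 1) < f k := by
    intro k hk h1 h2
    have := (ha k hk).2 ⟨h1, h2⟩
    rwa [Fin.lt_def, hf, hf] at this
  have hasc : ∀ k, k + 1 < n → (k < i ∨ j ≤ k) → f k < f (k + 1) := by
    intro k hk h1
    have h2 : ¬ (f (k + 1) < f k) := by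
      intro h
      rw [← hf k (by omega), ← hf (k+1) hk, ← Fin.lt_def, ha k hk] at h
      omega
    have h3 : f k ≠ f (k + 1) := fun h => by
      have := hinj _ _ (by omega) hk h
      omega
    omega
  rw [hf, hf] at hb
  have hup : ∀ d, i + d ≤ j → f (i + d) + d ≤ f i := by
    intro d
    induction d with
    | zero => simp
    | succ d ih =>
      intro h
      have h1 := ih (by omega)
      have h2 := hdes (i + d) (by omega) (by omega) (by omega)
      rw [add_assoc i d 1] at h2
      omega
  have hlo : ∀ d, ∀ k, k + d = j → i ≤ k → f j + d ≤ f k := by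
    intro d
    induction d with
    | zero => intro k hk _; have : k = j := by omega
              subst this; simp
    | succ d ih =>
      intro k h h'
      have h1 := ih (k + 1) (by omega) (by omega)
      have h2 := hdes k (by omega) (by omega) (by omega)
      omega
  have hblock : ∀ k, i ≤ k → k ≤ j → f k + k = f j + j := by
    intro k h1 h2
    have h3 := hup (k - i) (by omega)
    have h4 := hlo (j - k) k (by omega) h1
    rw [show i + (k - i) = k by omega] at h3
    omega
  have hout : ∀ k, k < n → f j ≤ f k → f k ≤ f i → i ≤ k ∧ k ≤ j := by
    intro k hk h1 h2
    have h3 := hblock (f j + j - f k) (by omega) (by omega)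
    have h4 := hinj k (f j + j - f k) hk (by omega) (by omega)
    omega
  have hL : ∀ k, k < i → k ≤ f k := by
    intro k
    induction k with
    | zero => simp
    | succ k ih =>
      intro h
      have h1 := ih (by omega)
      have h2 := hasc k (by omega) (by omega)
      omega
  have hR : ∀ d k, k + d + 1 = n → j < k → f k ≤ k := by
    intro d
    induction d with
    | zero => intro k hk _; have := hlt k (by omega); omega
    | succ d ih =>
      intro k h h'
      have h1 := ih (k + 1) (by omega) (by omega)
      have h2 := hasc k (by omega) (by omega)
      omega
  have hLast : ∀ k, k + 1 = i → f k < f j := by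
    intro k hk
    have h1 := hasc k (by omega) (by omega)
    rw [hk] at h1
    by_contra h
    have := hout k (by omega) (by omega) (by omega)
    omega
  have hFirst : j + 1 < n → f i < f (j + 1) := by
    intro hk
    have h1 := hasc j (by omega) (by omega)
    by_contra h
    have := hout (j + 1) (by omega) (by omega) (by omega)
    omega
  have hge : i ≤ f j := by
    rcases Nat.eq_zero_or_pos i with h | h
    · omega
    · have h1 := hLast (i - 1) (by omega)
      have h2 := hL (i - 1) (by omega)
      omega
  have hle : f j ≤ i := by
    by_cases h : j + 1 < n
    · have h1 := hFirst h
      have h2 := hR (n - 1 - (j + 1)) (j + 1) (by omega) (by omega)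
      omega
    · have := hlt i hi
      omega
  have hL2 : ∀ d k, k + d + 1 = i → f k ≤ k := by
    intro d
    induction d with
    | zero => intro k hk; have := hLast k (by omega); omega
    | succ d ih =>
      intro k h
      have h1 := ih (k + 1) (by omega)
      have h2 := hasc k (by omega) (by omega)
      omega
  have hR2 : ∀ d, j + 1 + d < n → j + 1 + d ≤ f (j + 1 + d) := by
    intro d
    induction d with
    | zero => intro h; have := hFirst (by omega); simp only [add_zero]; omega
    | succ d ih =>
      intro h
      have h1 := ih (by omega)
      have h2 := hasc (j + 1 + d) (by omega) (by omega)
      rw [add_assoc (j + 1) d 1] at h2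
      omega
  refine ⟨?_, ?_, ?_, ?_⟩
  · apply Fin.ext; rw [hf]; simp only; omega
  · apply Fin.ext; rw [hf]; simp only; omega
  · rintro ⟨k, hk⟩ h1 h2
    simp only [Fin.mk_le_mk] at h1 h2
    have := hblock k h1 h2
    rw [hf]; simp only; omega
  · rintro ⟨k, hk⟩ h
    simp only [Fin.mk_lt_mk] at h
    apply Fin.ext; rw [hf]; simp only
    rcases h with h | h
    · have h1 := hL k h
      have h2 := hL2 (i - 1 - k) k (by omega)
      omega
    · have h1 := hR (n - 1 - k) k (by omega) h
      have h2 := hR2 (k - (j + 1)) (by omega)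
      rw [show j + 1 + (k - (j + 1)) = k by omega] at h2
      omega
end

section
/- Let k be a field and V a k-vector space with subspaces V₀ and V₁ such that V = V₀ ⊕ V₁ (internal direct sum); let p₀, p₁ : V → V be the projections onto V₀ and V₁ along the complementary summand. Let K ⊆ V be a subspace, and let i₀ : V₀ → V and i₁ : V₁ → V be linear maps whose images lie in K and which satisfy p₀ ∘ i₀ = id on V₀ and p₁ ∘ i₁ = id on V₁. Define the odd linear operator φ : V → V by φ(v₀) = p₁(i₀(v₀)) for v₀ ∈ V₀ and φ(v₁) = p₀(i₁(v₁)) for v₁ ∈ V₁, let V_φ = range(φ² − id), let K(φ) = {v ∈ V : φ(v) − v ∈ V_φ}, and let K^h = (K ∩ V₀) + (K ∩ V₁) be the maximal homogeneous subspace of K. Then: (i) V_φ ⊆ K^h; (ii) K(φ) ⊆ K; and (iii) K = K(φ) if and only if V_φ = K^h. -/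
/-- Let `V = V₀ ⊕ V₁` (internal direct sum of subspaces, with projections
`p₀, p₁`), `K ⊆ V` a subspace, and `i₀ : V₀ → V`, `i₁ : V₁ → V` linear maps with images in `K`
which are sections of `p₀`, `p₁` respectively. Define the odd operator `φ` by
`φ(v₀) = p₁(i₀ v₀)`, `φ(v₁) = p₀(i₁ v₁)`, let `V_φ = range(φ² − id)`,
`K(φ) = {v : φ v − v ∈ V_φ}`, and `K^h = (K ∩ V₀) + (K ∩ V₁)`. Then (i) `V_φ ⊆ K^h`,
(ii) `K(φ) ⊆ K`, and (iii) `K = K(φ)` iff `V_φ = K^h`. -/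
theorem stmt_10 {k : Type*} {V : Type*} [Field k] [AddCommGroup V] [Module k V]
    (V₀ V₁ : Submodule k V) (hcompl : IsCompl V₀ V₁)
    (p₀ p₁ : V →ₗ[k] V)
    (hp₀ : ∀ v, p₀ v ∈ V₀) (hp₁ : ∀ v, p₁ v ∈ V₁) (hsum : ∀ v, p₀ v + p₁ v = v)
    (K : Submodule k V)
    (i₀ : V₀ →ₗ[k] V) (i₁ : V₁ →ₗ[k] V)
    (hi₀K : ∀ x : V₀, i₀ x ∈ K) (hi₁K : ∀ x : V₁, i₁ x ∈ K)
    (hsec₀ : ∀ x : V₀, p₀ (i₀ x) = (x : V)) (hsec₁ : ∀ x : V₁, p₁ (i₁ x) = (x : V))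
    (φ : V →ₗ[k] V)
    (hφ : ∀ v, φ v = p₁ (i₀ ⟨p₀ v, hp₀ v⟩) + p₀ (i₁ ⟨p₁ v, hp₁ v⟩)) :
    LinearMap.range (φ ∘ₗ φ - LinearMap.id) ≤ (K ⊓ V₀) ⊔ (K ⊓ V₁) ∧
    (∀ v : V, φ v - v ∈ LinearMap.range (φ ∘ₗ φ - LinearMap.id) → v ∈ K) ∧
    ((∀ v : V, v ∈ K ↔ φ v - v ∈ LinearMap.range (φ ∘ₗ φ - LinearMap.id)) ↔
      LinearMap.range (φ ∘ₗ φ - LinearMap.id) = (K ⊓ V₀) ⊔ (K ⊓ V₁)) := by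
  have a1 : ∀ v ∈ V₀, p₁ v = 0 := by
    intro v hv
    have h : p₁ v ∈ V₀ := by
      have : p₁ v = v - p₀ v := by rw [eq_sub_iff_add_eq, add_comm]; exact hsum v
      rw [this]; exact V₀.sub_mem hv (hp₀ v)
    exact (Submodule.disjoint_def.1 hcompl.disjoint) _ h (hp₁ v)
  have b0 : ∀ v ∈ V₁, p₀ v = 0 := by
    intro v hv
    have h : p₀ v ∈ V₁ := by
      have : p₀ v = v - p₁ v := by rw [eq_sub_iff_add_eq]; exact hsum v
      rw [this]; exact V₁.sub_mem hv (hp₁ v)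
    exact (Submodule.disjoint_def.1 hcompl.disjoint) _ (hp₀ v) h
  have a0 : ∀ v ∈ V₀, p₀ v = v := by
    intro v hv
    have h := hsum v
    rwa [a1 v hv, add_zero] at h
  have b1 : ∀ v ∈ V₁, p₁ v = v := by
    intro v hv
    have h := hsum v
    rwa [b0 v hv, zero_add] at h
  have f0 : ∀ (v) (hv : v ∈ V₀), φ v = p₁ (i₀ ⟨v, hv⟩) := by
    intro v hv
    have e1 : (⟨p₀ v, hp₀ v⟩ : V₀) = ⟨v, hv⟩ := Subtype.ext (a0 v hv)
    have e2 : (⟨p₁ v, hp₁ v⟩ : V₁) = 0 := Subtype.ext (a1 v hv)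
    rw [hφ, e1, e2]; simp
  have f1 : ∀ (v) (hv : v ∈ V₁), φ v = p₀ (i₁ ⟨v, hv⟩) := by
    intro v hv
    have e1 : (⟨p₁ v, hp₁ v⟩ : V₁) = ⟨v, hv⟩ := Subtype.ext (b1 v hv)
    have e2 : (⟨p₀ v, hp₀ v⟩ : V₀) = 0 := Subtype.ext (b0 v hv)
    rw [hφ, e1, e2]; simp
  have g0 : ∀ v ∈ V₀, φ v ∈ V₁ := fun v hv => by rw [f0 v hv]; exact hp₁ _
  have g1 : ∀ v ∈ V₁, φ v ∈ V₀ := fun v hv => by rw [f1 v hv]; exact hp₀ _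
  have k0 : ∀ v ∈ V₀, v + φ v ∈ K := by
    intro v hv
    have h := hsum (i₀ ⟨v, hv⟩)
    rw [hsec₀, ← f0 v hv] at h
    simp only at h
    rw [h]; exact hi₀K _
  have k1 : ∀ v ∈ V₁, v + φ v ∈ K := by
    intro v hv
    have h := hsum (i₁ ⟨v, hv⟩)
    rw [hsec₁, ← f1 v hv, add_comm] at h
    simp only at h
    rw [h]; exact hi₁K _
  have kk : ∀ v, v + φ v ∈ K := by
    intro v
    have h := K.add_mem (k0 _ (hp₀ v)) (k1 _ (hp₁ v))
    have e : p₀ v + φ (p₀ v) + (p₁ v + φ (p₁ v)) = v + φ v := by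
      rw [add_add_add_comm, ← map_add, hsum]
    rwa [e] at h
  have sq : ∀ v, φ (φ v) - v ∈ K := by
    intro v
    have h := K.sub_mem (kk (φ v)) (kk v)
    have e : φ v + φ (φ v) - (v + φ v) = φ (φ v) - v := by abel
    rwa [e] at h
  -- homogeneity of the range
  have hom : ∀ w, w ∈ LinearMap.range (φ ∘ₗ φ - LinearMap.id) ↔ ∃ u, φ (φ u) - u = w := by
    intro w; simp [LinearMap.mem_range]
  have q0 : ∀ u, p₀ (φ (φ u) - u) = φ (φ (p₀ u)) - p₀ u := by
    intro u
    have e : φ (φ u) = φ (φ (p₀ u)) + φ (φ (p₁ u)) := by rw [← map_add, ← map_add, hsum]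
    rw [map_sub, e, map_add, a0 _ (g1 _ (g0 _ (hp₀ u))), b0 _ (g0 _ (g1 _ (hp₁ u))), add_zero]
  have q1 : ∀ u, p₁ (φ (φ u) - u) = φ (φ (p₁ u)) - p₁ u := by
    intro u
    have e : φ (φ u) = φ (φ (p₀ u)) + φ (φ (p₁ u)) := by rw [← map_add, ← map_add, hsum]
    rw [map_sub, e, map_add, a1 _ (g1 _ (g0 _ (hp₀ u))), b1 _ (g0 _ (g1 _ (hp₁ u))), zero_add]
  have I : LinearMap.range (φ ∘ₗ φ - LinearMap.id) ≤ (K ⊓ V₀) ⊔ (K ⊓ V₁) := by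
    intro w hw
    obtain ⟨u, rfl⟩ := (hom w).1 hw
    rw [← hsum (φ (φ u) - u)]
    refine Submodule.add_mem_sup ⟨?_, hp₀ _⟩ ⟨?_, hp₁ _⟩
    · rw [q0]; exact sq _
    · rw [q1]; exact sq _
  have II : ∀ v : V, φ v - v ∈ LinearMap.range (φ ∘ₗ φ - LinearMap.id) → v ∈ K := by
    intro v hv
    obtain ⟨w, hw⟩ := (hom _).1 hv
    have hx : φ (v - (w + φ w)) = v - (w + φ w) := by
      rw [map_sub, map_add, ← sub_eq_zero]
      have e : φ v - (φ w + φ (φ w)) - (v - (w + φ w)) = (φ v - v) - (φ (φ w) - w) := by abel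
      rw [e, hw, sub_self]
    have hxK : v - (w + φ w) ∈ K := by
      generalize v - (w + φ w) = x at hx
      have h1 : φ (p₀ x) = p₁ x := by
        have h : p₁ (φ (p₀ x + p₁ x)) = p₁ x := by rw [hsum, hx]
        rwa [map_add, map_add, b1 _ (g0 _ (hp₀ x)), a1 _ (g1 _ (hp₁ x)), add_zero] at h
      have h2 := k0 _ (hp₀ x)
      rwa [h1, hsum] at h2
    have h := K.add_mem hxK (kk w)
    rwa [sub_add_cancel] at h
  refine ⟨I, II, ?_, ?_⟩
  · intro h
    refine le_antisymm I (sup_le ?_ ?_)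
    · rintro x ⟨hxK, hx0⟩
      obtain ⟨u, hu⟩ := (hom _).1 ((h x).1 hxK)
      have h3 := q0 u
      rw [hu, map_sub, b0 _ (g0 x hx0), a0 x hx0, zero_sub] at h3
      refine (Submodule.neg_mem_iff _).1 ((hom _).2 ⟨p₀ u, h3.symm⟩)
    · rintro x ⟨hxK, hx1⟩
      obtain ⟨u, hu⟩ := (hom _).1 ((h x).1 hxK)
      have h3 := q1 u
      rw [hu, map_sub, a1 _ (g1 x hx1), b1 x hx1, zero_sub] at h3
      refine (Submodule.neg_mem_iff _).1 ((hom _).2 ⟨p₁ u, h3.symm⟩)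
  · intro h v
    refine ⟨fun hv => ?_, II v⟩
    rw [h]
    have e : φ v - v = (φ (p₁ v) - p₀ v) + (φ (p₀ v) - p₁ v) := by
      have e1 : φ v = φ (p₀ v) + φ (p₁ v) := by rw [← map_add, hsum]
      have e2 : φ v - v = φ v - (p₀ v + p₁ v) := by rw [hsum]
      rw [e2, e1]; abel
    rw [e]
    refine Submodule.add_mem_sup ⟨?_, V₀.sub_mem (g1 _ (hp₁ v)) (hp₀ v)⟩
      ⟨?_, V₁.sub_mem (g0 _ (hp₀ v)) (hp₁ v)⟩
    · have h4 := K.sub_mem (k1 _ (hp₁ v)) hv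
      have e5 : p₁ v + φ (p₁ v) - v = φ (p₁ v) - p₀ v := by
        conv_lhs => rw [← hsum v]
        simp only [map_add, a1 _ (hp₀ v), b1 _ (hp₁ v), zero_add]
        abel
      rwa [e5] at h4
    · have h4 := K.sub_mem (k0 _ (hp₀ v)) hv
      have e5 : p₀ v + φ (p₀ v) - v = φ (p₀ v) - p₁ v := by
        conv_lhs => rw [← hsum v]
        simp only [map_add, a0 _ (hp₀ v), b0 _ (hp₁ v), add_zero]
        abel
      rwa [e5] at h4
end

section
/- Let k be a field, V a k-vector space, and φ : V → V an invertible linear endomorphism. Let K ⊆ V × V be the set of pairs (v₁, v₂) such that v₂ − φ(v₁) lies in the range of φ² − id. Then every element of K can be written in the form (a, φ(a)) + (φ(b), b) for some a, b ∈ V; that is, K is spanned by the images of the two maps i₁ : V → V × V, i₁(v) = (v, φ(v)), and i_s : V → V × V, i_s(v) = (φ(v), v). (In other words, every representation of the braid group Br₂ = ℤ is good.) -/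
/-- (Every representation of `Br₂ = ℤ` is good.) Let `φ` be an invertible
linear endomorphism of a vector space `V`. If `v₂ − φ(v₁)` lies in the range of `φ² − id`,
then `(v₁, v₂) = (a, φ a) + (φ b, b)` for some `a, b ∈ V`; i.e. `K_{S₂}(V)` is spanned by
the images of `i₁(v) = (v, φ v)` and `i_s(v) = (φ v, v)`. -/
theorem stmt_11 {k : Type*} {V : Type*} [Field k] [AddCommGroup V] [Module k V]
    (φ : V →ₗ[k] V) (hφ : Function.Bijective φ)
    (v₁ v₂ : V) (h : v₂ - φ v₁ ∈ LinearMap.range (φ ∘ₗ φ - LinearMap.id)) :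
    ∃ a b : V, v₁ = a + φ b ∧ v₂ = φ a + b := by
  obtain ⟨w, hw⟩ := h
  refine ⟨v₁ + φ w, -w, by simp, ?_⟩
  have hw' : φ (φ w) - w = v₂ - φ v₁ := by simpa using hw
  rw [map_add, add_assoc, ← sub_eq_add_neg, hw']
  abel
end

section
/- Let k be a field, λ ∈ k with λ⁶ ≠ 1, and let V be a k-vector space with invertible linear endomorphisms s₁, s₂ satisfying the braid relation s₁s₂s₁ = s₂s₁s₂ and the cubic relations (s_i² − 1)(s_i − λ) = 0 for i = 1, 2. Let W = S₃ be the symmetric group on three letters with simple reflections σ₁, σ₂ (so W = {1, σ₁, σ₂, σ₁σ₂, σ₂σ₁, σ₁σ₂σ₁}), and define T : W → GL(V) on these six elements by T(1) = id, T(σ₁) = s₁, T(σ₂) = s₂, T(σ₁σ₂) = s₁s₂, T(σ₂σ₁) = s₂s₁, T(σ₁σ₂σ₁) = s₁s₂s₁ (well defined since s₁s₂s₁ = s₂s₁s₂). Let K be the space of families (x_w)_{w∈W} of vectors of V such that for i = 1, 2 and every w ∈ W, x_{σ_i w} − s_i(x_w) ∈ range(s_i² − 1). For y ∈ W define i_y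 : V → K by i_y(v) = (T(w y⁻¹) v)_{w∈W}. Then every element of K is a sum Σ_{y∈W} i_y(v_y) for some vectors v_y ∈ V; that is, K is spanned by the images of the maps i_y, y ∈ W. -/
/-- The operators `T(w)` for `w ∈ S₃`: `T(1) = id`, `T(σ₁) = s₁`, `T(σ₂) = s₂`,
`T(σ₁σ₂) = s₁s₂`, `T(σ₂σ₁) = s₂s₁`, `T(σ₁σ₂σ₁) = s₁s₂s₁`, where `σ₁ = (0 1)`,
`σ₂ = (1 2)` are the simple reflections of `S₃ = Perm (Fin 3)`. -/
noncomputable def T3 {k V : Type*} [Field k] [AddCommGroup V] [Module k V]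
    (s₁ s₂ : V →ₗ[k] V) (w : Equiv.Perm (Fin 3)) : V →ₗ[k] V :=
  if w = 1 then LinearMap.id
  else if w = Equiv.swap 0 1 then s₁
  else if w = Equiv.swap 1 2 then s₂
  else if w = Equiv.swap 0 1 * Equiv.swap 1 2 then s₁ ∘ₗ s₂
  else if w = Equiv.swap 1 2 * Equiv.swap 0 1 then s₂ ∘ₗ s₁
  else s₁ ∘ₗ s₂ ∘ₗ s₁


section Good3
variable {k V : Type*} [Field k] [AddCommGroup V] [Module k V]

/-- Tuples (indexed by `1, σ₁, σ₂, σ₁σ₂, σ₂σ₁, w₀`) which are sums of `i_y(v_y)`. -/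
def Good3 (s₁ s₂ : V →ₗ[k] V) (p1 pa pb pab pba pw : V) : Prop :=
  ∃ v1 va vb vab vba vw : V,
    p1 = v1 + s₁ va + s₂ vb + s₂ (s₁ vab) + s₁ (s₂ vba) + s₁ (s₂ (s₁ vw)) ∧
    pa = s₁ v1 + va + s₁ (s₂ vb) + s₁ (s₂ (s₁ vab)) + s₂ vba + s₂ (s₁ vw) ∧
    pb = s₂ v1 + s₂ (s₁ va) + vb + s₁ vab + s₁ (s₂ (s₁ vba)) + s₁ (s₂ vw) ∧
    pab = s₁ (s₂ v1) + s₁ (s₂ (s₁ va)) + s₁ vb + vab + s₂ (s₁ vba) + s₂ vw ∧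
    pba = s₂ (s₁ v1) + s₂ va + s₁ (s₂ (s₁ vb)) + s₁ (s₂ vab) + vba + s₁ vw ∧
    pw = s₁ (s₂ (s₁ v1)) + s₁ (s₂ va) + s₂ (s₁ vb) + s₂ vab + s₁ vba + vw

variable {s₁ s₂ : V →ₗ[k] V}

theorem Good3.comb {p1 pa pb pab pba pw q1 qa qb qab qba qw r1 ra rb rab rba rw' : V} (c d : k)
    (hp : Good3 s₁ s₂ p1 pa pb pab pba pw) (hq : Good3 s₁ s₂ q1 qa qb qab qba qw)
    (e1 : r1 = c • p1 + d • q1) (ea : ra = c • pa + d • qa) (eb : rb = c • pb + d • qb)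
    (eab : rab = c • pab + d • qab) (eba : rba = c • pba + d • qba)
    (ew : rw' = c • pw + d • qw) : Good3 s₁ s₂ r1 ra rb rab rba rw' := by
  obtain ⟨v1, va, vb, vab, vba, vw, h1, h2, h3, h4, h5, h6⟩ := hp
  obtain ⟨u1, ua, ub, uab, uba, uw, g1, g2, g3, g4, g5, g6⟩ := hq
  refine ⟨c • v1 + d • u1, c • va + d • ua, c • vb + d • ub, c • vab + d • uab,
    c • vba + d • uba, c • vw + d • uw, ?_, ?_, ?_, ?_, ?_, ?_⟩
  · rw [e1, h1, g1]; simp only [map_add, map_smul]; module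
  · rw [ea, h2, g2]; simp only [map_add, map_smul]; module
  · rw [eb, h3, g3]; simp only [map_add, map_smul]; module
  · rw [eab, h4, g4]; simp only [map_add, map_smul]; module
  · rw [eba, h5, g5]; simp only [map_add, map_smul]; module
  · rw [ew, h6, g6]; simp only [map_add, map_smul]; module

theorem good_i1 (v : V) :
    Good3 s₁ s₂ v (s₁ v) (s₂ v) (s₁ (s₂ v)) (s₂ (s₁ v)) (s₁ (s₂ (s₁ v))) :=
  ⟨v, 0, 0, 0, 0, 0, by simp, by simp, by simp, by simp, by simp, by simp⟩

theorem good_ia (v : V) :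
    Good3 s₁ s₂ (s₁ v) v (s₂ (s₁ v)) (s₁ (s₂ (s₁ v))) (s₂ v) (s₁ (s₂ v)) :=
  ⟨0, v, 0, 0, 0, 0, by simp, by simp, by simp, by simp, by simp, by simp⟩

theorem good_ib (v : V) :
    Good3 s₁ s₂ (s₂ v) (s₁ (s₂ v)) v (s₁ v) (s₁ (s₂ (s₁ v))) (s₂ (s₁ v)) :=
  ⟨0, 0, v, 0, 0, 0, by simp, by simp, by simp, by simp, by simp, by simp⟩

theorem good_iab (v : V) :
    Good3 s₁ s₂ (s₂ (s₁ v)) (s₁ (s₂ (s₁ v))) (s₁ v) v (s₁ (s₂ v)) (s₂ v) :=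
  ⟨0, 0, 0, v, 0, 0, by simp, by simp, by simp, by simp, by simp, by simp⟩

theorem good_iba (v : V) :
    Good3 s₁ s₂ (s₁ (s₂ v)) (s₂ v) (s₁ (s₂ (s₁ v))) (s₂ (s₁ v)) v (s₁ v) :=
  ⟨0, 0, 0, 0, v, 0, by simp, by simp, by simp, by simp, by simp, by simp⟩

theorem good_iw (v : V) :
    Good3 s₁ s₂ (s₁ (s₂ (s₁ v))) (s₂ (s₁ v)) (s₁ (s₂ v)) (s₂ v) (s₁ v) v :=
  ⟨0, 0, 0, 0, 0, v, by simp, by simp, by simp, by simp, by simp, by simp⟩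

variable {lam : k}

theorem smul_aux (hm : lam ^ 2 - 1 ≠ 0) (v : V) :
    v = ((lam ^ 2 - 1)⁻¹ * lam) • (lam • v) + (-(lam ^ 2 - 1)⁻¹) • v := by
  have : (lam ^ 2 - 1)⁻¹ * (lam ^ 2 - 1) = 1 := inv_mul_cancel₀ hm
  match_scalars
  linear_combination -this

theorem good_f1 (hm : lam ^ 2 - 1 ≠ 0) (v : V) (hv : s₁ v = lam • v) :
    Good3 s₁ s₂ 0 v 0 0 (s₂ v) (s₁ (s₂ v)) := by
  refine (good_i1 v).comb ((lam ^ 2 - 1)⁻¹ * lam) (-(lam ^ 2 - 1)⁻¹) (good_ia v)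
    ?_ ?_ ?_ ?_ ?_ ?_ <;> simp only [hv, map_smul]
  · module
  · exact smul_aux hm v
  · module
  · module
  · exact smul_aux hm _
  · exact smul_aux hm _

theorem good_f2 (hm : lam ^ 2 - 1 ≠ 0) (hb : ∀ v, s₁ (s₂ (s₁ v)) = s₂ (s₁ (s₂ v)))
    (v : V) (hv : s₂ v = lam • v) :
    Good3 s₁ s₂ 0 0 v (s₁ v) 0 (s₂ (s₁ v)) := by
  refine (good_i1 v).comb ((lam ^ 2 - 1)⁻¹ * lam) (-(lam ^ 2 - 1)⁻¹) (good_ib v)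
    ?_ ?_ ?_ ?_ ?_ ?_ <;> simp only [hb, hv, map_smul]
  · module
  · module
  · exact smul_aux hm v
  · exact smul_aux hm _
  · module
  · exact smul_aux hm _

theorem good_f12 (hm : lam ^ 2 - 1 ≠ 0)
    (v : V) (hv : s₁ v = lam • v) :
    Good3 s₁ s₂ 0 0 0 v (s₁ (s₂ v)) (s₂ v) := by
  refine (good_ib v).comb ((lam ^ 2 - 1)⁻¹ * lam) (-(lam ^ 2 - 1)⁻¹) (good_iab v)
    ?_ ?_ ?_ ?_ ?_ ?_ <;> simp only [hv, map_smul]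
  · module
  · module
  · module
  · exact smul_aux hm v
  · exact smul_aux hm _
  · exact smul_aux hm _

theorem good_f21 (hm : lam ^ 2 - 1 ≠ 0) (hb : ∀ v, s₁ (s₂ (s₁ v)) = s₂ (s₁ (s₂ v)))
    (v : V) (hv : s₂ v = lam • v) :
    Good3 s₁ s₂ 0 0 0 (s₂ (s₁ v)) v (s₁ v) := by
  refine (good_ia v).comb ((lam ^ 2 - 1)⁻¹ * lam) (-(lam ^ 2 - 1)⁻¹) (good_iba v)
    ?_ ?_ ?_ ?_ ?_ ?_ <;> simp only [hb, hv, map_smul]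
  · module
  · module
  · module
  · exact smul_aux hm _
  · exact smul_aux hm v
  · exact smul_aux hm _

/-- `s₁s₂` sends `V₁` to `V₂`. -/
theorem c_mem (hb : ∀ v, s₁ (s₂ (s₁ v)) = s₂ (s₁ (s₂ v))) (v : V) (hv : s₁ v = lam • v) :
    s₂ (s₁ (s₂ v)) = lam • s₁ (s₂ v) := by
  rw [← hb, hv]; simp only [map_smul]

/-- `s₂s₁` sends `V₂` to `V₁`. -/
theorem d_mem (hb : ∀ v, s₁ (s₂ (s₁ v)) = s₂ (s₁ (s₂ v))) (v : V) (hv : s₂ v = lam • v) :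
    s₁ (s₂ (s₁ v)) = lam • s₂ (s₁ v) := by
  rw [hb, hv]; simp only [map_smul]

theorem good_A (hm : lam ^ 2 - 1 ≠ 0) (hb : ∀ v, s₁ (s₂ (s₁ v)) = s₂ (s₁ (s₂ v)))
    (u : V) (hu : s₂ u = lam • u) :
    Good3 s₁ s₂ 0 0 0 0 (u - s₁ (s₂ (s₂ (s₁ u)))) (s₁ u - s₂ (s₂ (s₁ u))) := by
  refine (good_f21 hm hb u hu).comb 1 (-1) (good_f12 hm (s₂ (s₁ u)) (d_mem hb u hu))
    ?_ ?_ ?_ ?_ ?_ ?_ <;> module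

theorem good_B (hm : lam ^ 2 - 1 ≠ 0) (hb : ∀ v, s₁ (s₂ (s₁ v)) = s₂ (s₁ (s₂ v)))
    (h1 : ∀ v, s₁ (s₁ (s₁ v) - v) = lam • (s₁ (s₁ v) - v))
    (h2 : ∀ v, s₂ (s₂ (s₂ v) - v) = lam • (s₂ (s₂ v) - v))
    (u : V) (hu : s₂ u = lam • u) :
    Good3 s₁ s₂ 0 0 0 0 (s₂ (s₂ (s₁ u)) - s₁ u) (s₁ (s₂ (s₂ (s₁ u))) - u) := by
  have hmm : (lam ^ 2 - 1)⁻¹ * (lam ^ 2 - 1) = 1 := inv_mul_cancel₀ hm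
  have hc := c_mem hb _ (d_mem hb u hu)
  have hd := d_mem hb u hu
  have hd' : s₁ (s₂ (s₁ (s₁ u))) = lam • s₂ (s₂ (s₁ u)) := by rw [hb, hd, map_smul]
  have F1 := good_f1 (s₁ := s₁) (s₂ := s₂) hm _ (h1 (s₂ (s₁ u)))
  have F2 := good_f2 (s₁ := s₁) (s₂ := s₂) hm hb _ (h2 (s₁ (s₂ u)))
  have F12 := good_f12 (s₁ := s₁) (s₂ := s₂) hm _ (h1 u)
  have S1 := (good_iw (s₁ := s₁) (s₂ := s₂) u).comb 1 (-1) (good_i1 (s₁ (s₂ (s₁ u))))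
    rfl rfl rfl rfl rfl rfl
  have S2 := F1.comb 1 1 F2 rfl rfl rfl rfl rfl rfl
  have S3 := S1.comb 1 1 S2 rfl rfl rfl rfl rfl rfl
  have S4 := S3.comb 1 lam F12 rfl rfl rfl rfl rfl rfl
  have e : ∀ v : V, v = ((lam ^ 2 - 1)⁻¹ * (lam ^ 2 - 1)) • v := fun v => by rw [hmm, one_smul]
  refine S4.comb (lam ^ 2 - 1)⁻¹ 0 S4 ?_ ?_ ?_ ?_ ?_ ?_
  · module
  · module
  · simp only [map_sub, hb]; module
  · simp only [map_sub, map_smul, hb, hu]; module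
  · refine (e _).trans ?_
    simp only [map_sub, map_smul, hd, hd', hu]; module
  · refine (e _).trans ?_
    simp only [map_sub, map_smul, hd, hu, hc]; module

/-- Families supported at `w₀`. -/
theorem good_L0 (hm : lam ^ 2 - 1 ≠ 0) (h6 : lam ^ 6 ≠ 1)
    (hb : ∀ v, s₁ (s₂ (s₁ v)) = s₂ (s₁ (s₂ v)))
    (h1 : ∀ v, s₁ (s₁ (s₁ v) - v) = lam • (s₁ (s₁ v) - v))
    (h2 : ∀ v, s₂ (s₂ (s₂ v) - v) = lam • (s₂ (s₂ v) - v))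
    (n : V) (hn1 : s₁ n = lam • n) (hn2 : s₂ n = lam • n) :
    Good3 s₁ s₂ 0 0 0 0 0 n := by
  have hk : lam ^ 6 - 1 ≠ 0 := sub_ne_zero.mpr h6
  have hkk : (lam ^ 6 - 1)⁻¹ * (lam ^ 6 - 1) = 1 := inv_mul_cancel₀ hk
  refine (good_A hm hb n hn2).comb ((lam ^ 6 - 1)⁻¹ * lam) ((lam ^ 6 - 1)⁻¹ * (1 + lam ^ 2))
    (good_B hm hb h1 h2 n hn2) ?_ ?_ ?_ ?_ ?_ ?_ <;> try simp only [hn1, hn2, map_smul]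
  · module
  · module
  · module
  · module
  · module
  · match_scalars
    linear_combination -hkk

/-- Families supported at `σ₂σ₁` and `w₀`. -/
theorem good_L1' (hm : lam ^ 2 - 1 ≠ 0) (h6 : lam ^ 6 ≠ 1)
    (hb : ∀ v, s₁ (s₂ (s₁ v)) = s₂ (s₁ (s₂ v)))
    (h1 : ∀ v, s₁ (s₁ (s₁ v) - v) = lam • (s₁ (s₁ v) - v))
    (h2 : ∀ v, s₂ (s₂ (s₂ v) - v) = lam • (s₂ (s₂ v) - v))
    (b q : V) (hb2 : s₂ b = lam • b) (hq2 : s₂ q = lam • q)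
    (hp : s₁ (q - s₁ b) = lam • (q - s₁ b)) :
    Good3 s₁ s₂ 0 0 0 0 b q := by
  have hmm : (lam ^ 2 - 1)⁻¹ * (lam ^ 2 - 1) = 1 := inv_mul_cancel₀ hm
  set i := (lam ^ 2 - 1)⁻¹ with hi
  obtain ⟨D, hD⟩ : ∃ D : V →ₗ[k] V, ∀ v, D v = s₂ (s₂ (s₁ v)) - s₁ v :=
    ⟨s₂ ∘ₗ s₂ ∘ₗ s₁ - s₁, fun v => by simp⟩
  have hDm : ∀ v, s₂ (D v) = lam • D v := fun v => by rw [hD, h2]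
  have hg : ∀ u, s₂ u = lam • u →
      s₂ (s₁ (s₂ (s₂ (s₁ u)))) = lam • s₁ (s₂ (s₂ (s₁ u))) := fun u hu =>
    c_mem hb _ (d_mem hb u hu)
  -- `μ F u = μ g u - D D u`
  have hF : ∀ u, s₂ u = lam • u → s₂ (s₂ (s₁ (s₁ u))) - s₁ (s₁ u) =
      (lam ^ 2 - 1) • s₁ (s₂ (s₂ (s₁ u))) - D (D u) := fun u hu => by
    have e1 : s₁ (s₂ (s₂ (s₁ u))) = s₁ (s₁ u) + s₁ (D u) := by
      rw [hD]; simp only [map_sub]; abel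
    have e2 : s₂ (s₂ (s₁ (s₂ (s₂ (s₁ u))))) = lam ^ 2 • s₁ (s₂ (s₂ (s₁ u))) := by
      rw [hg u hu, map_smul, hg u hu, smul_smul, pow_two]
    rw [sub_smul, ← e2, hD (D u), e1, one_smul]
    simp only [map_add]; abel_nf
  have E1 : s₁ (s₁ b) = lam • s₁ b + s₁ q - lam • q := by
    rw [map_sub, smul_sub] at hp
    linear_combination (norm := module) -hp
  have E2 : s₁ (s₁ q) = lam • s₁ q + s₁ b - lam • b := by
    have c := h1 b
    have e3 : s₁ (s₁ (s₁ b)) = lam • s₁ (s₁ b) + s₁ (s₁ q) - lam • s₁ q := by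
      conv_lhs => rw [E1]
      simp only [map_add, map_sub, map_smul]
    rw [map_sub, e3, smul_sub] at c
    linear_combination (norm := module) c
  have G1 := hF b hb2
  have G2 := hF q hq2
  rw [E1] at G1
  rw [E2] at G2
  simp only [map_add, map_sub, map_smul, hb2, hq2] at G1 G2
  have Db := hD b
  have Dq := hD q
  have G1' : b = -(lam • q) + (b - s₁ (s₂ (s₂ (s₁ b)))) + i • D (D b + lam • b + q) := by
    simp only [map_add, map_smul]
    linear_combination (norm := module) (-i) • G1 - (i * lam) • Db - i • Dq - hmm • (lam • q + s₁ (s₂ (s₂ (s₁ b))))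
  have G2' : q = -(lam • b) + (q - s₁ (s₂ (s₂ (s₁ q)))) + i • D (D q + lam • q + b) := by
    simp only [map_add, map_smul]
    linear_combination (norm := module) (-i) • G2 - (i * lam) • Dq - i • Db - hmm • (lam • b + s₁ (s₂ (s₂ (s₁ q))))
  obtain ⟨u, hu⟩ : ∃ u, u = -(i • (b - lam • q)) := ⟨_, rfl⟩
  obtain ⟨u', hu'⟩ : ∃ u', u' = -((i * i) • ((D b + lam • b + q) - lam • (D q + lam • q + b))) :=
    ⟨_, rfl⟩
  have hum : s₂ u = lam • u := by
    rw [hu]; simp only [map_neg, map_sub, map_smul, hb2, hq2]; module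
  have hum' : s₂ u' = lam • u' := by
    rw [hu']; simp only [map_neg, map_sub, map_add, map_smul, hb2, hq2, hDm]; module
  have key : b = (u - s₁ (s₂ (s₂ (s₁ u)))) + D u' := by
    rw [hu, hu']
    simp only [map_add, map_sub, map_neg, map_smul] at G1' G2' ⊢
    linear_combination (norm := module) (-i) • G1' + (i * lam) • G2' - hmm • b
  have A := good_A hm hb u hum
  have B := good_B hm hb h1 h2 u' hum'
  have S := A.comb 1 1 B rfl rfl rfl rfl rfl rfl
  have C : Good3 s₁ s₂ 0 0 0 0 0 (q - ((s₁ u - s₂ (s₂ (s₁ u))) + (s₁ (s₂ (s₂ (s₁ u'))) - u'))) := by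
    apply good_L0 hm h6 hb h1 h2
    · have k1 := h1 (s₂ (s₂ (s₁ u)))
      have k2 := h1 u'
      have k4 := congrArg s₁ key
      rw [hD] at k4
      simp only [map_add, map_sub] at k4
      have eN : q - ((s₁ u - s₂ (s₂ (s₁ u))) + (s₁ (s₂ (s₂ (s₁ u'))) - u')) =
          (q - s₁ b) - (s₁ (s₁ (s₂ (s₂ (s₁ u)))) - s₂ (s₂ (s₁ u))) - (s₁ (s₁ u') - u') := by
        linear_combination (norm := module) k4
      rw [eN, map_sub, map_sub, hp, k1, k2]
      module
    · have k1 := h2 (s₁ u)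
      have k2 := hg u' hum'
      simp only [map_add, map_sub] at *
      rw [hq2, k2, hum']
      linear_combination (norm := module) k1
  rw [hD] at key
  refine S.comb 1 1 C ?_ ?_ ?_ ?_ ?_ ?_
  · module
  · module
  · module
  · module
  · linear_combination (norm := module) key
  · module

theorem good_all (hm : lam ^ 2 - 1 ≠ 0) (h6 : lam ^ 6 ≠ 1)
    (hb : ∀ v, s₁ (s₂ (s₁ v)) = s₂ (s₁ (s₂ v)))
    (h1 : ∀ v, s₁ (s₁ (s₁ v) - v) = lam • (s₁ (s₁ v) - v))
    (h2 : ∀ v, s₂ (s₂ (s₂ v) - v) = lam • (s₂ (s₂ v) - v))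
    (x1 xa xb xab xba xw : V)
    (ha : s₁ (xa - s₁ x1) = lam • (xa - s₁ x1))
    (hbb : s₂ (xb - s₂ x1) = lam • (xb - s₂ x1))
    (hab : s₁ (xab - s₁ xb) = lam • (xab - s₁ xb))
    (hba : s₂ (xba - s₂ xa) = lam • (xba - s₂ xa))
    (hw2 : s₂ (xw - s₂ xab) = lam • (xw - s₂ xab))
    (hw1 : s₁ (xw - s₁ xba) = lam • (xw - s₁ xba)) :
    Good3 s₁ s₂ x1 xa xb xab xba xw := by
  have I := good_i1 (s₁ := s₁) (s₂ := s₂) x1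
  have F1 := good_f1 (s₁ := s₁) (s₂ := s₂) hm _ ha
  have F2 := good_f2 (s₁ := s₁) (s₂ := s₂) hm hb _ hbb
  have F12 := good_f12 (s₁ := s₁) (s₂ := s₂) hm _ hab
  have S1 := I.comb 1 1 F1 rfl rfl rfl rfl rfl rfl
  have S2 := S1.comb 1 1 F2 rfl rfl rfl rfl rfl rfl
  have S3 := S2.comb 1 1 F12 rfl rfl rfl rfl rfl rfl
  have c1 := c_mem hb _ ha
  have c2 := c_mem hb _ hab
  have k1 := h1 (s₂ (xab - s₁ xb))
  have b1 := hb x1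
  have C : Good3 s₁ s₂ 0 0 0 0 (xba - s₂ xa - s₁ (s₂ (xab - s₁ xb)))
      (xw - s₂ xab - s₁ (s₂ (xa - s₁ x1))) := by
    apply good_L1' hm h6 hb h1 h2
    · rw [map_sub, hba, c2]; module
    · rw [map_sub, hw2, c1]; module
    · have d1 := d_mem hb _ hbb
      have eN : xw - s₂ xab - s₁ (s₂ (xa - s₁ x1)) -
          s₁ (xba - s₂ xa - s₁ (s₂ (xab - s₁ xb))) = (xw - s₁ xba) +
          (s₁ (s₁ (s₂ (xab - s₁ xb))) - s₂ (xab - s₁ xb)) - s₂ (s₁ (xb - s₂ x1)) := by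
        simp only [map_sub]
        linear_combination (norm := module) b1
      rw [eN, map_sub, map_add, hw1, k1, d1]
      module
  refine S3.comb 1 1 C ?_ ?_ ?_ ?_ ?_ ?_ <;> try simp only [map_sub, b1]
  all_goals module

end Good3

theorem perm3_cases (P : Equiv.Perm (Fin 3) → Prop) (h1 : P 1) (ha : P (Equiv.swap 0 1))
    (hb : P (Equiv.swap 1 2)) (hab : P (Equiv.swap 0 1 * Equiv.swap 1 2))
    (hba : P (Equiv.swap 1 2 * Equiv.swap 0 1))
    (hw : P (Equiv.swap 0 1 * Equiv.swap 1 2 * Equiv.swap 0 1)) : ∀ w, P w := by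
  have : ∀ w : Equiv.Perm (Fin 3), w = 1 ∨ w = Equiv.swap 0 1 ∨ w = Equiv.swap 1 2 ∨
      w = Equiv.swap 0 1 * Equiv.swap 1 2 ∨ w = Equiv.swap 1 2 * Equiv.swap 0 1 ∨
      w = Equiv.swap 0 1 * Equiv.swap 1 2 * Equiv.swap 0 1 := by decide
  intro w
  rcases this w with h | h | h | h | h | h <;> subst h <;> assumption

theorem perm3_sum {M : Type*} [AddCommMonoid M] (f : Equiv.Perm (Fin 3) → M) :
    ∑ y, f y = f 1 + f (Equiv.swap 0 1) + f (Equiv.swap 1 2) +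
      f (Equiv.swap 0 1 * Equiv.swap 1 2) + f (Equiv.swap 1 2 * Equiv.swap 0 1) +
      f (Equiv.swap 0 1 * Equiv.swap 1 2 * Equiv.swap 0 1) := by
  have : (Finset.univ : Finset (Equiv.Perm (Fin 3))) =
    {1, Equiv.swap 0 1, Equiv.swap 1 2, Equiv.swap 0 1 * Equiv.swap 1 2,
      Equiv.swap 1 2 * Equiv.swap 0 1, Equiv.swap 0 1 * Equiv.swap 1 2 * Equiv.swap 0 1} := by
    decide
  rw [this, Finset.sum_insert (by decide), Finset.sum_insert (by decide),
    Finset.sum_insert (by decide), Finset.sum_insert (by decide),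
    Finset.sum_insert (by decide), Finset.sum_singleton]
  simp only [add_assoc]

/-- (Every representation of `Br₃` through the cubic relation
`(s² − 1)(s − λ) = 0` with `λ⁶ ≠ 1` is good.) If `(x_w)_{w ∈ S₃}` satisfies
`x_{σᵢw} − sᵢ(x_w) ∈ range(sᵢ² − 1)` for `i = 1, 2` and all `w`, then
`x_w = Σ_y T(w y⁻¹)(v_y)` for some vectors `v_y ∈ V`. -/
theorem stmt_12 {k V : Type*} [Field k] [AddCommGroup V] [Module k V]
    (lam : k) (hlam : lam ^ 6 ≠ 1)
    (s₁ s₂ : V →ₗ[k] V) (hs₁ : Function.Bijective s₁) (hs₂ : Function.Bijective s₂)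
    (hbraid : s₁ ∘ₗ s₂ ∘ₗ s₁ = s₂ ∘ₗ s₁ ∘ₗ s₂)
    (hcub₁ : (s₁ ∘ₗ s₁ - LinearMap.id) ∘ₗ (s₁ - lam • LinearMap.id) = 0)
    (hcub₂ : (s₂ ∘ₗ s₂ - LinearMap.id) ∘ₗ (s₂ - lam • LinearMap.id) = 0)
    (x : Equiv.Perm (Fin 3) → V)
    (hx₁ : ∀ w, x (Equiv.swap 0 1 * w) - s₁ (x w) ∈
      LinearMap.range (s₁ ∘ₗ s₁ - LinearMap.id))
    (hx₂ : ∀ w, x (Equiv.swap 1 2 * w) - s₂ (x w) ∈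
      LinearMap.range (s₂ ∘ₗ s₂ - LinearMap.id)) :
    ∃ v : Equiv.Perm (Fin 3) → V,
      ∀ w, x w = ∑ y : Equiv.Perm (Fin 3), T3 s₁ s₂ (w * y⁻¹) (v y) := by
  have hm : lam ^ 2 - 1 ≠ 0 := by
    intro h
    apply hlam
    have : lam ^ 2 = 1 := sub_eq_zero.mp h
    calc lam ^ 6 = (lam ^ 2) ^ 3 := by ring
      _ = 1 := by rw [this, one_pow]
  have hb : ∀ v, s₁ (s₂ (s₁ v)) = s₂ (s₁ (s₂ v)) := fun v => LinearMap.congr_fun hbraid v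
  have h1 : ∀ v, s₁ (s₁ (s₁ v) - v) = lam • (s₁ (s₁ v) - v) := fun v => by
    have := LinearMap.congr_fun hcub₁ v
    simp only [LinearMap.comp_apply, LinearMap.sub_apply, LinearMap.smul_apply,
      LinearMap.id_apply, map_sub, map_smul, LinearMap.zero_apply] at this ⊢
    linear_combination (norm := module) this
  have h2 : ∀ v, s₂ (s₂ (s₂ v) - v) = lam • (s₂ (s₂ v) - v) := fun v => by
    have := LinearMap.congr_fun hcub₂ v
    simp only [LinearMap.comp_apply, LinearMap.sub_apply, LinearMap.smul_apply,
      LinearMap.id_apply, map_sub, map_smul, LinearMap.zero_apply] at this ⊢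
    linear_combination (norm := module) this
  have r1 : ∀ z, z ∈ LinearMap.range (s₁ ∘ₗ s₁ - LinearMap.id) → s₁ z = lam • z := by
    rintro _ ⟨v, rfl⟩
    exact h1 v
  have r2 : ∀ z, z ∈ LinearMap.range (s₂ ∘ₗ s₂ - LinearMap.id) → s₂ z = lam • z := by
    rintro _ ⟨v, rfl⟩
    exact h2 v
  have ew : (Equiv.swap 1 2 * (Equiv.swap 0 1 * Equiv.swap 1 2) : Equiv.Perm (Fin 3)) =
    Equiv.swap 0 1 * Equiv.swap 1 2 * Equiv.swap 0 1 := by decide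
  have K1 := r1 _ (hx₁ 1)
  have K2 := r2 _ (hx₂ 1)
  have K3 := r1 _ (hx₁ (Equiv.swap 1 2))
  have K4 := r2 _ (hx₂ (Equiv.swap 0 1))
  have K5 := r2 _ (hx₂ (Equiv.swap 0 1 * Equiv.swap 1 2))
  have K6 := r1 _ (hx₁ (Equiv.swap 1 2 * Equiv.swap 0 1))
  rw [mul_one] at K1 K2
  rw [ew] at K5
  rw [← mul_assoc] at K6
  obtain ⟨v1, va, vb, vab, vba, vw, g1, g2, g3, g4, g5, g6⟩ :=
    good_all hm hlam hb h1 h2 _ _ _ _ _ _ K1 K2 K3 K4 K5 K6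
  refine ⟨fun y => if y = 1 then v1 else if y = Equiv.swap 0 1 then va
    else if y = Equiv.swap 1 2 then vb else if y = Equiv.swap 0 1 * Equiv.swap 1 2 then vab
    else if y = Equiv.swap 1 2 * Equiv.swap 0 1 then vba else vw, ?_⟩
  apply perm3_cases
  · rw [perm3_sum, g1]; rfl
  · rw [perm3_sum, g2]; rfl
  · rw [perm3_sum, g3]; rfl
  · rw [perm3_sum, g4]; rfl
  · rw [perm3_sum, g5]; rfl
  · rw [perm3_sum, g6]; rfl
end
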